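/- arXiv:1111.0986 — 4 statements merged into one kernel-verified Lean document; each statement's English description precedes it below -/
import Mathlib

section
/- For every m ≥ 2, the number of alternating (up-down) permutations of length 2m containing the pattern 321 exactly once is 4(m-2)(2m+3)! / ((m+1)!(m+4)!). -/
/-- `w` is an alternating (up-down) permutation: `w 0 < w 1 > w 2 < ⋯`. -/
def UpDown {n : ℕ} (w : Equiv.Perm (Fin n)) : Prop :=
  ∀ i : ℕ, ∀ h : i + 1 < n,
    if i % 2 = 0 then w ⟨i, Nat.lt_of_succ_lt h⟩ < w ⟨i + 1, h⟩
    else w ⟨i + 1, h⟩ < w ⟨i, Nat.lt_of_succ_lt h⟩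

/-- `w` is a reverse-alternating (down-up) permutation: `w 0 > w 1 < w 2 > ⋯`. -/
def DownUp {n : ℕ} (w : Equiv.Perm (Fin n)) : Prop :=
  ∀ i : ℕ, ∀ h : i + 1 < n,
    if i % 2 = 0 then w ⟨i + 1, h⟩ < w ⟨i, Nat.lt_of_succ_lt h⟩
    else w ⟨i, Nat.lt_of_succ_lt h⟩ < w ⟨i + 1, h⟩

/-- The set of occurrences of the pattern 321 in `w`. -/
def occ321 {n : ℕ} (w : Equiv.Perm (Fin n)) : Set (Fin n × Fin n × Fin n) :=
  {t | t.1 < t.2.1 ∧ t.2.1 < t.2.2 ∧ w t.2.2 < w t.2.1 ∧ w t.2.1 < w t.1}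

/-- The set of occurrences of the pattern 123 in `w`. -/
def occ123 {n : ℕ} (w : Equiv.Perm (Fin n)) : Set (Fin n × Fin n × Fin n) :=
  {t | t.1 < t.2.1 ∧ t.2.1 < t.2.2 ∧ w t.1 < w t.2.1 ∧ w t.2.1 < w t.2.2}


namespace S13

def run : ℕ → List Bool → Option ℕ
  | a, [] => some a
  | a, true :: l => run (a + 1) l
  | 0, false :: _ => none
  | a + 1, false :: l => run a l

def N : ℕ → ℕ → ℕ → ℕ
  | 0, a, b => if a = b then 1 else 0
  | n + 1, 0, b => N n 1 b
  | n + 1, a + 1, b => N n (a + 2) b + N n a b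

def consE (x : Bool) : List Bool ↪ List Bool := ⟨fun l => x :: l, fun _ _ h => (List.cons.inj h).2⟩

@[simp] lemma consE_apply (x : Bool) (l : List Bool) : consE x l = x :: l := rfl

def paths : ℕ → ℕ → ℕ → Finset (List Bool)
  | 0, a, b => if a = b then {[]} else ∅
  | n + 1, 0, b => (paths n 1 b).map (consE true)
  | n + 1, a + 1, b => (paths n (a + 2) b).map (consE true) ∪ (paths n a b).map (consE false)

lemma mem_paths (n a b : ℕ) (l : List Bool) :
    l ∈ paths n a b ↔ l.length = n ∧ run a l = some b := by
  induction n generalizing a l with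
  | zero =>
    rcases l with _ | ⟨x, l⟩
    · by_cases h : a = b <;> simp [paths, run, h]
    · by_cases h : a = b <;> simp [paths, h]
  | succ n ih =>
    rcases a with _ | a <;> rcases l with _ | ⟨x, l⟩
    · simp [paths]
    · cases x <;> simp [paths, run, ih]
    · simp [paths]
    · cases x <;> simp [paths, run, ih]

lemma card_paths (n a b : ℕ) : (paths n a b).card = N n a b := by
  induction n generalizing a with
  | zero => by_cases h : a = b <;> simp [paths, N, h]
  | succ n ih =>
    rcases a with _ | a
    · simp [paths, N, ih]
    · rw [paths, N, Finset.card_union_of_disjoint]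
      · simp [ih]
      · rw [Finset.disjoint_left]
        intro l h1 h2
        rw [Finset.mem_map] at h1 h2
        obtain ⟨x, _, rfl⟩ := h1
        obtain ⟨y, _, h⟩ := h2
        simp at h

lemma N_last (n a : ℕ) : N (n + 1) a 0 = N n a 1 := by
  induction n generalizing a with
  | zero => rcases a with _ | a <;> simp [N]
  | succ n ih =>
    rcases a with _ | a
    · rw [N, ih, N]
    · rw [N, ih, ih, N]

lemma N_closed (n : ℕ) : ∀ a d, n = a + 2 * d →
    N n a 0 * ((a + d + 1).factorial * d.factorial) = (a + 1) * n.factorial := by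
  induction n with
  | zero =>
    intro a d h
    obtain rfl : a = 0 := by omega
    obtain rfl : d = 0 := by omega
    simp [N]
  | succ n ih =>
    intro a d h
    rcases a with _ | a
    · obtain ⟨d, rfl⟩ : ∃ e, d = e + 1 := ⟨d - 1, by omega⟩
      have := ih 1 d (by omega)
      rw [N]
      have h1 : n = 2 * d + 1 := by omega
      rw [show 0 + (d + 1) + 1 = 1 + d + 1 by ring, Nat.factorial_succ d, Nat.factorial_succ n]
      calc _ = (N n 1 0 * ((1 + d + 1).factorial * d.factorial)) * (d + 1) := by ring
        _ = _ := by rw [this, h1]; ring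
    · rw [N]
      have h2 := ih a d (by omega)
      rcases d with _ | d
      · have h0 : ∀ n a, n < a → N n a 0 = 0 := by
          intro n
          induction n with
          | zero => intro a ha; simp [N]; omega
          | succ n ih =>
            intro a ha
            obtain ⟨a, rfl⟩ : ∃ e, a = e + 1 := ⟨a - 1, by omega⟩
            rw [N, ih _ (by omega), ih _ (by omega)]
        rw [h0 n (a + 2) (by omega)]
        have h1 : n = a := by omega
        subst h1
        simp at h2 ⊢
        have h3 : N n n 0 * (n + 1).factorial = (n + 1).factorial := by
          rw [h2, Nat.factorial_succ]
        rw [Nat.factorial_succ (n + 1)]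
        calc _ = (n + 2) * (N n n 0 * (n + 1).factorial) := by ring
          _ = _ := by rw [h3]
      · have h1 := ih (a + 2) d (by omega)
        have hn : n = a + 2 * d + 2 := by omega
        have e1 : (a + 1 + (d + 1) + 1).factorial = (a + 2 + d + 1).factorial := by
          congr 1; ring
        have e2 : (a + 2 + d + 1).factorial = (a + d + 3) * (a + (d + 1) + 1).factorial := by
          rw [show a + 2 + d + 1 = (a + (d + 1) + 1) + 1 by ring, Nat.factorial_succ]; ring
        have e3 : (d + 1).factorial = (d + 1) * d.factorial := Nat.factorial_succ d
        rw [e1, add_mul]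
        have t1 : N n (a + 2) 0 * ((a + 2 + d + 1).factorial * (d + 1).factorial)
          = (d + 1) * ((a + 2 + 1) * n.factorial) := by rw [← h1, e3]; ring
        have t2 : N n a 0 * ((a + 2 + d + 1).factorial * (d + 1).factorial)
          = (a + d + 3) * ((a + 1) * n.factorial) := by rw [← h2, e2]; ring
        rw [t1, t2, Nat.factorial_succ, hn]; ring

lemma cat_fact (n : ℕ) : catalan n * ((n + 1).factorial * n.factorial) = (2 * n).factorial := by
  have h := succ_mul_catalan_eq_centralBinom n
  have h2 := Nat.centralBinom_eq_two_mul_choose n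
  have h3 := Nat.choose_mul_factorial_mul_factorial (show n ≤ 2 * n by omega)
  rw [← h2, ← h, show 2 * n - n = n by omega] at h3
  rw [← h3, Nat.factorial_succ]; ring

lemma N_catalan (n : ℕ) : N (2 * n) 0 0 = catalan n := by
  have h1 := N_closed (2 * n) 0 n (by omega)
  have h2 := cat_fact n
  have : 0 < (n + 1).factorial * n.factorial := by positivity
  apply Nat.eq_of_mul_eq_mul_right this
  rw [h2]; simpa using h1

lemma N_a (j : ℕ) : N (2 * j) 1 1 = catalan (j + 1) := by
  rw [← N_last, ← N_catalan]; rfl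

lemma N_b (k : ℕ) : N (2 * k + 1) 2 1 + catalan (k + 1) = catalan (k + 2) := by
  rw [← N_last, ← N_catalan, ← N_catalan]; rfl

lemma run_append (a : ℕ) (l k : List Bool) :
    run a (l ++ k) = (run a l).bind fun h => run h k := by
  induction l generalizing a with
  | nil => simp [run]
  | cons x l ih =>
    cases x
    · rcases a with _ | a
      · simp [run]
      · simp [run, ih]
    · simp [run, ih]

lemma run_iff (a b : ℕ) (l : List Bool) : run a l = some b ↔
    (∀ v, (l.take v).count false ≤ a + (l.take v).count true) ∧
      b + l.count false = a + l.count true := by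
  induction l generalizing a with
  | nil => simp [run]; omega
  | cons x l ih =>
    have hsplit : ∀ p : ℕ → Prop, (∀ v, p v) ↔ p 0 ∧ ∀ v, p (v + 1) := by
      intro p
      exact ⟨fun h => ⟨h 0, fun v => h _⟩, fun h v => by cases v; exact h.1; exact h.2 _⟩
    rw [hsplit]
    cases x
    · rcases a with _ | a
      · simp [run]
        intro h
        have := h 0
        simp at this
      · simp only [run, ih, List.take_succ_cons, List.take_zero, List.count_cons]
        simp
        constructor
        · rintro ⟨h1, h2⟩; exact ⟨fun v => by have := h1 v; omega, by omega⟩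
        · rintro ⟨h1, h2⟩; exact ⟨fun v => by have := h1 v; omega, by omega⟩
    · simp only [run, ih, List.take_succ_cons, List.take_zero, List.count_cons]
      simp
      constructor
      · rintro ⟨h1, h2⟩; exact ⟨fun v => by have := h1 v; omega, by omega⟩
      · rintro ⟨h1, h2⟩; exact ⟨fun v => by have := h1 v; omega, by omega⟩

/-- marked paths -/
def marked (m j : ℕ) : Finset (List Bool) :=
  (paths (2 * m) 1 1).filter fun l => run 1 (l.take (2 * j)) = some 1 ∧ l[2 * j]? = some true

lemma card_marked (m j : ℕ) (hj : j + 2 ≤ m) :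
    (marked m j).card = N (2 * j) 1 1 * N (2 * (m - j - 1) + 1) 2 1 := by
  rw [← card_paths, ← card_paths, ← Finset.card_product]
  refine Finset.card_bij' (fun l _ => (l.take (2 * j), l.drop (2 * j + 1)))
    (fun p _ => p.1 ++ true :: p.2) ?_ ?_ ?_ ?_
  · intro l hl
    simp only [marked, Finset.mem_filter, mem_paths] at hl
    obtain ⟨⟨h1, h2⟩, h3, h4⟩ := hl
    rw [Finset.mem_product, mem_paths, mem_paths]
    refine ⟨⟨by simp; omega, h3⟩, by simp; omega, ?_⟩
    have h5 : l = l.take (2 * j) ++ true :: l.drop (2 * j + 1) := by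
      have hlt : 2 * j < l.length := by omega
      rw [List.getElem?_eq_getElem hlt] at h4
      rw [← Option.some.inj h4, ← List.drop_eq_getElem_cons hlt, List.take_append_drop]
    rw [h5, run_append, h3] at h2
    simpa [run] using h2
  · rintro ⟨p, q⟩ h
    rw [Finset.mem_product, mem_paths, mem_paths] at h
    obtain ⟨⟨h1, h2⟩, h3, h4⟩ := h
    simp only at h1 h2 h3 h4
    simp only [marked, Finset.mem_filter, mem_paths]
    refine ⟨⟨by simp; omega, ?_⟩, ?_, ?_⟩
    · rw [run_append, h2]; simpa [run] using h4
    · rw [← h1]; simpa using h2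
    · rw [← h1]; simp
  · intro l hl
    simp only [marked, Finset.mem_filter, mem_paths] at hl
    obtain ⟨⟨h1, h2⟩, h3, h4⟩ := hl
    have hlt : 2 * j < l.length := by omega
    rw [List.getElem?_eq_getElem hlt] at h4
    simp only
    rw [← Option.some.inj h4, ← List.drop_eq_getElem_cons hlt, List.take_append_drop]
  · rintro ⟨p, q⟩ h
    rw [Finset.mem_product, mem_paths, mem_paths] at h
    obtain ⟨⟨h1, h2⟩, h3, h4⟩ := h
    simp only at h1 h2 h3 h4
    simp only [← h1]
    simp [List.drop_append]

lemma sum_catalan (m : ℕ) (hm : 2 ≤ m) :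
    (∑ j ∈ Finset.Icc 1 (m - 2), ((N (2 * j) 1 1 * N (2 * (m - j - 1) + 1) 2 1 : ℕ) : ℤ))
      = catalan (m + 3) - 3 * catalan (m + 2) := by
  obtain ⟨k, rfl⟩ : ∃ k, m = k + 2 := ⟨m - 2, by omega⟩
  have h1 : (catalan (k + 2 + 3) : ℤ)
      = ∑ i ∈ Finset.range (k + 5), (catalan i : ℤ) * catalan (k + 4 - i) := by
    rw [show k + 2 + 3 = (k + 4) + 1 by ring, catalan_succ, Finset.sum_range]
    push_cast; rfl
  have h2 : (catalan (k + 2 + 2) : ℤ)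
      = ∑ i ∈ Finset.range (k + 4), (catalan i : ℤ) * catalan (k + 3 - i) := by
    rw [show k + 2 + 2 = (k + 3) + 1 by ring, catalan_succ, Finset.sum_range]
    push_cast; rfl
  rw [Finset.sum_range_succ, Finset.sum_range_succ, Finset.sum_range_succ,
    Finset.sum_range_succ', Finset.sum_range_succ'] at h1
  rw [Finset.sum_range_succ, Finset.sum_range_succ,
    Finset.sum_range_succ', Finset.sum_range_succ'] at h2
  simp only [show k + 4 - (k + 2) = 2 by omega, show k + 4 - (k + 3) = 1 by omega,
    show k + 3 - (k + 2) = 1 by omega, show k + 3 - (k + 3) = 0 by omega, catalan_zero,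
    catalan_one, catalan_two, zero_add, Nat.sub_zero, show k + 4 - 1 = k + 3 by omega,
    show k + 3 - 1 = k + 2 by omega, show k + 4 - (k + 4) = 0 by omega] at h1 h2
  have h3 : (∑ j ∈ Finset.Icc 1 (k + 2 - 2), ((N (2 * j) 1 1 * N (2 * (k + 2 - j - 1) + 1) 2 1 : ℕ) : ℤ))
     = ∑ i ∈ Finset.range k, ((catalan (i + 1 + 1) : ℤ) * catalan (k + 4 - (i + 1 + 1)))
      - ∑ i ∈ Finset.range k, ((catalan (i + 1 + 1) : ℤ) * catalan (k + 3 - (i + 1 + 1))) := by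
    rw [← Finset.sum_sub_distrib]
    rw [Finset.range_eq_Ico, Finset.sum_Ico_add' (fun i => ((catalan (i + 1) : ℤ) * catalan (k + 4 - (i + 1))) - ((catalan (i + 1) : ℤ) * catalan (k + 3 - (i + 1)))) 0 k 1]
    apply Finset.sum_congr
    · ext x; simp
    · intro j hj
      simp at hj
      have hb := N_b (k + 2 - j - 1)
      rw [N_a, show k + 4 - (j + 1) = k + 2 - j - 1 + 2 by omega,
        show k + 3 - (j + 1) = k + 2 - j - 1 + 1 by omega, ← hb]
      push_cast; ring
  rw [h3]
  push_cast at h1 h2 ⊢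
  have h4 : k + 2 + 2 = k + 4 := by ring
  rw [h4] at *
  linarith

lemma final (m : ℕ) (hm : 2 ≤ m) (c : ℕ)
    (hc : (c : ℤ) = 2 * (catalan (m + 3) - 3 * catalan (m + 2))) :
    c * (Nat.factorial (m + 1) * Nat.factorial (m + 4)) =
      4 * (m - 2) * Nat.factorial (2 * m + 3) := by
  obtain ⟨k, rfl⟩ : ∃ k, m = k + 2 := ⟨m - 2, by omega⟩
  rw [Nat.add_sub_cancel]
  have h1 := cat_fact (k + 2 + 3)
  have h2 := cat_fact (k + 2 + 2)
  have e1 : (2 * (k + 2 + 3)).factorial = (2 * k + 10) * ((2 * k + 9) * ((2 * k + 8) * (2 * (k + 2) + 3).factorial)) := by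
    rw [show 2 * (k + 2 + 3) = 2 * (k + 2) + 3 + 1 + 1 + 1 by ring]
    simp only [Nat.factorial_succ (2 * (k + 2) + 3 + 1 + 1), Nat.factorial_succ (2 * (k + 2) + 3 + 1), Nat.factorial_succ (2 * (k + 2) + 3)]; ring
  have e2 : (2 * (k + 2 + 2)).factorial = (2 * k + 8) * (2 * (k + 2) + 3).factorial := by
    rw [show 2 * (k + 2 + 2) = 2 * (k + 2) + 3 + 1 by ring, Nat.factorial_succ]; ring
  rw [e1] at h1
  rw [e2] at h2
  have f3 : (k + 2 + 3 + 1).factorial = (k + 6) * ((k + 5) * ((k + 4) * (k + 3).factorial)) := by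
    simp only [Nat.factorial_succ (k+5), Nat.factorial_succ (k+4), Nat.factorial_succ (k+3), show k + 2 + 3 + 1 = k + 5 + 1 by ring]
  have f2 : (k + 2 + 3).factorial = ((k + 5) * ((k + 4) * (k + 3).factorial)) := by
    simp only [Nat.factorial_succ (k+4), Nat.factorial_succ (k+3), show k + 2 + 3  = k + 4 + 1 by ring]
  have f1 : (k + 2 + 2).factorial = (((k + 4) * (k + 3).factorial)) := by
    simp only [Nat.factorial_succ (k+3), show k + 2 + 2  = k + 3 + 1 by ring]
  have f4 : (k + 2 + 4).factorial = (k + 6) * ((k + 5) * ((k + 4) * (k + 3).factorial)) := f3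
  have f0 : (k + 2 + 2 + 1).factorial = ((k + 5) * ((k + 4) * (k + 3).factorial)) := f2
  rw [f3, f2] at h1
  rw [f0, f1] at h2
  rw [f4, show k + 2 + 1 = k + 3 by ring]
  generalize (2 * (k + 2) + 3).factorial = F at *
  generalize (k + 3).factorial = G at *
  zify at h1 h2 ⊢
  rw [hc]
  generalize (catalan (k + 2 + 3) : ℤ) = X at *
  generalize (catalan (k + 2 + 2) : ℤ) = Y at *
  have hpos : ((k : ℤ) + 5) * (k + 4) ≠ 0 := by positivity
  apply mul_left_cancel₀ hpos
  linear_combination 2 * h1 - 6 * (k + 6) * (k + 5) * h2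
end S13

namespace S13

def P1 {m : ℕ} (i : Fin m) : Fin (2 * m) := ⟨min (2 * i + 2) (2 * m - 1), by omega⟩
def P2 {m : ℕ} (i : Fin m) : Fin (2 * m) := ⟨2 * i - 1, by omega⟩

lemma pos_bij (m : ℕ) : Function.Bijective (Sum.elim (@P1 m) (@P2 m)) := by
  rw [Fintype.bijective_iff_injective_and_card]
  constructor
  · rintro (⟨a, ha⟩ | ⟨a, ha⟩) (⟨b, hb⟩ | ⟨b, hb⟩) h <;>
      simp [P1, P2] at h ⊢ <;> omega
  · simp; omega

noncomputable def posE (m : ℕ) : Fin m ⊕ Fin m ≃ Fin (2 * m) := Equiv.ofBijective _ (pos_bij m)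

@[simp] lemma posE_inl {m : ℕ} (i : Fin m) : posE m (Sum.inl i) = P1 i := rfl
@[simp] lemma posE_inr {m : ℕ} (i : Fin m) : posE m (Sum.inr i) = P2 i := rfl
@[simp] lemma posE_symm1 {m : ℕ} (i : Fin m) : (posE m).symm (P1 i) = Sum.inl i := by
  rw [← posE_inl, Equiv.symm_apply_apply]
@[simp] lemma posE_symm2 {m : ℕ} (i : Fin m) : (posE m).symm (P2 i) = Sum.inr i := by
  rw [← posE_inr, Equiv.symm_apply_apply]

def Rows {m : ℕ} (w : Equiv.Perm (Fin (2 * m))) : Prop :=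
  StrictMono (fun i : Fin m => w (P1 i)) ∧ StrictMono (fun i : Fin m => w (P2 i))

def Cols {m : ℕ} (w : Equiv.Perm (Fin (2 * m))) : Prop :=
  ∀ i : ℕ, ∀ hi : i + 1 < m, w (P1 ⟨i, by omega⟩) < w (P2 ⟨i + 1, hi⟩)

noncomputable def wf {m : ℕ} (w : Equiv.Perm (Fin (2 * m))) (v : Fin (2 * m)) : Bool :=
  ((posE m).symm (w.symm v)).isLeft

lemma count_ofFn {n : ℕ} (f : Fin n → Bool) (v : ℕ) (b : Bool) :
    ((List.ofFn f).take v).count b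
      = (Finset.univ.filter fun x : Fin n => x.val < v ∧ f x = b).card := by
  induction n generalizing v with
  | zero => simp
  | succ n ih =>
    rcases v with _ | v
    · simp
    · rw [List.ofFn_succ, List.take_succ_cons, List.count_cons, ih, Fin.card_filter_univ_succ]
      simp
      split_ifs <;> omega

def cnt {m n : ℕ} (f : Fin m → Fin n) (v : ℕ) : ℕ :=
  (Finset.univ.filter fun k : Fin m => (f k).val < v).card

lemma galois {m n : ℕ} (f : Fin m → Fin n) (hf : StrictMono f) (i : Fin m) (v : ℕ) :
    (f i).val < v ↔ i.val < cnt f v := by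
  constructor
  · intro h
    have : Finset.Iic i ⊆ Finset.univ.filter fun k : Fin m => (f k).val < v := by
      intro k hk
      simp at hk ⊢
      have := hf.monotone hk
      exact lt_of_le_of_lt this h
    have := Finset.card_le_card this
    simp at this
    exact this
  · intro h
    by_contra h'
    have : (Finset.univ.filter fun k : Fin m => (f k).val < v) ⊆ Finset.Iio i := by
      intro k hk
      simp at hk ⊢
      by_contra hh
      push Not at hh
      have : (f i).val ≤ (f k).val := hf.monotone hh
      omega
    have := Finset.card_le_card this
    simp at this
    unfold cnt at h
    omega

lemma cnt_true {m : ℕ} (w : Equiv.Perm (Fin (2 * m))) (v : ℕ) :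
    ((List.ofFn (wf w)).take v).count true = cnt (fun i : Fin m => w (P1 i)) v := by
  rw [count_ofFn, cnt]
  symm
  refine Finset.card_bij (fun i _ => w (P1 i)) ?_ ?_ ?_
  · intro i hi
    rw [Finset.mem_filter] at hi ⊢
    simpa [wf] using hi
  · intro i _ k _ h
    have := congrArg (posE m).symm (w.injective h)
    simpa using this
  · intro x hx
    rw [Finset.mem_filter] at hx
    obtain ⟨y, rfl⟩ := w.surjective x
    obtain ⟨y, rfl⟩ := (posE m).surjective y
    rcases y with y | y
    · exact ⟨y, by simpa [wf] using hx, rfl⟩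
    · simp [wf] at hx

lemma cnt_false {m : ℕ} (w : Equiv.Perm (Fin (2 * m))) (v : ℕ) :
    ((List.ofFn (wf w)).take v).count false = cnt (fun i : Fin m => w (P2 i)) v := by
  rw [count_ofFn, cnt]
  symm
  refine Finset.card_bij (fun i _ => w (P2 i)) ?_ ?_ ?_
  · intro i hi
    rw [Finset.mem_filter] at hi ⊢
    simpa [wf] using hi
  · intro i _ k _ h
    have := congrArg (posE m).symm (w.injective h)
    simpa using this
  · intro x hx
    rw [Finset.mem_filter] at hx
    obtain ⟨y, rfl⟩ := w.surjective x
    obtain ⟨y, rfl⟩ := (posE m).surjective y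
    rcases y with y | y
    · simp [wf] at hx
    · exact ⟨y, by simpa [wf] using hx, rfl⟩

lemma cnt_top {m n : ℕ} (f : Fin m → Fin n) (v : ℕ) (h : n ≤ v) : cnt f v = m := by
  unfold cnt
  rw [Finset.filter_true_of_mem]
  · simp
  · intro x _; have := (f x).isLt; omega

lemma cnt_le {m n : ℕ} (f : Fin m → Fin n) (v : ℕ) : cnt f v ≤ m := by
  unfold cnt
  exact (Finset.card_le_univ _).trans (by simp)

lemma cols_iff {m : ℕ} (w : Equiv.Perm (Fin (2 * m))) (hw : Rows w) :
    Cols w ↔ ∀ v, cnt (fun i : Fin m => w (P2 i)) v ≤ 1 + cnt (fun i : Fin m => w (P1 i)) v := by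
  constructor
  · intro h v
    by_contra hv
    push Not at hv
    have hle := cnt_le (fun i : Fin m => w (P2 i)) v
    have hi : cnt (fun i : Fin m => w (P1 i)) v + 1 < m := by omega
    have h1 := h _ hi
    have h2 := (galois _ hw.2 ⟨_, hi⟩ v).2 (by simp; omega)
    have h3 := (galois _ hw.1 ⟨cnt (fun i : Fin m => w (P1 i)) v, by omega⟩ v).1
      (lt_trans h1 h2)
    simp at h3
  · intro h i hi
    have h1 := h ((w (P2 ⟨i + 1, hi⟩)).val + 1)
    have h2 := (galois _ hw.2 ⟨_, hi⟩ ((w (P2 ⟨i + 1, hi⟩)).val + 1)).1 (by simp)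
    have h3 := (galois _ hw.1 ⟨i, by omega⟩ ((w (P2 ⟨i + 1, hi⟩)).val + 1)).2
      (by simp at h2 ⊢; omega)
    have h4 : w (P1 ⟨i, by omega⟩) ≠ w (P2 ⟨i + 1, hi⟩) := by
      intro h
      have := congrArg (posE m).symm (w.injective h)
      simp at this
    exact lt_of_le_of_ne (Fin.le_def.2 (by omega)) h4

lemma run_word {m : ℕ} (w : Equiv.Perm (Fin (2 * m))) (hw : Rows w) :
    run 1 (List.ofFn (wf w)) = some 1 ↔ Cols w := by
  rw [run_iff, cols_iff w hw]
  simp only [cnt_true, cnt_false]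
  constructor
  · exact fun h => h.1
  · refine fun h => ⟨h, ?_⟩
    have h1 := cnt_true w (2 * m)
    have h2 := cnt_false w (2 * m)
    rw [List.take_of_length_le (by simp), cnt_top _ _ le_rfl] at h1 h2
    rw [h1, h2]

lemma mark_word {m : ℕ} (w : Equiv.Perm (Fin (2 * m))) (hw : Rows w) (hc : Cols w) (j : ℕ)
    (hj : j < m) :
    (run 1 ((List.ofFn (wf w)).take (2 * j)) = some 1 ∧ (List.ofFn (wf w))[2 * j]? = some true)
      ↔ (w (P1 ⟨j, hj⟩)).val = 2 * j := by
  have hpre : ∀ v, (((List.ofFn (wf w)).take (2 * j)).take v).count false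
      ≤ 1 + (((List.ofFn (wf w)).take (2 * j)).take v).count true := by
    intro v
    rw [List.take_take, cnt_true, cnt_false]
    exact (cols_iff w hw).1 hc _
  rw [run_iff]
  have hlt : 2 * j < 2 * m := by omega
  have hsum : ((List.ofFn (wf w)).take (2 * j)).count true
      + ((List.ofFn (wf w)).take (2 * j)).count false = 2 * j := by
    rw [List.count_true_add_count_false]; simp; omega
  rw [cnt_true, cnt_false] at hsum
  rw [cnt_true, cnt_false]
  have hget : (List.ofFn (wf w))[2 * j]? = some (wf w ⟨2 * j, hlt⟩) := by
    rw [List.getElem?_eq_getElem (by simpa using hlt)]; simp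
  rw [hget]
  have g1 := galois _ hw.1 ⟨j, hj⟩ (2 * j)
  constructor
  · rintro ⟨⟨_, h1⟩, h2⟩
    have hcj : cnt (fun i : Fin m => w (P1 i)) (2 * j) = j := by omega
    obtain ⟨y, hy⟩ := w.surjective ⟨2 * j, hlt⟩
    obtain ⟨y, rfl⟩ := (posE m).surjective y
    rw [← hy] at h2
    rcases y with y | y
    · rw [posE_inl] at hy
      have g2 := galois _ hw.1 ⟨j, hj⟩ (2 * j + 1)
      have g3 := galois _ hw.1 y (2 * j)
      have g4 := galois _ hw.1 y (2 * j + 1)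
      rw [hcj] at g1 g3
      simp only [hy] at g3 g4
      simp only [lt_self_iff_false, iff_false, not_lt, lt_add_iff_pos_right,
        true_iff, false_iff, zero_lt_one] at g1 g2 g3 g4
      have := g2.2 (by omega)
      omega
    · simp [wf] at h2
  · intro h
    have e : w (P1 ⟨j, hj⟩) = ⟨2 * j, hlt⟩ := Fin.ext h
    refine ⟨⟨hpre, ?_⟩, ?_⟩
    · simp only [h, lt_self_iff_false, false_iff, not_lt] at g1
      rcases j with _ | j
      · simp at hsum
        simp [hsum]
      · have g2 := galois _ hw.1 ⟨j, by omega⟩ (2 * (j + 1))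
        have : w (P1 ⟨j, by omega⟩) < w (P1 ⟨j + 1, hj⟩) := hw.1 (by simp)
        have := g2.1 (by omega)
        simp only at this
        omega
    · rw [← e]; simp [wf]

open Classical in
noncomputable def B (m j : ℕ) (hj : j < m) : Finset (Equiv.Perm (Fin (2 * m))) :=
  Finset.univ.filter fun w => Rows w ∧ Cols w ∧ (w (P1 ⟨j, hj⟩)).val = 2 * j

lemma card_B (m j : ℕ) (hj : j < m) : (B m j hj).card = (marked m j).card := by
  refine Finset.card_bij (fun w _ => List.ofFn (wf w)) ?_ ?_ ?_
  · intro w hw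
    simp only [B, Finset.mem_filter, Finset.mem_univ, true_and] at hw
    obtain ⟨h1, h2, h3⟩ := hw
    simp only [marked, Finset.mem_filter, mem_paths]
    exact ⟨⟨by simp, (run_word w h1).2 h2⟩, (mark_word w h1 h2 j hj).2 h3⟩
  · intro w hw w' hw' h
    simp only [B, Finset.mem_filter, Finset.mem_univ, true_and] at hw hw'
    have e1 : ∀ i : Fin m, w (P1 i) = w' (P1 i) := by
      intro i
      have := fun v => (galois _ hw.1.1 i v)
      simp only [← cnt_true, h] at this
      simp only [cnt_true, ← galois _ hw'.1.1] at this
      have a := this (w (P1 i)).val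
      have b := this ((w (P1 i)).val + 1)
      apply Fin.ext
      omega
    have e2 : ∀ i : Fin m, w (P2 i) = w' (P2 i) := by
      intro i
      have := fun v => (galois _ hw.1.2 i v)
      simp only [← cnt_false, h] at this
      simp only [cnt_false, ← galois _ hw'.1.2] at this
      have a := this (w (P2 i)).val
      have b := this ((w (P2 i)).val + 1)
      apply Fin.ext
      omega
    ext1 y
    obtain ⟨y, rfl⟩ := (posE m).surjective y
    rcases y with y | y
    · exact e1 y
    · exact e2 y
  · intro l hl
    simp only [marked, Finset.mem_filter, mem_paths] at hl
    obtain ⟨⟨h1, h2⟩, h3⟩ := hl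
    obtain ⟨f, rfl⟩ : ∃ f : Fin (2 * m) → Bool, l = List.ofFn f := by
      refine ⟨fun i => l[i.val]'(by omega), ?_⟩
      apply List.ext_getElem
      · simpa using h1
      · intro i _ _; simp
    have hr := ((run_iff _ _ _).1 h2).2
    have hs := List.count_true_add_count_false (List.ofFn f)
    rw [h1] at hs
    have ht : (List.ofFn f).count true = m := by omega
    have hcard : (Finset.univ.filter fun x => f x = true).card = m := by
      have := count_ofFn f (2 * m) true
      rw [List.take_of_length_le (by simp), ht] at this
      refine Eq.trans ?_ this.symm
      congr 1
      ext x; simp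
    have hcard' : ((Finset.univ.filter fun x => f x = true)ᶜ).card = m := by
      rw [Finset.card_compl, hcard]; simp; omega
    let w : Equiv.Perm (Fin (2 * m)) := (posE m).symm.trans (finSumEquivOfFinset hcard hcard')
    have hw1 : ∀ i, w (P1 i) = Finset.orderEmbOfFin _ hcard i := by
      intro i; simp [w]
    have hw2 : ∀ i, w (P2 i) = Finset.orderEmbOfFin _ hcard' i := by
      intro i; simp [w]
    have hR : Rows w := by
      constructor
      · intro a b hab
        simp only [hw1]; simpa using hab
      · intro a b hab
        simp only [hw2]; simpa using hab
    have hwf : wf w = f := by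
      ext1 v
      obtain ⟨y, rfl⟩ := w.surjective v
      obtain ⟨y, rfl⟩ := (posE m).surjective y
      rcases y with y | y
      · have := Finset.orderEmbOfFin_mem _ hcard y
        rw [← hw1] at this
        simp at this
        simp [wf, this]
      · have := Finset.orderEmbOfFin_mem _ hcard' y
        rw [← hw2] at this
        simp at this
        simp [wf, this]
    rw [← hwf] at h2 h3
    have hC := (run_word w hR).1 h2
    refine ⟨w, ?_, by rw [hwf]⟩
    simp only [B, Finset.mem_filter, Finset.mem_univ, true_and]
    exact ⟨hR, hC, (mark_word w hR hC j hj).1 h3⟩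

end S13

namespace S13

def sg (i p : ℕ) : ℕ := if p = 2 * i + 2 then 2 * i + 4 else if p = 2 * i + 4 then 2 * i + 2 else p

lemma sg1 (i : ℕ) : sg i (2 * i + 2) = 2 * i + 4 := by simp [sg]
lemma sg2 (i : ℕ) : sg i (2 * i + 4) = 2 * i + 2 := by simp [sg]
lemma sg3 (i p : ℕ) (h1 : p ≠ 2 * i + 2) (h2 : p ≠ 2 * i + 4) : sg i p = p := by simp [sg, h1, h2]
lemma sg_odd (i a : ℕ) : sg i (2 * a + 1) = 2 * a + 1 := sg3 _ _ (by omega) (by omega)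
lemma sg_zero (i : ℕ) : sg i 0 = 0 := sg3 _ _ (by omega) (by omega)

structure UDn (m : ℕ) (g : ℕ → ℕ) : Prop where
  up : ∀ a, 2 * a + 1 < 2 * m → g (2 * a) < g (2 * a + 1)
  dn : ∀ a, 2 * a + 2 < 2 * m → g (2 * a + 2) < g (2 * a + 1)

structure Occn (m i : ℕ) (g : ℕ → ℕ) : Prop where
  h1 : g (2 * i + 4) < g (2 * i + 2)
  h2 : g (2 * i + 2) < g (2 * i + 1)
  u : ∀ p q r, p < q → q < r → r < 2 * m → g r < g q → g q < g p →
    p = 2 * i + 1 ∧ q = 2 * i + 2 ∧ r = 2 * i + 4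

structure Rn (m : ℕ) (g : ℕ → ℕ) : Prop where
  r1 : ∀ a b, a < b → 2 * b + 2 < 2 * m → g (2 * a + 2) < g (2 * b + 2)
  r1' : g (2 * m - 2) < g (2 * m - 1)
  r2 : ∀ a b, a < b → 2 * b + 2 < 2 * m → g (2 * a + 1) < g (2 * b + 1)
  r2' : g 0 < g 1
  c : ∀ a, 2 * a + 2 < 2 * m → g (2 * a + 2) < g (2 * a + 1)

structure Pn (m : ℕ) (g : ℕ → ℕ) : Prop where
  inj : ∀ p q, p < 2 * m → q < 2 * m → g p = g q → p = q
  card : ∀ y, y < 2 * m → ((Finset.range (2 * m)).filter fun p => g p < g y).card = g y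

lemma core1 (m i : ℕ) (hi : i + 3 ≤ m) (g : ℕ → ℕ) (hP : Pn m g) (hU : UDn m g)
    (hO : Occn m i g) : Rn m (fun p => g (sg i p)) ∧ g (2 * i + 2) = 2 * i + 2 := by
  have tops : ∀ a b, a < b → 2 * b + 2 < 2 * m → g (2 * a + 1) < g (2 * b + 1) := by
    intro a b hab hb
    by_contra h
    have hne : g (2 * a + 1) ≠ g (2 * b + 1) := fun h => by
      have := hP.inj _ _ (by omega) (by omega) h; omega
    have := hO.u (2 * a + 1) (2 * b + 1) (2 * b + 2) (by omega) (by omega) hb (hU.dn b hb)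
      (by omega)
    omega
  have bots : ∀ a b, a < b → 2 * b + 2 < 2 * m → ¬ (a = i ∧ b = i + 1) →
      g (2 * a + 2) < g (2 * b + 2) := by
    intro a b hab hb hn
    by_contra h
    have hne : g (2 * a + 2) ≠ g (2 * b + 2) := fun h => by
      have := hP.inj _ _ (by omega) (by omega) h; omega
    have := hO.u (2 * a + 1) (2 * a + 2) (2 * b + 2) (by omega) (by omega) hb (by omega)
      (hU.dn a (by omega))
    omega
  constructor
  · refine ⟨?_, ?_, ?_, ?_, ?_⟩
    · intro a b hab hb
      by_cases ha : a = i
      · subst ha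
        rw [sg1]
        by_cases hb' : b = a + 1
        · subst hb'
          rw [show 2 * (a + 1) + 2 = 2 * a + 4 by ring, sg2]; exact hO.h1
        · rw [sg3 _ _ (by omega) (by omega)]
          exact bots (a + 1) b (by omega) hb (by omega)
      · by_cases ha' : a = i + 1
        · subst ha'
          rw [show 2 * (i + 1) + 2 = 2 * i + 4 by ring, sg2, sg3 _ _ (by omega) (by omega)]
          exact bots i b (by omega) hb (by omega)
        · rw [sg3 _ (2 * a + 2) (by omega) (by omega)]
          by_cases hb1 : b = i
          · subst hb1
            rw [sg1]
            exact bots a (b + 1) (by omega) (by omega) (by omega)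
          · by_cases hb2 : b = i + 1
            · subst hb2
              rw [show 2 * (i + 1) + 2 = 2 * i + 4 by ring, sg2]
              exact bots a i (by omega) (by omega) (by omega)
            · rw [sg3 _ (2 * b + 2) (by omega) (by omega)]
              exact bots a b (by omega) (by omega) (by omega)
    · obtain ⟨k, rfl⟩ : ∃ k, m = k + 1 := ⟨m - 1, by omega⟩
      rw [show 2 * (k + 1) - 2 = 2 * k by omega, show 2 * (k + 1) - 1 = 2 * k + 1 by omega, sg_odd]
      have h0 := hU.up k (by omega)
      by_cases hk : k = i + 2
      · subst hk
        rw [show 2 * (i + 2) = 2 * i + 4 by ring, sg2]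
        by_contra hn
        have hne : g (2 * i + 2) ≠ g (2 * i + 4 + 1) := fun h => by
          have := hP.inj _ _ (by omega) (by omega) h; omega
        have := hO.u (2 * i + 1) (2 * i + 2) (2 * i + 4 + 1) (by omega) (by omega) (by omega)
          (by omega) hO.h2
        omega
      · rwa [sg3 _ _ (by omega) (by omega)]
    · intro a b hab hb
      simp only [sg_odd]
      exact tops a b hab hb
    · have := sg_odd i 0
      simp only [mul_zero, zero_add] at this
      simp only [sg_zero, this]
      exact hU.up 0 (by omega)
    · intro a ha
      simp only [sg_odd]
      have hd := hU.dn a ha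
      by_cases h1 : a = i
      · subst h1
        rw [sg1]
        exact hO.h1.trans hO.h2
      · by_cases h2 : a = i + 1
        · subst h2
          rw [show 2 * (i + 1) + 2 = 2 * i + 4 by ring, sg2]
          exact hO.h2.trans (tops _ _ (by omega) (by omega))
        · rwa [sg3 _ _ (by omega) (by omega)]
  · have hc := hP.card (2 * i + 2) (by omega)
    rw [← hc]
    have : (Finset.range (2 * m)).filter (fun p => g p < g (2 * i + 2))
        = insert (2 * i + 4) ((Finset.range (2 * i + 2)).erase (2 * i + 1)) := by
      ext p
      simp only [Finset.mem_filter, Finset.mem_range, Finset.mem_insert, Finset.mem_erase]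
      constructor
      · rintro ⟨h1, h2⟩
        by_contra hn
        have hp : p = 2 * i + 1 ∨ p = 2 * i + 2 ∨ (2 * i + 2 < p ∧ p ≠ 2 * i + 4) := by omega
        rcases hp with rfl | rfl | hp
        · have := hO.h2; omega
        · omega
        · have := hO.u (2 * i + 1) (2 * i + 2) p (by omega) (by omega) h1 h2 hO.h2
          omega
      · rintro (rfl | ⟨h1, h2⟩)
        · exact ⟨by omega, hO.h1⟩
        · refine ⟨by omega, ?_⟩
          by_contra hn
          have hne : g p ≠ g (2 * i + 2) := fun h => by
            have := hP.inj _ _ (by omega) (by omega) h; omega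
          have := hO.u p (2 * i + 2) (2 * i + 4) (by omega) (by omega) (by omega) hO.h1 (by omega)
          omega
    rw [this, Finset.card_insert_of_notMem (by simp), Finset.card_erase_of_mem (by simp)]
    simp

lemma core2 (m i : ℕ) (hi : i + 3 ≤ m) (g : ℕ → ℕ) (hP : Pn m g) (hR : Rn m g)
    (hv : g (2 * i + 4) = 2 * i + 2) :
    UDn m (fun p => g (sg i p)) ∧ Occn m i (fun p => g (sg i p)) := by
  have hc := hP.card (2 * i + 4) (by omega)
  rw [hv] at hc
  have hb1 : g (2 * i + 2) < g (2 * i + 4) := hR.r1 i (i + 1) (by omega) (by omega)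
  have top_le : ∀ a, a ≤ i → g (2 * a + 1) ≤ g (2 * i + 1) := by
    intro a ha
    rcases Nat.lt_or_ge a i with h | h
    · exact (hR.r2 a i h (by omega)).le
    · rw [show a = i by omega]
  have bot_le : ∀ a, a ≤ i → g (2 * a + 2) ≤ g (2 * i + 2) := by
    intro a ha
    rcases Nat.lt_or_ge a i with h | h
    · exact (hR.r1 a i h (by omega)).le
    · rw [show a = i by omega]
  have hcb : g (2 * i + 4) < g (2 * i + 1) := by
    by_contra hn
    have hne : g (2 * i + 1) ≠ g (2 * i + 4) := fun h => by
      have := hP.inj _ _ (by omega) (by omega) h; omega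
    have : Finset.range (2 * i + 3) ⊆ (Finset.range (2 * m)).filter (fun p => g p < 2 * i + 2) := by
      intro p hp
      simp only [Finset.mem_filter, Finset.mem_range] at hp ⊢
      refine ⟨by omega, ?_⟩
      rcases Nat.even_or_odd' p with ⟨a, rfl | rfl⟩
      · rcases a with _ | a
        · have := hR.r2'
          have := top_le 0 (by omega)
          simp at this ⊢
          omega
        · have := bot_le a (by omega)
          rw [show 2 * (a + 1) = 2 * a + 2 by ring]; omega
      · have := top_le a (by omega); omega
    have := Finset.card_le_card this
    rw [hc] at this
    simp at this
  have htop : ∀ a, i ≤ a → 2 * a + 2 < 2 * m → g (2 * i + 4) < g (2 * a + 1) := by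
    intro a ha hm
    rcases Nat.lt_or_ge i a with h | h
    · exact hcb.trans (hR.r2 i a h hm)
    · rw [show a = i by omega]; exact hcb
  have hbot : ∀ a, i + 1 < a → 2 * a + 2 < 2 * m → g (2 * i + 4) < g (2 * a + 2) := by
    intro a ha hm
    exact hR.r1 (i + 1) a ha hm
  have hlast : ∀ a, 2 * a + 2 < 2 * m → g (2 * a + 2) < g (2 * m - 1) := by
    intro a ha
    rcases Nat.lt_or_ge (a + 2) m with h | h
    · have := hR.r1 a (m - 2) (by omega) (by omega)
      rw [show 2 * (m - 2) + 2 = 2 * m - 2 by omega] at this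
      exact this.trans hR.r1'
    · rw [show 2 * a + 2 = 2 * m - 2 by omega]; exact hR.r1'
  have hset : (Finset.range (2 * m)).filter (fun p => g p < 2 * i + 2)
      = (Finset.range (2 * i + 3)).erase (2 * i + 1) := by
    apply Finset.eq_of_subset_of_card_le
    · intro p hp
      simp only [Finset.mem_filter, Finset.mem_range, Finset.mem_erase] at hp ⊢
      obtain ⟨h1, h2⟩ := hp
      rw [← hv] at h2
      refine ⟨by rintro rfl; omega, ?_⟩
      by_contra hn
      rcases Nat.even_or_odd' p with ⟨a, rfl | rfl⟩
      · obtain ⟨a, rfl⟩ : ∃ b, a = b + 1 := ⟨a - 1, by omega⟩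
        rcases Nat.lt_or_ge (i + 1) a with h | h
        · have := hbot a h (by omega)
          rw [show 2 * (a + 1) = 2 * a + 2 by ring] at h2; omega
        · rw [show 2 * (a + 1) = 2 * i + 4 by omega] at h2; omega
      · rcases Nat.lt_or_ge (a + 1) m with h | h
        · have := htop a (by omega) (by omega); omega
        · have := hlast (i + 1) (by omega)
          rw [show 2 * m - 1 = 2 * a + 1 by omega,
            show 2 * (i + 1) + 2 = 2 * i + 4 by omega] at this
          omega
    · rw [hc, Finset.card_erase_of_mem (by simp)]; simp
  have hsmall : ∀ p, p < 2 * i + 3 → p ≠ 2 * i + 1 → g p < g (2 * i + 4) := by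
    intro p h1 h2
    have : p ∈ (Finset.range (2 * i + 3)).erase (2 * i + 1) := by simp; omega
    rw [← hset] at this
    rw [hv]
    exact (Finset.mem_filter.1 this).2
  -- increasing rows of the new word
  have row2 : ∀ p q, p < q → q + 1 < 2 * m → (p = 0 ∨ p % 2 = 1) → q % 2 = 1 → g p < g q := by
    intro p q hpq hq hp hq'
    obtain ⟨b, rfl⟩ : ∃ b, q = 2 * b + 1 := ⟨q / 2, by omega⟩
    rcases hp with rfl | hp
    · rcases b with _ | b
      · exact hR.r2'
      · exact hR.r2'.trans (hR.r2 0 (b + 1) (by omega) (by omega))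
    · obtain ⟨a, rfl⟩ : ∃ b, p = 2 * b + 1 := ⟨p / 2, by omega⟩
      exact hR.r2 a b (by omega) (by omega)
  have row1 : ∀ p q, 0 < p → p < q → q < 2 * m → p % 2 = 0 → (q % 2 = 0 ∨ q + 1 = 2 * m) →
      g p < g q := by
    intro p q h0 hpq hq hp hq'
    obtain ⟨a, rfl⟩ : ∃ b, p = 2 * b + 2 := ⟨p / 2 - 1, by omega⟩
    rcases hq' with hq' | hq'
    · obtain ⟨b, rfl⟩ : ∃ b, q = 2 * b + 2 := ⟨q / 2 - 1, by omega⟩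
      exact hR.r1 a b (by omega) hq
    · rw [show q = 2 * m - 1 by omega]
      exact hlast a (by omega)
  have row1s : ∀ p q, 0 < p → p < q → q < 2 * m → p % 2 = 0 → (q % 2 = 0 ∨ q + 1 = 2 * m) →
      ¬ (p = 2 * i + 2 ∧ q = 2 * i + 4) → g (sg i p) < g (sg i q) := by
    intro p q h0 hpq hq hp hq' hn
    unfold sg
    split_ifs <;> apply row1 <;> omega
  have row2s : ∀ p q, p < q → q + 1 < 2 * m → (p = 0 ∨ p % 2 = 1) → q % 2 = 1 →
      g (sg i p) < g (sg i q) := by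
    intro p q hpq hq hp hq'
    rw [sg3 _ p (by omega) (by omega), sg3 _ q (by omega) (by omega)]
    exact row2 p q hpq hq hp hq'
  constructor
  · constructor
    · intro a ha
      simp only [sg_odd]
      rcases a with _ | a
      · rw [mul_zero, sg_zero]; exact hR.r2'
      · rcases Nat.lt_or_ge (a + 2) m with h | h
        · have h1 := hR.r2 a (a + 1) (by omega) (by omega)
          have h2 := hR.c a (by omega)
          by_cases e1 : a = i
          · subst e1
            rw [show 2 * (a + 1) = 2 * a + 2 by ring, sg1]
            have := htop (a + 1) (by omega) (by omega)
            rwa [show 2 * (a + 1) + 1 = 2 * a + 2 + 1 by ring] at this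
          · by_cases e2 : a = i + 1
            · subst e2
              rw [show 2 * (i + 1 + 1) = 2 * i + 4 by ring, sg2]
              have := htop (i + 2) (by omega) (by omega)
              rw [show 2 * (i + 2) + 1 = 2 * i + 4 + 1 by ring] at this
              omega
            · rw [sg3 _ _ (by omega) (by omega), show 2 * (a + 1) = 2 * a + 2 by ring] at *
              omega
        · have := row1s (2 * (a + 1)) (2 * (a + 1) + 1) (by omega) (by omega) (by omega) (by omega)
            (by omega) (by omega)
          rwa [sg_odd] at this
    · intro a ha
      simp only [sg_odd]
      by_cases e1 : a = i
      · subst e1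
        rw [sg1]
        exact hcb
      · by_cases e2 : a = i + 1
        · subst e2
          rw [show 2 * (i + 1) + 2 = 2 * i + 4 by ring, sg2]
          have := htop (i + 1) (by omega) (by omega)
          omega
        · rw [sg3 _ _ (by omega) (by omega)]
          exact hR.c a ha
  · refine ⟨?_, ?_, ?_⟩
    · simp only [sg1, sg2]; exact hb1
    · simp only [sg1, sg_odd]; exact hcb
    · intro p q r hpq hqr hr h1 h2
      have k1 : ∀ p q, p < q → q < 2 * m → g (sg i q) < g (sg i p) →
          (p = 2 * i + 2 ∧ q = 2 * i + 4) ∨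
          ((p = 0 ∨ p % 2 = 1) ∧ (q % 2 = 0 ∨ q + 1 = 2 * m)) ∨
          ((0 < p ∧ p % 2 = 0) ∧ (q % 2 = 1 ∧ q + 1 < 2 * m)) := by
        intro p q hpq hq h
        by_contra hn
        have : (0 < p ∧ p % 2 = 0 ∧ (q % 2 = 0 ∨ q + 1 = 2 * m) ∧ ¬ (p = 2 * i + 2 ∧ q = 2 * i + 4))
          ∨ ((p = 0 ∨ p % 2 = 1) ∧ q % 2 = 1 ∧ q + 1 < 2 * m) := by omega
        rcases this with ⟨a1, a2, a3, a4⟩ | ⟨a1, a2, a3⟩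
        · have := row1s p q a1 hpq hq a2 a3 a4; omega
        · have := row2s p q hpq a3 a1 a2; omega
      have c1 := k1 p q hpq (by omega) h2
      have c2 := k1 q r hqr hr h1
      have c3 := k1 p r (by omega) hr (by omega)
      have cases3 : (p = 2 * i + 2 ∧ r = 2 * i + 4) ∨ (p = 2 * i + 2 ∧ q = 2 * i + 4) ∨
        (q = 2 * i + 2 ∧ r = 2 * i + 4) := by omega
      rcases cases3 with ⟨rfl, rfl⟩ | ⟨rfl, rfl⟩ | ⟨rfl, rfl⟩
      · obtain rfl : q = 2 * i + 3 := by omega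
        rw [sg1, sg3 _ _ (by omega) (by omega)] at h2
        have := htop (i + 1) (by omega) (by omega)
        rw [show 2 * (i + 1) + 1 = 2 * i + 3 by ring] at this
        omega
      · obtain ⟨a, rfl⟩ : ∃ a, r = 2 * a + 1 := ⟨r / 2, by omega⟩
        rw [sg2, sg_odd] at h1
        have := htop a (by omega) (by omega)
        omega
      · refine ⟨?_, rfl, rfl⟩
        by_contra hn
        rw [sg1, sg3 _ p (by omega) (by omega)] at h2
        have := hsmall p (by omega) hn
        omega

end S13

namespace S13

def nv {m : ℕ} (w : Equiv.Perm (Fin (2 * m))) (p : ℕ) : ℕ :=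
  if h : p < 2 * m then (w ⟨p, h⟩).val else 0

lemma nv_eq {m : ℕ} (w : Equiv.Perm (Fin (2 * m))) (p : ℕ) (h : p < 2 * m) :
    nv w p = (w ⟨p, h⟩).val := by simp [nv, h]

lemma nv_val {m : ℕ} (w : Equiv.Perm (Fin (2 * m))) (p : Fin (2 * m)) :
    (w p).val = nv w p.val := by simp [nv]

lemma Pn_nv {m : ℕ} (w : Equiv.Perm (Fin (2 * m))) : Pn m (nv w) := by
  constructor
  · intro p q hp hq h
    rw [nv_eq w p hp, nv_eq w q hq] at h
    simpa using w.injective (Fin.ext h)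
  · intro y hy
    have hlt : nv w y < 2 * m := by rw [nv_eq w y hy]; exact Fin.isLt _
    conv_rhs => rw [← Finset.card_range (nv w y)]
    refine Finset.card_bij (fun p _ => nv w p) ?_ ?_ ?_
    · intro p hp
      simpa using (Finset.mem_filter.1 hp).2
    · intro p hp q hq h
      have hp := Finset.mem_range.1 (Finset.mem_filter.1 hp).1
      have hq := Finset.mem_range.1 (Finset.mem_filter.1 hq).1
      rw [nv_eq w p hp, nv_eq w q hq] at h
      simpa using w.injective (Fin.ext h)
    · intro v hv
      have hv := Finset.mem_range.1 hv
      refine ⟨(w.symm ⟨v, by omega⟩).val, ?_, ?_⟩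
      · simp [← nv_val, hv]
      · simp [← nv_val]

lemma UDn_iff {m : ℕ} (w : Equiv.Perm (Fin (2 * m))) : UpDown w ↔ UDn m (nv w) := by
  constructor
  · intro h
    constructor
    · intro a ha
      have := h (2 * a) ha
      rw [if_pos (by omega), Fin.lt_def] at this
      rwa [nv_eq _ _ ha, nv_eq]
    · intro a ha
      have := h (2 * a + 1) ha
      rw [if_neg (by omega), Fin.lt_def] at this
      rwa [nv_eq _ _ ha, nv_eq]
  · intro h i hi
    split_ifs with h2
    · obtain ⟨a, rfl⟩ : ∃ a, i = 2 * a := ⟨i / 2, by omega⟩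
      have := h.up a hi
      rw [Fin.lt_def]
      rwa [nv_eq _ _ hi, nv_eq _ _ (by omega)] at this
    · obtain ⟨a, rfl⟩ : ∃ a, i = 2 * a + 1 := ⟨i / 2, by omega⟩
      have := h.dn a hi
      rw [Fin.lt_def]
      rwa [nv_eq _ _ hi, nv_eq _ _ (by omega)] at this

lemma mem_occ {m : ℕ} (w : Equiv.Perm (Fin (2 * m))) (p q r : Fin (2 * m)) :
    (p, q, r) ∈ occ321 w ↔ p.val < q.val ∧ q.val < r.val ∧ nv w r < nv w q ∧ nv w q < nv w p := by
  simp only [occ321, Set.mem_ofPred_eq, Fin.lt_def, nv_val]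

def tri (m i : ℕ) (hi : i + 3 ≤ m) : Fin (2 * m) × Fin (2 * m) × Fin (2 * m) :=
  (⟨2 * i + 1, by omega⟩, ⟨2 * i + 2, by omega⟩, ⟨2 * i + 4, by omega⟩)

lemma Occn_iff {m : ℕ} (w : Equiv.Perm (Fin (2 * m))) (i : ℕ) (hi : i + 3 ≤ m) :
    occ321 w = {tri m i hi} ↔ Occn m i (nv w) := by
  constructor
  · intro h
    have h1 : tri m i hi ∈ occ321 w := by rw [h]; rfl
    rw [tri, mem_occ] at h1
    refine ⟨h1.2.2.1, h1.2.2.2, ?_⟩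
    intro p q r hpq hqr hr h3 h4
    have : ((⟨p, by omega⟩, ⟨q, by omega⟩, ⟨r, hr⟩) : Fin (2 * m) × Fin (2 * m) × Fin (2 * m))
      ∈ occ321 w := by
      rw [mem_occ]; exact ⟨hpq, hqr, h3, h4⟩
    rw [h] at this
    simpa [tri] using this
  · intro h
    ext ⟨p, q, r⟩
    rw [mem_occ, Set.mem_singleton_iff]
    constructor
    · rintro ⟨h1, h2, h3, h4⟩
      have := h.u p q r h1 h2 r.isLt h3 h4
      simp [tri, Fin.ext_iff, this]
    · intro h5
      simp only [tri, Prod.mk.injEq] at h5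
      obtain ⟨rfl, rfl, rfl⟩ := h5
      exact ⟨by simp, by simp, h.h1, h.h2⟩

lemma Rn_iff {m : ℕ} (hm : 2 ≤ m) (w : Equiv.Perm (Fin (2 * m))) :
    (Rows w ∧ Cols w) ↔ Rn m (nv w) := by
  have p1 : ∀ a, ∀ ha : a + 1 < m, nv w (2 * a + 2) = (w (P1 ⟨a, by omega⟩)).val := by
    intro a ha
    rw [nv_val]; congr 1; simp [P1]; omega
  have p1' : ∀ a, ∀ ha : a + 1 = m, nv w (2 * m - 1) = (w (P1 ⟨a, by omega⟩)).val := by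
    intro a ha
    rw [nv_val]; congr 1; simp [P1]; omega
  have p2 : ∀ a, ∀ ha : a + 1 < m, nv w (2 * a + 1) = (w (P2 ⟨a + 1, by omega⟩)).val := by
    intro a ha
    rw [nv_val]; congr 1
  have p2' : nv w 0 = (w (P2 ⟨0, by omega⟩)).val := by
    rw [nv_val]; congr 1
  constructor
  · rintro ⟨⟨h1, h2⟩, h3⟩
    refine ⟨?_, ?_, ?_, ?_, ?_⟩
    · intro a b hab hb
      rw [p1 a (by omega), p1 b (by omega)]
      exact h1 (by simpa using hab)
    · rw [show 2 * m - 2 = 2 * (m - 2) + 2 by omega, p1 _ (by omega), p1' (m - 1) (by omega)]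
      exact h1 (by simp; omega)
    · intro a b hab hb
      rw [p2 a (by omega), p2 b (by omega)]
      exact h2 (by simpa using hab)
    · rw [p2', show 1 = 2 * 0 + 1 by rfl, p2 0 (by omega)]
      exact h2 (by simp)
    · intro a ha
      rw [p1 a (by omega), p2 a (by omega)]
      exact h3 a (by omega)
  · intro h
    refine ⟨⟨?_, ?_⟩, ?_⟩
    · rintro ⟨a, ha⟩ ⟨b, hb⟩ hab
      simp only [Fin.mk_lt_mk] at hab
      rw [Fin.lt_def]
      simp only
      rw [← p1 a (by omega)]
      rcases Nat.lt_or_ge (b + 1) m with h' | h'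
      · rw [← p1 b h']; exact h.r1 a b hab (by omega)
      · rw [← p1' b (by omega)]
        rcases Nat.lt_or_ge (a + 2) m with h'' | h''
        · have := h.r1 a (m - 2) (by omega) (by omega)
          rw [show 2 * (m - 2) + 2 = 2 * m - 2 by omega] at this
          exact this.trans h.r1'
        · rw [show 2 * a + 2 = 2 * m - 2 by omega]; exact h.r1'
    · rintro ⟨a, ha⟩ ⟨b, hb⟩ hab
      simp only [Fin.mk_lt_mk] at hab
      rw [Fin.lt_def]
      simp only
      obtain ⟨b, rfl⟩ : ∃ c, b = c + 1 := ⟨b - 1, by omega⟩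
      rw [← p2 b (by omega)]
      rcases a with _ | a
      · rw [← p2']
        rcases b with _ | b
        · exact h.r2'
        · exact h.r2'.trans (h.r2 0 (b + 1) (by omega) (by omega))
      · rw [← p2 a (by omega)]
        exact h.r2 a b (by omega) (by omega)
    · intro i hi
      rw [Fin.lt_def, ← p1 i (by omega), ← p2 i (by omega)]
      exact h.c i (by omega)

def sw (m i : ℕ) (hi : i + 3 ≤ m) : Equiv.Perm (Fin (2 * m)) :=
  Equiv.swap ⟨2 * i + 2, by omega⟩ ⟨2 * i + 4, by omega⟩

lemma nv_sw {m : ℕ} (w : Equiv.Perm (Fin (2 * m))) (i : ℕ) (hi : i + 3 ≤ m) :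
    nv (w * sw m i hi) = fun p => nv w (sg i p) := by
  ext p
  unfold nv
  by_cases h : p < 2 * m
  · have h' : sg i p < 2 * m := by unfold sg; split_ifs <;> omega
    rw [dif_pos h, dif_pos h', Equiv.Perm.mul_apply]
    congr 2
    simp only [sw, Equiv.swap_apply_def, sg]
    ext
    split_ifs <;> simp_all
  · have h' : ¬ sg i p < 2 * m := by unfold sg; split_ifs <;> omega
    rw [dif_neg h, dif_neg h']

open Classical in
noncomputable def A (m i : ℕ) (hi : i + 3 ≤ m) : Finset (Equiv.Perm (Fin (2 * m))) :=
  Finset.univ.filter fun w => UpDown w ∧ occ321 w = {tri m i hi}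

lemma card_A (m i : ℕ) (hi : i + 3 ≤ m) : (A m i hi).card = (B m (i + 1) (by omega)).card := by
  have hsw : ∀ w : Equiv.Perm (Fin (2 * m)), w * sw m i hi * sw m i hi = w := by
    intro w; rw [mul_assoc, sw, Equiv.swap_mul_self, mul_one]
  have hP1 : (P1 ⟨i + 1, by omega⟩ : Fin (2 * m)).val = 2 * i + 4 := by simp [P1]; omega
  refine Finset.card_bij' (fun w _ => w * sw m i hi) (fun w _ => w * sw m i hi) ?_ ?_
    (fun w _ => hsw w) (fun w _ => hsw w)
  · intro w hw
    simp only [A, Finset.mem_filter, Finset.mem_univ, true_and, UDn_iff, Occn_iff] at hw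
    obtain ⟨h1, h2⟩ := core1 m i hi _ (Pn_nv w) hw.1 hw.2
    simp only [B, Finset.mem_filter, Finset.mem_univ, true_and, ← and_assoc,
      Rn_iff (show 2 ≤ m by omega), nv_sw]
    refine ⟨h1, ?_⟩
    rw [nv_val, nv_sw, hP1]
    simp only [sg2]
    omega
  · intro w hw
    simp only [B, Finset.mem_filter, Finset.mem_univ, true_and, ← and_assoc,
      Rn_iff (show 2 ≤ m by omega)] at hw
    rw [nv_val, hP1] at hw
    have := core2 m i hi _ (Pn_nv w) hw.1 (by omega)
    simp only [A, Finset.mem_filter, Finset.mem_univ, true_and, UDn_iff, Occn_iff, nv_sw]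
    exact this

/-- all up-down permutations with a single occurrence, middle position of given parity -/
def Sing {m : ℕ} (e : ℕ) (w : Equiv.Perm (Fin (2 * m))) : Prop :=
  UpDown w ∧ ∃ t, occ321 w = {t} ∧ t.2.1.val % 2 = e

open Classical in
noncomputable def E (m e : ℕ) : Finset (Equiv.Perm (Fin (2 * m))) :=
  Finset.univ.filter (Sing e)

lemma sing_even {m : ℕ} (w : Equiv.Perm (Fin (2 * m))) (h : Sing 0 w) :
    ∃ i, ∃ hi : i + 3 ≤ m, w ∈ A m i hi := by
  obtain ⟨hU, ⟨x, y, z⟩, ht, hy⟩ := h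
  have hU' := (UDn_iff w).1 hU
  have hmem : (x, y, z) ∈ occ321 w := by rw [ht]; rfl
  rw [mem_occ] at hmem
  obtain ⟨h1, h2, h3, h4⟩ := hmem
  have uniq : ∀ p q r, p < q → q < r → r < 2 * m → nv w r < nv w q → nv w q < nv w p →
      p = x.val ∧ q = y.val ∧ r = z.val := by
    intro p q r hpq hqr hr h3 h4
    have : ((⟨p, by omega⟩, ⟨q, by omega⟩, ⟨r, hr⟩) : Fin (2 * m) × Fin (2 * m) × Fin (2 * m))
      ∈ occ321 w := by
      rw [mem_occ]; exact ⟨hpq, hqr, h3, h4⟩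
    rw [ht] at this
    simpa [Fin.ext_iff] using this
  have hzlt := z.isLt
  simp only at hy
  obtain ⟨i, hi⟩ : ∃ i, y.val = 2 * i + 2 := ⟨y.val / 2 - 1, by omega⟩
  have hx : x.val = 2 * i + 1 := by
    have := uniq (2 * i + 1) (2 * i + 2) z (by omega) (by omega) hzlt (by rwa [hi] at h3)
      (hU'.dn i (by omega))
    omega
  have hz : z.val % 2 = 0 := by
    by_contra hne
    obtain ⟨a, ha⟩ : ∃ a, z.val = 2 * a + 1 := ⟨z.val / 2, by omega⟩
    have hup := hU'.up a (by omega)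
    rw [ha] at h3
    have hay : 2 * a ≠ y.val := by
      intro h
      have e : nv w (2 * a) = nv w y := by rw [h]
      omega
    have := uniq x y (2 * a) h1 (by omega) (by omega) (by omega) h4
    omega
  have hz2 : z.val = 2 * i + 4 := by
    by_contra hne
    have h5 : nv w (2 * i + 2) ≤ nv w (2 * i + 4) := by
      by_contra hn
      have := uniq x y (2 * i + 4) h1 (by omega) (by omega) (by rw [hi]; omega) h4
      omega
    have h6 : nv w (2 * i + 4) ≤ nv w z := by
      by_contra hn
      have := uniq (2 * i + 3) (2 * i + 4) z (by omega) (by omega) (by omega) (by omega)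
        (hU'.dn (i + 1) (by omega))
      omega
    rw [hi] at h3
    omega
  refine ⟨i, by omega, ?_⟩
  simp only [A, Finset.mem_filter, Finset.mem_univ, true_and]
  refine ⟨hU, ?_⟩
  rw [ht]
  simp [tri, Fin.ext_iff, hx, hi, hz2]

lemma card_E0 (m : ℕ) (hm : 2 ≤ m) : (E m 0).card
    = ∑ j ∈ Finset.Icc 1 (m - 2), (N (2 * j) 1 1 * N (2 * (m - j - 1) + 1) 2 1) := by
  classical
  have hE : E m 0 = (Finset.Icc 1 (m - 2)).biUnion
      (fun j => if h : (j - 1) + 3 ≤ m then A m (j - 1) h else ∅) := by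
    ext w
    simp only [Finset.mem_biUnion, Finset.mem_Icc]
    constructor
    · intro h
      obtain ⟨i, hi, hA⟩ := sing_even w (Finset.mem_filter.1 h).2
      refine ⟨i + 1, by omega, ?_⟩
      simp only [Nat.add_sub_cancel, hi, dif_pos, hA]
    · rintro ⟨j, hj, h⟩
      rw [dif_pos (by omega)] at h
      simp only [A, Finset.mem_filter, Finset.mem_univ, true_and] at h
      simp only [E, Finset.mem_filter, Finset.mem_univ, true_and]
      exact ⟨h.1, _, h.2, by simp [tri]⟩
  rw [hE, Finset.card_biUnion]
  · apply Finset.sum_congr rfl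
    intro j hj
    rw [Finset.mem_Icc] at hj
    rw [dif_pos (by omega), card_A, card_B, card_marked _ _ (by omega)]
    rw [show j - 1 + 1 = j by omega]
  · intro a ha b hb hab
    rw [Finset.coe_Icc, Set.mem_Icc] at ha hb
    simp only [Function.onFun]
    rw [dif_pos (by omega), dif_pos (by omega), Finset.disjoint_left]
    intro w h1 h2
    simp only [A, Finset.mem_filter, Finset.mem_univ, true_and] at h1 h2
    have := h1.2.symm.trans h2.2
    simp [tri] at this
    omega

/-- reverse complement -/
def rc {m : ℕ} (w : Equiv.Perm (Fin (2 * m))) : Equiv.Perm (Fin (2 * m)) :=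
  Fin.revPerm * w * Fin.revPerm

lemma rc_apply {m : ℕ} (w : Equiv.Perm (Fin (2 * m))) (p : Fin (2 * m)) :
    rc w p = (w p.rev).rev := by simp [rc]

lemma rc_rc {m : ℕ} (w : Equiv.Perm (Fin (2 * m))) : rc (rc w) = w := by
  ext1 p; simp [rc_apply]

lemma rc_updown {m : ℕ} (w : Equiv.Perm (Fin (2 * m))) (h : UpDown w) : UpDown (rc w) := by
  intro i hi
  have := h (2 * m - 2 - i) (by omega)
  have e1 : (⟨i, Nat.lt_of_succ_lt hi⟩ : Fin (2 * m)).rev = ⟨2 * m - 2 - i + 1, by omega⟩ := by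
    ext; simp [Fin.rev]; omega
  have e2 : (⟨i + 1, hi⟩ : Fin (2 * m)).rev = ⟨2 * m - 2 - i, by omega⟩ := by
    ext; simp [Fin.rev]; omega
  simp only [rc_apply, e1, e2, Fin.rev_lt_rev]
  rwa [show (2 * m - 2 - i) % 2 = i % 2 by omega] at this

lemma rc_occ {m : ℕ} (w : Equiv.Perm (Fin (2 * m))) (p q r : Fin (2 * m)) :
    (p, q, r) ∈ occ321 (rc w) ↔ (r.rev, q.rev, p.rev) ∈ occ321 w := by
  simp only [occ321, Set.mem_ofPred_eq, rc_apply, Fin.rev_lt_rev]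
  tauto

lemma rc_sing {m : ℕ} (e : ℕ) (he : e < 2) (w : Equiv.Perm (Fin (2 * m))) (h : Sing e w) :
    Sing (1 - e) (rc w) := by
  obtain ⟨hU, ⟨x, y, z⟩, ht, hy⟩ := h
  refine ⟨rc_updown w hU, (z.rev, y.rev, x.rev), ?_, ?_⟩
  · ext ⟨p, q, r⟩
    rw [rc_occ, ht]
    simp only [Set.mem_singleton_iff, Prod.mk.injEq, Fin.rev_eq_iff]
    tauto
  · simp only [Fin.val_rev] at hy ⊢
    have := y.isLt
    omega

lemma card_E1 (m : ℕ) : (E m 1).card = (E m 0).card := by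
  refine Finset.card_bij' (fun w _ => rc w) (fun w _ => rc w) ?_ ?_
    (fun w _ => rc_rc w) (fun w _ => rc_rc w)
  · intro w hw
    simp only [E, Finset.mem_filter, Finset.mem_univ, true_and] at hw ⊢
    exact rc_sing 1 (by omega) w hw
  · intro w hw
    simp only [E, Finset.mem_filter, Finset.mem_univ, true_and] at hw ⊢
    exact rc_sing 0 (by omega) w hw

lemma card_all (m : ℕ) :
    Nat.card {w : Equiv.Perm (Fin (2 * m)) // UpDown w ∧ (occ321 w).ncard = 1}
      = (E m 0).card + (E m 1).card := by
  classical
  rw [← Finset.card_union_of_disjoint, Nat.card_eq_fintype_card, Fintype.card_subtype]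
  · congr 1
    ext w
    simp only [E, Finset.mem_filter, Finset.mem_univ, true_and, Finset.mem_union, Sing,
      Set.ncard_eq_one]
    constructor
    · rintro ⟨hU, t, ht⟩
      rcases Nat.mod_two_eq_zero_or_one t.2.1.val with h | h
      · exact Or.inl ⟨hU, t, ht, h⟩
      · exact Or.inr ⟨hU, t, ht, h⟩
    · rintro (⟨hU, t, ht, _⟩ | ⟨hU, t, ht, _⟩) <;> exact ⟨hU, t, ht⟩
  · rw [Finset.disjoint_left]
    intro w h1 h2
    simp only [E, Finset.mem_filter, Finset.mem_univ, true_and] at h1 h2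
    obtain ⟨_, t, ht, h⟩ := h1
    obtain ⟨_, s, hs, h'⟩ := h2
    rw [ht, Set.singleton_eq_singleton_iff] at hs
    subst hs
    omega

end S13

theorem stmt13 (m : ℕ) (hm : 2 ≤ m) :
    Nat.card {w : Equiv.Perm (Fin (2 * m)) // UpDown w ∧ (occ321 w).ncard = 1} *
        (Nat.factorial (m + 1) * Nat.factorial (m + 4)) =
      4 * (m - 2) * Nat.factorial (2 * m + 3) := by
  apply S13.final m hm
  rw [S13.card_all, S13.card_E1, ← S13.sum_catalan m hm, S13.card_E0 m hm]
  push_cast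
  ring
end

section
/- For every m ≥ 1, the number of alternating (up-down) permutations of length 2m+1 containing the pattern 321 exactly once is 3(3m+4)(m-1)(2m+2)! / ((m+1)!(m+4)!). -/
open Finset

/-- Append a new last value `v` to `w`, shifting larger values up. -/
def insP {n : ℕ} (v : Fin (n + 1)) (w : Equiv.Perm (Fin n)) : Equiv.Perm (Fin (n + 1)) :=
  (finSuccEquiv' (Fin.last n)).trans ((Equiv.optionCongr w).trans (finSuccEquiv' v).symm)

lemma insP_last {n : ℕ} (v : Fin (n + 1)) (w : Equiv.Perm (Fin n)) :
    insP v w (Fin.last n) = v := by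
  simp [insP]

lemma insP_castSucc {n : ℕ} (v : Fin (n + 1)) (w : Equiv.Perm (Fin n)) (i : Fin n) :
    insP v w i.castSucc = v.succAbove (w i) := by
  have : finSuccEquiv' (Fin.last n) i.castSucc = some i := by
    rw [← Fin.succAbove_last]; exact finSuccEquiv'_succAbove _ _
  simp [insP, this]

lemma insP_bij (n : ℕ) : Function.Bijective
    (fun x : Equiv.Perm (Fin n) × Fin (n + 1) => insP x.2 x.1) := by
  rw [Fintype.bijective_iff_injective_and_card]
  constructor
  · rintro ⟨w, v⟩ ⟨w', v'⟩ h
    simp only at h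
    have h1 : v = v' := by
      have := congrArg (fun e => e (Fin.last n)) h
      simpa [insP_last] using this
    subst h1
    have h2 : w = w' := by
      ext i
      have := congrArg (fun e => e i.castSucc) h
      simp only [insP_castSucc] at this
      rw [Fin.succAbove_right_injective this]
    rw [h2]
  · simp [Fintype.card_perm, Nat.factorial_succ, mul_comm]

lemma sum_insP {n : ℕ} (f : Equiv.Perm (Fin (n + 1)) → ℕ) :
    ∑ w, f w = ∑ r : Equiv.Perm (Fin n), ∑ v : Fin (n + 1), f (insP v r) := by
  rw [← Fintype.sum_prod_type']
  exact ((Equiv.ofBijective _ (insP_bij n)).sum_comp f).symm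

lemma sum_insP2 {n : ℕ} (f : Equiv.Perm (Fin (n + 2)) → ℕ) :
    ∑ w, f w = ∑ r : Equiv.Perm (Fin n), ∑ p : Fin (n + 1), ∑ q : Fin (n + 2),
      f (insP q (insP p r)) := by
  rw [sum_insP, sum_insP]

/-- Number of 321 patterns created by appending the value `v`. -/
def JJ {n : ℕ} (w : Equiv.Perm (Fin n)) (v : ℕ) : ℕ :=
  ∑ i, ∑ j, if i < j ∧ w j < w i ∧ v ≤ (w j).val then 1 else 0

/-- Number of 321 patterns. -/
def OO {n : ℕ} (w : Equiv.Perm (Fin n)) : ℕ :=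
  ∑ i, ∑ j, ∑ k, if i < j ∧ j < k ∧ w k < w j ∧ w j < w i then 1 else 0

lemma OO_eq {n : ℕ} (w : Equiv.Perm (Fin n)) : (occ321 w).ncard = OO w := by
  classical
  have : occ321 w = ((univ.filter fun t : Fin n × Fin n × Fin n =>
      t.1 < t.2.1 ∧ t.2.1 < t.2.2 ∧ w t.2.2 < w t.2.1 ∧ w t.2.1 < w t.1 : Finset _) : Set _) := by
    ext t; simp [occ321]
  rw [this, Set.ncard_coe_finset, card_filter, OO, Fintype.sum_prod_type]
  simp only [Fintype.sum_prod_type]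

lemma sAval {n : ℕ} (q : Fin (n + 1)) (x : Fin n) :
    (q.succAbove x).val = if x.val < q.val then x.val else x.val + 1 := by
  simp only [Fin.succAbove, Fin.lt_def, Fin.val_castSucc]
  split_ifs <;> simp

lemma sum_ge {n : ℕ} (q : ℕ) (w : Equiv.Perm (Fin n)) :
    ∑ i, (if q ≤ (w i).val then 1 else 0) = n - q := by
  rw [Equiv.sum_comp w (fun x : Fin n => if q ≤ x.val then 1 else 0),
    Fin.sum_univ_eq_sum_range (fun x => if q ≤ x then 1 else 0) n]
  induction n with
  | zero => simp
  | succ n ih => rw [sum_range_succ, ih (Equiv.refl _)]; split_ifs <;> omega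

lemma OO_ins {n : ℕ} (q : Fin (n + 1)) (w : Equiv.Perm (Fin n)) :
    OO (insP q w) = OO w + JJ w q := by
  have h1 : ∀ x : Fin n, (q < q.succAbove x) ↔ q.val ≤ x.val := by
    intro x; rw [Fin.lt_def, sAval]; split_ifs <;> omega
  simp only [OO, JJ, Fin.sum_univ_castSucc, insP_castSucc, insP_last, Fin.castSucc_lt_castSucc_iff,
    Fin.succAbove_lt_succAbove_iff, Fin.castSucc_lt_last, h1]
  have h2 : ∀ x : Fin n, ¬ (Fin.last n < x.castSucc) := fun x => not_lt.2 (Fin.le_last _)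
  simp only [h2, lt_irrefl, false_and, and_false, if_false, sum_const_zero, add_zero, true_and,
    sum_add_distrib]
  congr 1
  refine sum_congr rfl fun i _ => sum_congr rfl fun j _ => ?_
  congr 1
  exact propext (by tauto)

lemma JJ_ins {n : ℕ} (q : Fin (n + 1)) (w : Equiv.Perm (Fin n)) (v : ℕ) :
    JJ (insP q w) v = if v ≤ q.val then JJ w v + (n - q) else JJ w (v - 1) := by
  have h1 : ∀ x : Fin n, (q < q.succAbove x) ↔ q.val ≤ x.val := by
    intro x; rw [Fin.lt_def, sAval]; split_ifs <;> omega
  have h2 : ∀ x : Fin n, ¬ (Fin.last n < x.castSucc) := fun x => not_lt.2 (Fin.le_last _)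
  simp only [JJ, Fin.sum_univ_castSucc, insP_castSucc, insP_last, Fin.castSucc_lt_castSucc_iff,
    Fin.succAbove_lt_succAbove_iff, Fin.castSucc_lt_last, h1, h2, lt_irrefl, false_and, if_false,
    sum_const_zero, add_zero, true_and, sum_add_distrib]
  split_ifs with h
  · simp only [h, and_true, sum_ge]
    congr 1
    refine sum_congr rfl fun i _ => sum_congr rfl fun j _ => ?_
    have : v ≤ (q.succAbove (w j)).val ↔ v ≤ (w j).val := by
      rw [sAval]; split_ifs <;> omega
    simp only [this]
  · simp only [h, and_false, if_false, sum_const_zero, add_zero]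
    refine sum_congr rfl fun i _ => sum_congr rfl fun j _ => ?_
    have : v ≤ (q.succAbove (w j)).val ↔ v - 1 ≤ (w j).val := by
      rw [sAval]; split_ifs <;> omega
    simp only [this]

lemma JJ_anti {n : ℕ} (w : Equiv.Perm (Fin n)) {a b : ℕ} (h : a ≤ b) : JJ w b ≤ JJ w a := by
  unfold JJ
  refine sum_le_sum fun i _ => sum_le_sum fun j _ => ?_
  split_ifs <;> omega

lemma JJ_top {n : ℕ} (w : Equiv.Perm (Fin n)) {a : ℕ} (h : n ≤ a) : JJ w a = 0 := by
  unfold JJ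
  refine sum_eq_zero fun i _ => sum_eq_zero fun j _ => ?_
  rw [if_neg]
  have := (w j).isLt
  omega

/-- Lowest site that creates no 321. -/
noncomputable def TT {n : ℕ} (w : Equiv.Perm (Fin n)) : ℕ := sInf {v | JJ w v = 0}

lemma JJ_zero_iff {n : ℕ} (w : Equiv.Perm (Fin n)) (v : ℕ) : JJ w v = 0 ↔ TT w ≤ v := by
  constructor
  · intro h; exact Nat.sInf_le h
  · intro h
    have : JJ w (TT w) = 0 := Nat.sInf_mem (s := {v | JJ w v = 0}) ⟨n, JJ_top w le_rfl⟩
    have := JJ_anti w h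
    omega

lemma TT_le {n : ℕ} (w : Equiv.Perm (Fin n)) : TT w ≤ n := by
  rw [← JJ_zero_iff]; exact JJ_top w le_rfl

lemma TT_unique {n : ℕ} (w : Equiv.Perm (Fin n)) (s : ℕ) (h : ∀ v, JJ w v = 0 ↔ s ≤ v) :
    TT w = s := by
  apply le_antisymm
  · rw [← JJ_zero_iff, h]
  · rw [← h, JJ_zero_iff]

/-- Number of elements above the largest inversion bottom. -/
noncomputable def HH {n : ℕ} (w : Equiv.Perm (Fin n)) : ℕ := n - TT w

lemma UpDown_ins {n : ℕ} (q : Fin (n + 2)) (w : Equiv.Perm (Fin (n + 1))) :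
    UpDown (insP q w) ↔ UpDown w ∧
      (if n % 2 = 0 then (w (Fin.last n)).val < q.val else q.val ≤ (w (Fin.last n)).val) := by
  have e1 : ∀ i (h : i < n + 1), insP q w ⟨i, Nat.lt_succ_of_lt h⟩ = q.succAbove (w ⟨i, h⟩) :=
    fun i h => insP_castSucc q w ⟨i, h⟩
  have e2 : ∀ h : n + 1 < n + 2, insP q w ⟨n + 1, h⟩ = q := fun h => insP_last q w
  have e3 : ∀ h : n < n + 1, (⟨n, h⟩ : Fin (n + 1)) = Fin.last n := fun h => rfl
  have key : ∀ h : n + 1 < n + 2, (if n % 2 = 0 then insP q w ⟨n, Nat.lt_of_succ_lt h⟩ < insP q w ⟨n + 1, h⟩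
    else insP q w ⟨n + 1, h⟩ < insP q w ⟨n, Nat.lt_of_succ_lt h⟩) ↔
      (if n % 2 = 0 then (w (Fin.last n)).val < q.val else q.val ≤ (w (Fin.last n)).val) := by
    intro h
    rw [e1 n (by omega), e2, e3, Fin.lt_def, Fin.lt_def, sAval]
    split_ifs <;> omega
  constructor
  · intro h
    refine ⟨fun i hi => ?_, (key (by omega)).1 (h n (by omega))⟩
    have := h i (by omega)
    rw [e1 i (by omega), e1 (i + 1) hi] at this
    simpa only [Fin.succAbove_lt_succAbove_iff] using this
  · rintro ⟨h, h'⟩ i hi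
    rcases Nat.lt_or_ge i n with hin | hin
    · rw [e1 i (by omega), e1 (i + 1) (by omega)]
      simpa only [Fin.succAbove_lt_succAbove_iff] using h i (by omega)
    · obtain rfl : i = n := by omega
      exact (key hi).2 h'

lemma UpDown_ins2 {n : ℕ} (hn : n % 2 = 0) (p : Fin (n + 2)) (q : Fin (n + 3))
    (w : Equiv.Perm (Fin (n + 1))) :
    UpDown (insP q (insP p w)) ↔ UpDown w ∧ (w (Fin.last n)).val < p.val ∧ q.val ≤ p.val := by
  rw [UpDown_ins, UpDown_ins, if_pos hn, if_neg (by omega), insP_last, and_assoc]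

lemma OO_ins2 {n : ℕ} (p : Fin (n + 2)) (q : Fin (n + 3))
    (w : Equiv.Perm (Fin (n + 1))) (h : q.val ≤ p.val) :
    OO (insP q (insP p w)) = OO w + JJ w p + (JJ w q + (n + 1 - p.val)) := by
  rw [OO_ins, OO_ins, JJ_ins, if_pos h]

/-- Append the maximum, then `q`. -/
def ext2 {n : ℕ} (w : Equiv.Perm (Fin (n + 1))) (q : Fin (n + 2)) : Equiv.Perm (Fin (n + 3)) :=
  insP q.castSucc (insP (Fin.last (n + 1)) w)

lemma JJ_ext2 {n : ℕ} (w : Equiv.Perm (Fin (n + 1))) (q : Fin (n + 2)) (v : ℕ) :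
    JJ (ext2 w q) v = if v ≤ q.val then JJ w v + (n + 2 - q.val) else JJ w (v - 1) := by
  have := q.isLt
  rw [ext2, JJ_ins, JJ_ins, JJ_ins]
  simp only [Fin.val_castSucc, Fin.val_last]
  split_ifs
  · omega
  · omega
  · omega
  · rw [JJ_top w (by omega), JJ_top w (by omega)]

lemma TT_ext2 {n : ℕ} (w : Equiv.Perm (Fin (n + 1))) (q : Fin (n + 2)) (h : JJ w q = 0) :
    TT (ext2 w q) = q + 1 := by
  apply TT_unique
  intro v
  have := q.isLt
  rw [JJ_ext2]
  split_ifs with hv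
  · omega
  · have := JJ_anti w (show q.val ≤ v - 1 by omega)
    omega

lemma TT_ext2' {n : ℕ} (w : Equiv.Perm (Fin (n + 1))) (q : Fin (n + 2)) (h : JJ w q ≠ 0) :
    TT (ext2 w q) = TT w + 1 := by
  apply TT_unique
  intro v
  have := q.isLt
  rw [JJ_ext2]
  rw [Ne, JJ_zero_iff] at h
  split_ifs with hv
  · omega
  · rw [JJ_zero_iff]; omega

lemma TT_type1 {n : ℕ} (w : Equiv.Perm (Fin (n + 1))) (q : Fin (n + 3)) (h : JJ w q = 0)
    (hq : q.val ≤ n) :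
    TT (insP q (insP (Fin.last n).castSucc w)) = n + 2 := by
  apply TT_unique
  intro v
  rw [JJ_ins, JJ_ins, JJ_ins]
  simp only [Fin.val_castSucc, Fin.val_last]
  split_ifs
  · omega
  · omega
  · omega
  · have := JJ_anti w (show q.val ≤ v - 1 - 1 by omega)
    omega

open Classical in
lemma Astep {n : ℕ} (hn : n % 2 = 0) (Ψ : Equiv.Perm (Fin (n + 3)) → ℕ) :
    ∑ w, (if UpDown w ∧ OO w = 0 then Ψ w else 0) =
    ∑ r : Equiv.Perm (Fin (n + 1)), if UpDown r ∧ OO r = 0 then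
      ∑ q : Fin (n + 2), (if JJ r q = 0 then Ψ (ext2 r q) else 0) else 0 := by
  rw [sum_insP2]
  refine sum_congr rfl fun r _ => ?_
  have hl := (r (Fin.last n)).isLt
  rw [Fin.sum_univ_castSucc, sum_eq_zero, zero_add, Fin.sum_univ_castSucc]
  · rw [if_neg (by rw [UpDown_ins2 hn]; simp), add_zero]
    by_cases h : UpDown r ∧ OO r = 0
    · rw [if_pos h]
      refine sum_congr rfl fun q _ => ?_
      have hq := q.isLt
      refine if_congr ?_ rfl rfl
      rw [UpDown_ins2 hn]
      rw [OO_ins2 _ _ _ (by simp; omega)]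
      have := JJ_top r (show n + 1 ≤ n + 1 by omega)
      simp only [Fin.val_castSucc, Fin.val_last, h.1, h.2, this, true_and]
      omega
    · rw [if_neg h]
      refine sum_eq_zero fun q _ => ?_
      have hq := q.isLt
      rw [if_neg]
      rw [UpDown_ins2 hn]
      rw [OO_ins2 _ _ _ (by simp; omega)]
      intro h'
      exact h ⟨h'.1.1, by omega⟩
  · intro p _
    refine sum_eq_zero fun q _ => ?_
    rw [if_neg]
    rw [UpDown_ins2 hn]
    rintro ⟨⟨h1, h2, h3⟩, h4⟩
    rw [OO_ins2 _ _ _ h3] at h4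
    have := p.isLt
    simp only [Fin.val_castSucc] at h4
    omega

open Classical in
lemma Estep {n : ℕ} (hn : n % 2 = 0) (φ : ℕ → ℕ) :
    ∑ w : Equiv.Perm (Fin (n + 3)), (if UpDown w ∧ OO w = 1 then φ (HH w) else 0) =
    (∑ r : Equiv.Perm (Fin (n + 1)), if UpDown r ∧ OO r = 1 then
      ∑ q : Fin (n + 2), (if JJ r q = 0 then φ (HH (ext2 r q)) else 0) else 0) +
    ∑ r : Equiv.Perm (Fin (n + 1)), if UpDown r ∧ OO r = 0 then
      ((if (r (Fin.last n)).val < n then HH r * φ 1 else 0) +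
        ∑ q : Fin (n + 2), (if JJ r q = 1 then φ (HH r + 1) else 0)) else 0 := by
  rw [sum_insP2, ← sum_add_distrib]
  refine sum_congr rfl fun r _ => ?_
  have hl := (r (Fin.last n)).isLt
  have htop := JJ_top r (show n + 1 ≤ n + 1 by omega)
  rw [Fin.sum_univ_castSucc, Fin.sum_univ_castSucc, sum_eq_zero, zero_add]
  · -- the two values of p
    have hlast : ∑ q : Fin (n + 3), (if UpDown (insP q (insP (Fin.last (n + 1)) r)) ∧
        OO (insP q (insP (Fin.last (n + 1)) r)) = 1 then
          φ (HH (insP q (insP (Fin.last (n + 1)) r))) else 0) =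
        ∑ q : Fin (n + 2), (if UpDown r ∧ OO r + JJ r q = 1 then φ (HH (ext2 r q)) else 0) := by
      rw [Fin.sum_univ_castSucc, if_neg (by rw [UpDown_ins2 hn]; simp), add_zero]
      refine sum_congr rfl fun q _ => ?_
      have hq := q.isLt
      refine if_congr ?_ rfl rfl
      rw [UpDown_ins2 hn]
      rw [OO_ins2 _ _ _ (by simp; omega)]
      simp only [Fin.val_castSucc, Fin.val_last, htop]
      refine ⟨fun h => ⟨h.1.1, by omega⟩, fun h => ⟨⟨h.1, by omega, by omega⟩, by omega⟩⟩
    rw [hlast]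
    by_cases hU : UpDown r
    swap
    · simp only [hU, false_and, if_false, sum_const_zero, add_zero]
      refine sum_eq_zero fun q _ => ?_
      rw [if_neg]
      rw [UpDown_ins2 hn]
      tauto
    simp only [hU, true_and]
    have hsec : ∑ q : Fin (n + 3), (if UpDown (insP q (insP (Fin.last n).castSucc r)) ∧
        OO (insP q (insP (Fin.last n).castSucc r)) = 1 then
          φ (HH (insP q (insP (Fin.last n).castSucc r))) else 0) =
        ∑ q ∈ range (n + 3), (if OO r = 0 ∧ (r (Fin.last n)).val < n ∧ TT r ≤ q ∧ q ≤ n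
          then φ 1 else 0) := by
      rw [← Fin.sum_univ_eq_sum_range (fun q => (if OO r = 0 ∧ (r (Fin.last n)).val < n ∧ TT r ≤ q ∧ q ≤ n
          then φ 1 else 0)) (n + 3)]
      refine sum_congr rfl fun q _ => ?_
      by_cases hq : q.val ≤ n
      · rw [UpDown_ins2 hn, OO_ins2 _ _ _ (by simpa using hq)]
        simp only [Fin.val_castSucc, Fin.val_last, hU, true_and, hq, and_true]
        have hm := JJ_anti r hq
        by_cases h0 : JJ r q = 0
        · rw [HH, TT_type1 r q h0 hq]
          simp only [← JJ_zero_iff]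
          refine if_congr ?_ (by congr 1; omega) rfl
          omega
        · rw [if_neg (by omega), if_neg (by rw [← JJ_zero_iff]; omega)]
      · rw [if_neg, if_neg (by omega)]
        rw [UpDown_ins2 hn]
        simp only [Fin.val_castSucc, Fin.val_last]
        omega
    rw [hsec]
    by_cases h0 : OO r = 0
    · simp only [h0, true_and, zero_add, if_true]
      rw [if_neg (by omega), zero_add]
      congr 1
      · split_ifs with hh
        · simp only [hh, true_and]
          rw [← sum_filter, sum_const, smul_eq_mul]
          congr 1
          have : (range (n + 3)).filter (fun q => TT r ≤ q ∧ q ≤ n) = Finset.Ico (TT r) (n + 1) := by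
            ext x; simp; omega
          rw [this, Nat.card_Ico, HH]
        · simp [hh]
      · refine sum_congr rfl fun q _ => ?_
        split_ifs with hJ
        · have := TT_le r
          rw [HH, TT_ext2' r q (by omega), HH]
          congr 1
          omega
        · rfl
    · simp only [h0, false_and, if_false, sum_const_zero, add_zero, zero_add]
      by_cases h1 : OO r = 1
      · rw [if_pos h1, h1]
        refine sum_congr rfl fun q _ => if_congr (by omega) rfl rfl
      · rw [if_neg h1]
        refine sum_eq_zero fun q _ => if_neg (by omega)
  · intro p _
    refine sum_eq_zero fun q _ => ?_
    rw [if_neg]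
    rw [UpDown_ins2 hn]
    rintro ⟨⟨h1, h2, h3⟩, h4⟩
    rw [OO_ins2 _ _ _ h3] at h4
    have := p.isLt
    simp only [Fin.val_castSucc] at h4
    omega

/-- The transfer operator. -/
def LL (φ : ℕ → ℕ) (h : ℕ) : ℕ := ∑ i ∈ range (h + 1), φ (i + 1)

lemma sum_ext2 {n : ℕ} (r : Equiv.Perm (Fin (n + 1))) (φ : ℕ → ℕ) :
    ∑ q : Fin (n + 2), (if JJ r q = 0 then φ (HH (ext2 r q)) else 0) = LL φ (HH r) := by
  have h1 : ∀ q : Fin (n + 2), (if JJ r q = 0 then φ (HH (ext2 r q)) else 0) =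
      if TT r ≤ q.val then φ (n + 2 - q.val) else 0 := by
    intro q
    simp only [← JJ_zero_iff]
    split_ifs with h
    · rw [HH, TT_ext2 r q h]; congr 1; omega
    · rfl
  simp only [h1]
  rw [Fin.sum_univ_eq_sum_range (fun q => if TT r ≤ q then φ (n + 2 - q) else 0) (n + 2),
    ← sum_range_reflect, LL, ← sum_subset (s₁ := range (HH r + 1))]
  · refine sum_congr rfl fun i hi => ?_
    have := TT_le r
    rw [HH, mem_range] at hi
    rw [if_pos (by omega)]
    congr 1; omega
  · intro i hi
    have := TT_le r
    rw [HH, mem_range] at hi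
    rw [mem_range]; omega
  · intro i hi hi'
    have := TT_le r
    rw [HH, mem_range] at hi'
    rw [mem_range] at hi
    rw [if_neg (by omega)]

open Classical in
/-- Weighted count of 321-avoiders. -/
noncomputable def cA (m : ℕ) (φ : ℕ → ℕ) : ℕ :=
  ∑ w : Equiv.Perm (Fin (2 * m + 1)), if UpDown w ∧ OO w = 0 then φ (HH w) else 0

open Classical in
/-- Weighted count of permutations with one 321. -/
noncomputable def cE (m : ℕ) (φ : ℕ → ℕ) : ℕ :=
  ∑ w : Equiv.Perm (Fin (2 * m + 1)), if UpDown w ∧ OO w = 1 then φ (HH w) else 0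

lemma cA_succ (m : ℕ) (φ : ℕ → ℕ) : cA (m + 1) φ = cA m (LL φ) := by
  have := Astep (n := 2 * m) (by omega) (fun w => φ (HH w))
  simp only [sum_ext2] at this
  exact this

lemma ext2_last {n : ℕ} (r : Equiv.Perm (Fin (n + 1))) (q : Fin (n + 2)) :
    (ext2 r q (Fin.last (n + 2))).val = q.val := by
  rw [ext2, insP_last]; rfl

lemma sum_type2 {n : ℕ} (r : Equiv.Perm (Fin (n + 1))) (φ : ℕ → ℕ) :
    ∑ q : Fin (n + 2), (if JJ r q = 0 then
      ∑ q' : Fin (n + 4), (if JJ (ext2 r q) q' = 1 then φ (HH (ext2 r q) + 1) else 0) else 0) =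
    (HH r + 1) * φ 2 := by
  have ht := TT_le r
  rw [Fin.sum_univ_castSucc, sum_eq_zero, zero_add]
  · have h0 : JJ r (Fin.last (n + 1)).val = 0 := JJ_top r (by simp)
    rw [if_pos h0, HH, TT_ext2 r _ h0]
    have h1 : ∀ q' : Fin (n + 4), (if JJ (ext2 r (Fin.last (n + 1))) q' = 1 then
        φ (n + 3 - ((Fin.last (n + 1)).val + 1) + 1) else 0) =
        (if TT r ≤ q'.val ∧ q'.val ≤ n + 1 then φ 2 else 0) := by
      intro q'
      refine if_congr ?_ (by congr 1; simp) rfl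
      rw [JJ_ext2, ← JJ_zero_iff]
      simp only [Fin.val_last]
      split_ifs with h
      · omega
      · rw [JJ_top r (by omega)]; omega
    simp only [h1]
    rw [Fin.sum_univ_eq_sum_range (fun q => if TT r ≤ q ∧ q ≤ n + 1 then φ 2 else 0) (n + 4),
      ← sum_filter, sum_const, smul_eq_mul]
    congr 1
    have : (range (n + 4)).filter (fun q => TT r ≤ q ∧ q ≤ n + 1) = Finset.Ico (TT r) (n + 2) := by
      ext x; simp; omega
    rw [this, Nat.card_Ico, HH]; omega
  · intro q _
    split_ifs with h
    · refine sum_eq_zero fun q' _ => if_neg ?_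
      rw [JJ_ext2]
      have := q.isLt
      simp only [Fin.val_castSucc] at h ⊢
      split_ifs with h'
      · omega
      · have := JJ_anti r (show q.val ≤ q'.val - 1 by omega)
        omega
    · rfl

lemma cE_succ (m : ℕ) (φ : ℕ → ℕ) :
    cE (m + 2) φ = cE (m + 1) (LL φ) + (cA (m + 1) (fun h => h * φ 1) +
      cA m (fun h => (h + 1) * φ 2)) := by
  classical
  have := Estep (n := 2 * m + 2) (by omega) φ
  simp only [sum_ext2] at this
  refine this.trans (congrArg₂ (· + ·) rfl ?_)
  refine (Astep (n := 2 * m) (by omega) _).trans ?_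
  rw [cA_succ, cA, cA, ← sum_add_distrib]
  refine sum_congr rfl fun r _ => ?_
  split_ifs with hr
  · rw [← sum_type2, ← sum_ext2, ← sum_add_distrib]
    refine sum_congr rfl fun q _ => ?_
    by_cases h : JJ r q = 0
    · rw [if_pos h, if_pos h, if_pos h, if_pos (by rw [ext2_last]; omega)]
    · rw [if_neg h, if_neg h, if_neg h]
  · rfl

lemma OO_one (r : Equiv.Perm (Fin 1)) : OO r = 0 := by
  simp [OO]

lemma JJ_one (r : Equiv.Perm (Fin 1)) (v : ℕ) : JJ r v = 0 := by
  simp [JJ]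

lemma cA_zero (φ : ℕ → ℕ) : cA 0 φ = φ 1 := by
  have : ∀ w : Equiv.Perm (Fin 1), (UpDown w ∧ OO w = 0) ∧ HH w = 1 := by
    intro w
    refine ⟨⟨fun i h => by omega, OO_one w⟩, ?_⟩
    rw [HH, TT_unique w 0 (fun v => by simp [JJ_one])]
  unfold cA
  change ∑ w : Equiv.Perm (Fin 1), _ = _
  rw [Fintype.sum_unique, if_pos (this _).1, (this _).2]

lemma cE_one (φ : ℕ → ℕ) : cE 1 φ = 0 := by
  classical
  refine (Estep (n := 0) (by omega) φ).trans ?_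
  simp [OO_one, JJ_one]

/-- Iterates of the transfer operator on the constant one. -/
def SS : ℕ → ℕ → ℕ
  | 0 => fun _ => 1
  | k + 1 => LL (SS k)

lemma SS_zero (k : ℕ) : SS (k + 1) 0 = SS k 1 := by simp [SS, LL]

lemma SS_succ (k h : ℕ) : SS (k + 1) (h + 1) = SS (k + 1) h + SS k (h + 2) := by
  simp only [SS, LL]
  rw [sum_range_succ]

lemma SS_closed (k h : ℕ) :
    SS k h + (if k = 0 then 0 else (h + 2 * k).choose (k - 1)) = (h + 2 * k).choose k := by
  induction k generalizing h with
  | zero => simp [SS]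
  | succ k ih =>
    rw [if_neg (by omega), Nat.add_sub_cancel]
    induction h with
    | zero =>
      rw [SS_zero]
      have h1 := ih 1
      have e1 : (0 + 2 * (k + 1)) = (1 + 2 * k) + 1 := by ring
      rw [e1, Nat.choose_succ_succ]
      have e2 : (1 + 2 * k).choose (k + 1) = (1 + 2 * k).choose k := by
        have := Nat.choose_symm_half k
        rwa [add_comm] at this
      rw [e2]
      cases k with
      | zero => simp at h1 ⊢; omega
      | succ k =>
        rw [if_neg (by omega), Nat.add_sub_cancel] at h1
        rw [Nat.choose_succ_succ]
        simp only [Nat.succ_eq_add_one] at *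
        omega
    | succ h ihh =>
      rw [SS_succ]
      have h1 := ih (h + 2)
      have e1 : h + 1 + 2 * (k + 1) = (h + 2 * (k + 1)) + 1 := by ring
      have e2 : h + 2 + 2 * k = h + 2 * (k + 1) := by ring
      rw [e2] at h1
      rw [e1, Nat.choose_succ_succ]
      cases k with
      | zero => simp at h1 ihh ⊢; omega
      | succ k =>
        rw [if_neg (by omega), Nat.add_sub_cancel] at h1
        rw [Nat.choose_succ_succ _ k]
        simp only [Nat.succ_eq_add_one] at *
        omega

lemma SS_one (k : ℕ) : SS k 1 = catalan (k + 1) := by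
  have h1 := SS_closed (k + 1) 0
  rw [if_neg (by omega), Nat.add_sub_cancel, SS_zero, zero_add] at h1
  have h2 := succ_mul_catalan_eq_centralBinom (k + 1)
  rw [Nat.centralBinom] at h2
  have h3 := Nat.choose_succ_right_eq (2 * (k + 1)) k
  rw [show 2 * (k + 1) - k = k + 2 by omega] at h3
  have : (k + 2) * SS k 1 = (k + 2) * catalan (k + 1) := by
    nlinarith
  exact Nat.eq_of_mul_eq_mul_left (by omega) this

lemma SS_two (k : ℕ) : SS k 2 + catalan (k + 1) = catalan (k + 2) := by
  rw [← SS_one, ← SS_one, SS_succ, SS_zero, add_comm]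

lemma cA_SS (m k : ℕ) : cA m (SS k) = catalan (m + k + 1) := by
  induction m generalizing k with
  | zero => rw [cA_zero, SS_one, zero_add]
  | succ m ih => rw [cA_succ, show LL (SS k) = SS (k + 1) from rfl, ih]; congr 1; ring

lemma cA_add (m : ℕ) (φ ψ : ℕ → ℕ) : cA m (fun h => φ h + ψ h) = cA m φ + cA m ψ := by
  unfold cA
  rw [← sum_add_distrib]
  exact sum_congr rfl fun w _ => by split_ifs <;> simp

lemma cA_mul (m : ℕ) (φ : ℕ → ℕ) (c : ℕ) : cA m (fun h => φ h * c) = cA m φ * c := by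
  unfold cA
  rw [sum_mul]
  exact sum_congr rfl fun w _ => by split_ifs <;> simp

lemma SS1 : SS 1 = fun h => h + 1 := by
  funext h; simp [SS, LL]

lemma cA_b (m : ℕ) : cA m (fun h => h + 1) = catalan (m + 2) := by
  rw [← SS1, cA_SS]

lemma cA_a (m : ℕ) : cA m (fun h => h) + catalan (m + 1) = catalan (m + 2) := by
  rw [← cA_b, cA_add, show (fun _ : ℕ => 1) = SS 0 from rfl, cA_SS]

lemma cE_SS_succ (m i : ℕ) : (cE (m + 2) (SS i) : ℤ) = cE (m + 1) (SS (i + 1)) +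
    (((catalan (m + 3) : ℤ) - catalan (m + 2)) * catalan (i + 1) +
      catalan (m + 2) * ((catalan (i + 2) : ℤ) - catalan (i + 1))) := by
  rw [cE_succ, cA_mul, cA_mul, cA_b, SS_one, show LL (SS i) = SS (i + 1) from rfl]
  have h1 := SS_two i
  have h2 := cA_a (m + 1)
  rw [← h1]
  rw [show m + 3 = m + 1 + 2 by ring, ← h2]
  push_cast
  ring

lemma cE_SS (M i : ℕ) : (cE (M + 1) (SS i) : ℤ) = ∑ k ∈ range M,
    (((catalan (k + 3) : ℤ) - catalan (k + 2)) * catalan (i + (M - 1 - k) + 1) +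
      catalan (k + 2) * ((catalan (i + (M - 1 - k) + 2) : ℤ) - catalan (i + (M - 1 - k) + 1))) := by
  induction M generalizing i with
  | zero => simp [cE_one]
  | succ M ih =>
    rw [cE_SS_succ, ih, sum_range_succ]
    congr 1
    · refine sum_congr rfl fun k hk => ?_
      rw [mem_range] at hk
      rw [show i + 1 + (M - 1 - k) = i + (M + 1 - 1 - k) by omega]
    · simp

lemma cE_closed (M : ℕ) : (cE (M + 2) (SS 0) : ℤ) =
    2 * catalan (M + 5) - 6 * catalan (M + 4) + catalan (M + 3) := by
  have e1 := catalan_succ' (M + 4)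
  have e2 := catalan_succ' (M + 3)
  have e3 := e1
  rw [Nat.antidiagonal_succ, sum_cons, sum_map] at e1 e2 e3
  rw [Nat.antidiagonal_succ, sum_cons, sum_map] at e1 e2 e3
  rw [Nat.antidiagonal_succ', sum_cons, sum_map] at e1 e2 e3
  rw [Nat.antidiagonal_succ, sum_cons, sum_map] at e1
  rw [Nat.antidiagonal_succ', sum_cons, sum_map] at e3
  simp [catalan_two] at e1 e2 e3
  rw [cE_SS]
  have hs := Nat.sum_antidiagonal_eq_sum_range_succ (fun i j : ℕ =>
    (((catalan (i + 3) : ℤ) - catalan (i + 2)) * catalan (j + 1) +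
      catalan (i + 2) * ((catalan (j + 2) : ℤ) - catalan (j + 1)))) M
  simp only [Nat.add_sub_cancel, zero_add]
  rw [← Nat.succ_eq_add_one M, ← hs]
  simp only [sub_mul, mul_sub, sum_add_distrib, sum_sub_distrib]
  zify at e1 e2 e3
  simp only [add_assoc, Nat.reduceAdd] at e1 e2 e3 ⊢
  linarith

open Classical in
lemma card_eq (m : ℕ) :
    Nat.card {w : Equiv.Perm (Fin (2 * m + 1)) // UpDown w ∧ (occ321 w).ncard = 1} =
      cE m (SS 0) := by
  rw [Nat.card_eq_fintype_card, Fintype.card_subtype, card_filter]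
  simp only [OO_eq]
  rfl

lemma cat_rec (n : ℕ) : (n + 2) * catalan (n + 1) = 2 * (2 * n + 1) * catalan n := by
  have h1 := succ_mul_catalan_eq_centralBinom n
  have h2 := succ_mul_catalan_eq_centralBinom (n + 1)
  have h3 := Nat.succ_mul_centralBinom_succ n
  rw [← h1, ← h2] at h3
  have : (n + 1) * ((n + 2) * catalan (n + 1)) = (n + 1) * (2 * (2 * n + 1) * catalan n) := by
    linarith
  exact Nat.eq_of_mul_eq_mul_left (by omega) this

lemma cat_fact (n : ℕ) : catalan n * (n.factorial * (n + 1).factorial) = (2 * n).factorial := by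
  have h1 := succ_mul_catalan_eq_centralBinom n
  have h2 := Nat.choose_mul_factorial_mul_factorial (show n ≤ 2 * n by omega)
  rw [← Nat.centralBinom, ← h1, show 2 * n - n = n by omega] at h2
  rw [← h2, Nat.factorial_succ]
  ring

theorem stmt14 (m : ℕ) (hm : 1 ≤ m) :
    Nat.card {w : Equiv.Perm (Fin (2 * m + 1)) // UpDown w ∧ (occ321 w).ncard = 1} *
        (Nat.factorial (m + 1) * Nat.factorial (m + 4)) =
      3 * (3 * m + 4) * (m - 1) * Nat.factorial (2 * m + 2) := by
  rw [card_eq]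
  obtain ⟨m, rfl⟩ : ∃ k, m = k + 1 := ⟨m - 1, by omega⟩
  cases m with
  | zero => simp [cE_one]
  | succ M =>
    have h := cE_closed M
    have r1 := cat_rec (M + 3)
    have r2 := cat_rec (M + 4)
    have hf := cat_fact (M + 3)
    rw [show M + 1 + 1 - 1 = M + 1 by omega, show M + 1 + 1 = M + 2 by ring,
      show 2 * (M + 2) + 2 = 2 * (M + 3) by ring, ← hf,
      show M + 2 + 1 = M + 3 by ring, show M + 2 + 4 = M + 6 by ring,
      show (M + 6).factorial = (M + 6) * ((M + 5) * (M + 3 + 1).factorial) from rfl]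
    have key : (M + 6) * (M + 5) * cE (M + 2) (SS 0) =
        3 * (3 * (M + 2) + 4) * (M + 1) * catalan (M + 3) := by
      zify at r1 r2 ⊢
      rw [h]
      linear_combination (2 * (M + 5) : ℤ) * r2 + (8 * (M : ℤ) + 36 - 6 * (M + 6)) * r1
    calc _ = ((M + 6) * (M + 5) * cE (M + 2) (SS 0)) *
          ((M + 3).factorial * (M + 3 + 1).factorial) := by ring
      _ = _ := by rw [key]; ring
end

section
/- For every m ≥ 2, the number of alternating (up-down) permutations of length 2m containing the pattern 123 exactly once is 10·(2m)! / ((m-2)!(m+3)!). -/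
namespace S15
open Finset

/-- number of elements of `S` below `t` -/
def cc (S : Finset ℕ) (t : ℕ) : ℕ := (S.filter (fun x => x < t)).card

/-- `S` is the set of up-steps of a nonnegative path of length `N` ending at height `h` -/
def Good (N h : ℕ) (S : Finset ℕ) : Prop :=
  (∀ t ≤ N, t ≤ 2 * cc S t) ∧ 2 * S.card = N + h

/-- `t` is an up-step from height one to height two -/
def Mark (S : Finset ℕ) (t : ℕ) : Prop := t ∈ S ∧ 2 * cc S t = t + 1

noncomputable instance (N h : ℕ) : DecidablePred (Good N h) := fun _ => Classical.dec _

noncomputable instance (S : Finset ℕ) : DecidablePred (Mark S) := fun _ => Classical.dec _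

noncomputable def marks (N : ℕ) (S : Finset ℕ) : ℕ := ((range N).filter (Mark S)).card

noncomputable def F (N h : ℕ) : ℕ := ∑ S ∈ (range N).powerset, if Good N h S then 1 else 0

noncomputable def G (N h : ℕ) : ℕ := ∑ S ∈ (range N).powerset, if Good N h S then marks N S else 0

lemma cc_insert {S : Finset ℕ} {N t : ℕ} (ht : t ≤ N) : cc (insert N S) t = cc S t := by
  unfold cc
  rw [filter_insert, if_neg (by omega)]

lemma cc_full {S : Finset ℕ} {N t : ℕ} (hS : S ⊆ range N) (ht : N ≤ t) : cc S t = S.card := by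
  unfold cc
  rw [filter_true_of_mem]
  intro x hx
  have := mem_range.1 (hS hx)
  omega

lemma card_ins {S : Finset ℕ} {N : ℕ} (hS : S ⊆ range N) : (insert N S).card = S.card + 1 := by
  apply card_insert_of_notMem
  intro h
  simpa using hS h

lemma sub_ins {S : Finset ℕ} {N : ℕ} (hS : S ⊆ range N) : insert N S ⊆ range (N + 1) := by
  rw [range_add_one]
  exact insert_subset_insert _ hS

lemma good_succ {S : Finset ℕ} {N h : ℕ} (hS : S ⊆ range N) :
    Good (N + 1) h S ↔ Good N (h + 1) S := by
  unfold Good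
  constructor
  · rintro ⟨h1, h2⟩
    exact ⟨fun t ht => h1 t (by omega), by omega⟩
  · rintro ⟨h1, h2⟩
    refine ⟨fun t ht => ?_, by omega⟩
    rcases Nat.lt_or_ge N t with h3 | h3
    · rw [cc_full hS (by omega)]; omega
    · exact h1 t h3

lemma good_ins {S : Finset ℕ} {N h : ℕ} (hS : S ⊆ range N) :
    Good (N + 1) (h + 1) (insert N S) ↔ Good N h S := by
  unfold Good
  rw [card_ins hS]
  constructor
  · rintro ⟨h1, h2⟩
    refine ⟨fun t ht => ?_, by omega⟩
    have := h1 t (by omega)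
    rwa [cc_insert ht] at this
  · rintro ⟨h1, h2⟩
    refine ⟨fun t ht => ?_, by omega⟩
    rcases Nat.lt_or_ge N t with h3 | h3
    · rw [cc_full (sub_ins hS) (by omega), card_ins hS]; omega
    · rw [cc_insert h3]; exact h1 t h3

lemma good_ins_zero {S : Finset ℕ} {N : ℕ} (hS : S ⊆ range N) :
    ¬ Good (N + 1) 0 (insert N S) := by
  rintro ⟨h1, h2⟩
  have := h1 N (by omega)
  rw [cc_insert le_rfl, cc_full hS le_rfl] at this
  rw [card_ins hS] at h2
  omega

lemma marks_succ {S : Finset ℕ} {N : ℕ} (hS : S ⊆ range N) : marks (N + 1) S = marks N S := by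
  unfold marks
  rw [range_add_one, filter_insert, if_neg]
  rintro ⟨h, -⟩
  simpa using hS h

lemma marks_ins {S : Finset ℕ} {N : ℕ} (hS : S ⊆ range N) :
    marks (N + 1) (insert N S) = marks N S + if 2 * S.card = N + 1 then 1 else 0 := by
  unfold marks
  have e : (range N).filter (Mark (insert N S)) = (range N).filter (Mark S) := by
    apply filter_congr
    intro t ht
    have ht := mem_range.1 ht
    unfold Mark
    rw [cc_insert ht.le, mem_insert]
    constructor
    · rintro ⟨h1 | h1, h2⟩
      · omega
      · exact ⟨h1, h2⟩
    · rintro ⟨h1, h2⟩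
      exact ⟨Or.inr h1, h2⟩
  rw [range_add_one, filter_insert, e]
  have : Mark (insert N S) N ↔ 2 * S.card = N + 1 := by
    unfold Mark
    rw [cc_insert le_rfl, cc_full hS le_rfl]
    simp
  by_cases h : 2 * S.card = N + 1
  · rw [if_pos (this.2 h), if_pos h, card_insert_of_notMem (by simp)]
  · rw [if_neg (fun h' => h (this.1 h')), if_neg h, add_zero]

lemma F_zero_zero : F 0 0 = 1 := by
  simp [F, Good, cc]

lemma F_zero_succ (h : ℕ) : F 0 (h + 1) = 0 := by
  simp [F, Good, cc]

lemma G_zero (h : ℕ) : G 0 h = 0 := by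
  simp [G, marks]

lemma F_succ_zero (N : ℕ) : F (N + 1) 0 = F N 1 := by
  unfold F
  rw [range_add_one, sum_powerset_insert (by simp)]
  rw [sum_congr rfl (g := fun S => if Good N 1 S then 1 else 0), sum_eq_zero (s := (range N).powerset)
    (f := fun t => if Good (N + 1) 0 (insert N t) then 1 else 0), add_zero]
  · intro S hS
    rw [if_neg (good_ins_zero (mem_powerset.1 hS))]
  · intro S hS
    simp only [good_succ (mem_powerset.1 hS)]

lemma F_succ_succ (N h : ℕ) : F (N + 1) (h + 1) = F N (h + 2) + F N h := by
  unfold F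
  rw [range_add_one, sum_powerset_insert (by simp)]
  congr 1
  · apply sum_congr rfl
    intro S hS
    simp only [good_succ (mem_powerset.1 hS)]
  · apply sum_congr rfl
    intro S hS
    simp only [good_ins (mem_powerset.1 hS)]

lemma G_succ_zero (N : ℕ) : G (N + 1) 0 = G N 1 := by
  unfold G
  rw [range_add_one, sum_powerset_insert (by simp)]
  rw [sum_congr rfl (g := fun S => if Good N 1 S then marks N S else 0),
    sum_eq_zero (s := (range N).powerset)
    (f := fun t => if Good (N + 1) 0 (insert N t) then marks (N+1) (insert N t) else 0), add_zero]
  · intro S hS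
    rw [if_neg (good_ins_zero (mem_powerset.1 hS))]
  · intro S hS
    simp only [good_succ (mem_powerset.1 hS), marks_succ (mem_powerset.1 hS)]

lemma G_succ_succ (N h : ℕ) :
    G (N + 1) (h + 1) = G N (h + 2) + (G N h + if h = 1 then F N 1 else 0) := by
  have e : (if h = 1 then F N 1 else 0) =
      ∑ S ∈ (range N).powerset, if Good N h S then (if h = 1 then 1 else 0) else 0 := by
    by_cases h1 : h = 1
    · subst h1; simp [F]
    · simp [h1]
  rw [e]
  unfold G
  rw [range_add_one, sum_powerset_insert (by simp)]
  simp only [← sum_add_distrib]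
  apply sum_congr rfl
  intro S hS
  simp only [good_succ (mem_powerset.1 hS), marks_succ (mem_powerset.1 hS),
    good_ins (mem_powerset.1 hS), marks_ins (mem_powerset.1 hS)]
  congr 1
  by_cases hg : Good N h S
  · have := hg.2
    simp only [if_pos hg]
    congr 1
    simp only [this]
    congr 1
    simp
  · simp [hg]

lemma G_formula (N : ℕ) : G N 0 = F N 4 ∧ G N 1 = F N 3 + F N 5 ∧
    ∀ h, G N (h + 2) = F N (h + 2) + F N (h + 4) + F N (h + 6) := by
  induction N with
  | zero =>
    refine ⟨?_, ?_, fun h => ?_⟩ <;> simp only [G_zero, F_zero_succ]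
  | succ N ih =>
    obtain ⟨h0, h1, h2⟩ := ih
    refine ⟨?_, ?_, fun h => ?_⟩
    · rw [G_succ_zero, h1, F_succ_succ]; ring
    · rw [G_succ_succ, F_succ_succ, F_succ_succ, h0, h2 0]; simp; omega
    · rw [G_succ_succ, F_succ_succ, F_succ_succ, F_succ_succ, h2 (h + 1)]
      rcases h with _ | h
      · simp [h1]; omega
      · rw [if_neg (by omega), h2 h]; ring_nf

lemma F_big (N : ℕ) : ∀ h, N < h → F N h = 0 := by
  induction N with
  | zero => intro h hh; obtain ⟨h, rfl⟩ := Nat.exists_eq_succ_of_ne_zero hh.ne'; exact F_zero_succ h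
  | succ N ih =>
    intro h hh
    obtain ⟨h, rfl⟩ := Nat.exists_eq_succ_of_ne_zero (show h ≠ 0 by omega)
    rw [Nat.succ_eq_add_one, F_succ_succ, ih _ (by omega), ih _ (by omega)]

lemma F_formula (N : ℕ) : ∀ d h, N = 2 * d + h →
    F N h * (Nat.factorial d * Nat.factorial (d + h + 1)) = (h + 1) * Nat.factorial N := by
  induction N with
  | zero =>
    intro d h hN
    obtain rfl : d = 0 := by omega
    obtain rfl : h = 0 := by omega
    simp [F_zero_zero]
  | succ N ih =>
    intro d h hN
    rcases h with _ | h
    · obtain ⟨d, rfl⟩ := Nat.exists_eq_succ_of_ne_zero (show d ≠ 0 by omega)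
      have := ih d 1 (by omega)
      rw [F_succ_zero, Nat.factorial_succ d, Nat.factorial_succ N, show N + 1 = 2 * (d + 1) by omega]
      simp only [Nat.succ_eq_add_one] at *
      rw [show d + 1 + 0 + 1 = d + 1 + 1 by omega]
      calc _ = (d + 1) * (F N 1 * (d.factorial * (d + 1 + 1).factorial)) := by ring
        _ = _ := by rw [this]; ring
    · have h1 := ih d h (by omega)
      rw [F_succ_succ]
      rcases d with _ | d
      · rw [F_big N (h + 2) (by omega)]
        obtain rfl : N = h := by omega
        have hp := Nat.factorial_succ (0 + N + 1)
        rw [show 0 + (N + 1) + 1 = 0 + N + 1 + 1 by omega, hp, Nat.factorial_succ N]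
        calc _ = (0 + N + 1 + 1) * (F N N * (Nat.factorial 0 * (0 + N + 1).factorial)) := by ring
          _ = _ := by rw [h1]; ring
      · have h2 := ih d (h + 2) (by omega)
        rw [show d + (h + 2) + 1 = d + h + 3 by omega] at h2
        rw [show d + 1 + h + 1 = d + h + 2 by omega, Nat.factorial_succ d] at h1
        rw [show d + 1 + (h + 1) + 1 = d + h + 3 by omega, Nat.factorial_succ N, Nat.factorial_succ d]
        have hp := Nat.factorial_succ (d + h + 2)
        have hN' : N = 2 * d + h + 2 := by omega
        calc _ = (d + 1) * (F N (h + 2) * (d.factorial * (d + h + 3).factorial)) +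
              (d + h + 3) * (F N h * ((d + 1) * d.factorial * (d + h + 2).factorial)) := by
              rw [hp]; ring
          _ = _ := by rw [h1, h2, hN']; ring

lemma G_final (m : ℕ) (hm : 2 ≤ m) :
    G (2 * m) 0 * (Nat.factorial (m - 2) * Nat.factorial (m + 3)) = 5 * Nat.factorial (2 * m) := by
  have := F_formula (2 * m) (m - 2) 4 (by omega)
  rw [(G_formula _).1]
  rwa [show m - 2 + 4 + 1 = m + 3 by omega] at this

end S15

namespace S15
open Finset

/-- natural-number valued version of a permutation -/
def W {n : ℕ} (w : Equiv.Perm (Fin n)) (i : ℕ) : ℕ := if h : i < n then (w ⟨i, h⟩).val else 0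

lemma W_lt {n : ℕ} (w : Equiv.Perm (Fin n)) {i : ℕ} (h : i < n) : W w i < n := by
  rw [W, dif_pos h]; exact (w ⟨i, h⟩).2

lemma W_inj {n : ℕ} (w : Equiv.Perm (Fin n)) {i j : ℕ} (hi : i < n) (hj : j < n)
    (h : W w i = W w j) : i = j := by
  rw [W, W, dif_pos hi, dif_pos hj] at h
  have := w.injective (Fin.ext h)
  simpa using this

lemma W_surj {n : ℕ} (w : Equiv.Perm (Fin n)) {a : ℕ} (ha : a < n) : ∃ i < n, W w i = a := by
  refine ⟨(w.symm ⟨a, ha⟩).val, (w.symm ⟨a, ha⟩).2, ?_⟩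
  rw [W, dif_pos (w.symm ⟨a, ha⟩).2]
  simp

lemma W_ext {n : ℕ} {w w' : Equiv.Perm (Fin n)} (h : ∀ i < n, W w i = W w' i) : w = w' := by
  ext i
  have := h i i.2
  simpa [W] using this

/-- `a, b, c` is an occurrence of 123 -/
def Occ (n : ℕ) (f : ℕ → ℕ) (a b c : ℕ) : Prop := a < b ∧ b < c ∧ c < n ∧ f a < f b ∧ f b < f c

def Alt (m : ℕ) (f : ℕ → ℕ) : Prop :=
  (∀ i < m, f (2 * i) < f (2 * i + 1)) ∧ (∀ i, i + 1 < m → f (2 * i + 2) < f (2 * i + 1))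

def One (m k : ℕ) (f : ℕ → ℕ) : Prop :=
  Alt m f ∧ ∀ a b c, Occ (2 * m) f a b c ↔ a = 2 * k ∧ b = 2 * k + 1 ∧ c = 2 * k + 3

/-- adjacent transposition -/
def tau (k i : ℕ) : ℕ := if i = k then k + 1 else if i = k + 1 then k else i

structure K (m k : ℕ) (f : ℕ → ℕ) : Prop where
  hk : k + 1 < m
  v : ∀ i, i + 1 < m → f (2 * (i + 1)) < f (2 * i)
  p : ∀ i, i + 1 < m → f (2 * tau k (i + 1) + 1) < f (2 * tau k i + 1)
  vp : ∀ i < m, f (2 * i) < f (2 * tau k i + 1)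
  m1 : f (2 * k) < f (2 * k + 1)
  m2 : 1 ≤ k → f (2 * k + 1) < f (2 * (k - 1))

lemma One.K {m k : ℕ} {f : ℕ → ℕ} (hf : ∀ i j, i < 2 * m → j < 2 * m → f i = f j → i = j)
    (h : One m k f) : K m k f := by
  obtain ⟨⟨h1, h2⟩, h3⟩ := h
  have ne : ∀ i j, i < 2 * m → j < 2 * m → i ≠ j → ¬ (f i < f j) → f j < f i := by
    intro i j hi hj hij hn
    have : f i ≠ f j := fun e => hij (hf i j hi hj e)
    omega
  obtain ⟨-, -, hk, o1, o2⟩ := (h3 (2 * k) (2 * k + 1) (2 * k + 3)).2 ⟨rfl, rfl, rfl⟩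
  have hv : ∀ i, i + 1 < m → f (2 * (i + 1)) < f (2 * i) := by
    intro i hi
    apply ne _ _ (by omega) (by omega) (by omega)
    intro hlt
    have := (h3 (2 * i) (2 * (i + 1)) (2 * (i + 1) + 1)).1
      ⟨by omega, by omega, by omega, hlt, h1 _ (by omega)⟩
    omega
  have key : ∀ i j, i < j → j < m → (i ≠ k ∨ j ≠ k + 1) → f (2 * j + 1) < f (2 * i + 1) := by
    intro i j hij hj hne
    apply ne _ _ (by omega) (by omega) (by omega)
    intro hlt
    have := (h3 (2 * i) (2 * i + 1) (2 * j + 1)).1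
      ⟨by omega, by omega, by omega, h1 _ (by omega), hlt⟩
    omega
  refine ⟨by omega, hv, ?_, ?_, o1, ?_⟩
  · intro i hi
    unfold tau
    split_ifs <;> first | omega | (apply key <;> omega)
  · intro i hi
    unfold tau
    split_ifs with c1 c2
    · subst c1
      have := h1 i hi
      exact this.trans o2
    · subst c2
      exact (hv k (by omega)).trans o1
    · exact h1 i hi
  · intro hk1
    apply ne _ _ (by omega) (by omega) (by omega)
    intro hlt
    have := (h3 (2 * (k - 1)) (2 * k + 1) (2 * k + 3)).1
      ⟨by omega, by omega, by omega, hlt, o2⟩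
    omega

lemma anti_of_adj {m : ℕ} {g : ℕ → ℕ} (h : ∀ i, i + 1 < m → g (i + 1) < g i) :
    ∀ i j, i < j → j < m → g j < g i := by
  intro i j hij
  induction j, hij using Nat.le_induction with
  | base => exact fun hj => h i hj
  | succ j hj ih => exact fun hj' => (h j hj').trans (ih (by omega))

lemma tau_tau (k i : ℕ) : tau k (tau k i) = i := by
  unfold tau; split_ifs <;> omega

lemma tau_lt {m k i : ℕ} (hk : k + 1 < m) (hi : i < m) : tau k i < m := by
  unfold tau; split_ifs <;> omega

lemma K.One {m k : ℕ} {f : ℕ → ℕ} (h : K m k f) : One m k f := by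
  obtain ⟨hk, hv, hp, hvp, m1, m2⟩ := h
  have hv' := anti_of_adj (g := fun i => f (2 * i)) hv
  have hp' := anti_of_adj (g := fun i => f (2 * tau k i + 1)) hp
  have tk : tau k k = k + 1 := by simp [tau]
  have tk1 : tau k (k + 1) = k := by simp [tau]
  have o2 : f (2 * k + 1) < f (2 * k + 3) := by
    have := hp k hk
    rw [tk, tk1] at this
    exact this
  -- peaks decrease except at `k`
  have key : ∀ i j, i < j → j < m → (i ≠ k ∨ j ≠ k + 1) → f (2 * j + 1) < f (2 * i + 1) := by
    intro i j hij hj hne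
    have := hp' (tau k i) (tau k j) (by unfold tau; split_ifs <;> omega) (tau_lt hk hj)
    rwa [tau_tau, tau_tau] at this
  have h1 : ∀ i < m, f (2 * i) < f (2 * i + 1) := by
    intro i hi
    by_cases c1 : i = k
    · rw [c1]; exact m1
    by_cases c2 : i = k + 1
    · rw [c2]
      have := hv k hk
      exact (this.trans m1).trans o2
    · have := hvp i hi
      rwa [tau, if_neg c1, if_neg c2] at this
  have h2 : ∀ i j, i ≤ j → j < m → f (2 * j) < f (2 * i + 1) := by
    intro i j hij hj
    rcases hij.eq_or_lt with rfl | hij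
    · exact h1 _ hj
    · exact (hv' i j hij hj).trans (h1 i (by omega))
  refine ⟨⟨h1, fun i hi => h2 i (i + 1) (by omega) hi⟩, ?_⟩
  intro a b c
  constructor
  · rintro ⟨hab, hbc, hc, fab, fbc⟩
    obtain ⟨i, hi | hi⟩ := Nat.even_or_odd' a <;>
    obtain ⟨j, hj | hj⟩ := Nat.even_or_odd' b <;>
    obtain ⟨l, hl | hl⟩ := Nat.even_or_odd' c
    · subst hi hj
      have := hv' i j (by omega) (by omega); omega
    · subst hi hj
      have := hv' i j (by omega) (by omega); omega
    · subst hi hl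
      have := hv' i l (by omega) (by omega); omega
    · have hjl : j = k ∧ l = k + 1 := by
        by_contra hne
        have := key j l (by omega) (by omega) (by omega)
        subst hj hl
        omega
      obtain ⟨rfl, rfl⟩ := hjl
      have : i = j := by
        by_contra hne
        have h5 := m2 (by omega)
        rcases Nat.lt_or_ge i (j - 1) with h6 | h6
        · have := hv' i (j - 1) h6 (by omega)
          subst hi hj; omega
        · obtain rfl : i = j - 1 := by omega
          subst hi hj; omega
      omega
    · subst hi hj
      have := h2 i j (by omega) (by omega); omega
    · subst hi hj
      have := h2 i j (by omega) (by omega); omega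
    · subst hj hl
      have := h2 j l (by omega) (by omega); omega
    · have e1 : i = k ∧ j = k + 1 := by
        by_contra hne
        have := key i j (by omega) (by omega) (by omega)
        subst hi hj
        omega
      have := key j l (by omega) (by omega) (by omega)
      subst hj hl
      omega
  · rintro ⟨rfl, rfl, rfl⟩
    exact ⟨by omega, by omega, by omega, m1, o2⟩

end S15

namespace S15
open Finset

lemma mono_of_adj {m : ℕ} {g : ℕ → ℕ} (h : ∀ i, i + 1 < m → g i < g (i + 1)) :
    ∀ i j, i < j → j < m → g i < g j := by
  intro i j hij
  induction j, hij using Nat.le_induction with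
  | base => exact fun hj => h i hj
  | succ j hj ih => exact fun hj' => (ih (by omega)).trans (h j hj')

def SM (m : ℕ) (X : ℕ → ℕ) : Prop := ∀ i j, i < j → j < m → X i < X j

lemma SM.lt_iff {m : ℕ} {X : ℕ → ℕ} (h : SM m X) {i j : ℕ} (hi : i < m) (hj : j < m) :
    X i < X j ↔ i < j := by
  constructor
  · intro hx
    by_contra hn
    rcases (not_lt.1 hn).eq_or_lt with rfl | h'
    · omega
    · have := h j i h' hi; omega
  · exact fun hij => h i j hij hj

lemma SM.inj {m : ℕ} {X : ℕ → ℕ} (h : SM m X) : Set.InjOn X (range m : Finset ℕ) := by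
  intro i hi j hj e
  have hi := mem_range.1 (mem_coe.1 hi)
  have hj := mem_range.1 (mem_coe.1 hj)
  have a := h.lt_iff hi hj
  have b := h.lt_iff hj hi
  omega

lemma cc_image {m : ℕ} {X : ℕ → ℕ} (h : SM m X) (t : ℕ) :
    cc ((range m).image X) t = ((range m).filter (fun i => X i < t)).card := by
  unfold cc
  rw [filter_image, card_image_of_injOn]
  exact h.inj.mono (by intro x hx; simp at hx ⊢; exact hx.1)

lemma cc_X {m : ℕ} {X : ℕ → ℕ} (h : SM m X) {i : ℕ} (hi : i < m) :
    cc ((range m).image X) (X i) = i := by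
  rw [cc_image h]
  rw [show (range m).filter (fun j => X j < X i) = range i from ?_, card_range]
  ext j
  simp only [mem_filter, mem_range]
  constructor
  · rintro ⟨h1, h2⟩
    exact (h.lt_iff h1 hi).1 h2
  · intro h1
    exact ⟨by omega, h j i h1 hi⟩

lemma cc_compl {n t : ℕ} (S : Finset ℕ) (hS : S ⊆ range n) (ht : t ≤ n) :
    cc S t + cc (range n \ S) t = t := by
  unfold cc
  rw [← card_union_of_disjoint, ← filter_union, union_sdiff_of_subset hS]
  · rw [show (range n).filter (fun x => x < t) = range t from ?_, card_range]
    ext x; simp; omega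
  · exact disjoint_filter_filter disjoint_sdiff

lemma cc_mono (S : Finset ℕ) {s t : ℕ} (h : s ≤ t) : cc S s ≤ cc S t := by
  unfold cc
  apply card_le_card
  intro x
  simp only [mem_filter]
  rintro ⟨h1, h2⟩
  exact ⟨h1, by omega⟩

lemma cc_succ_notMem {S : Finset ℕ} {t : ℕ} (h : t ∉ S) : cc S (t + 1) = cc S t := by
  unfold cc
  congr 1
  apply filter_congr
  intro x hx
  have : x ≠ t := fun e => h (e ▸ hx)
  omega

lemma cc_lt {S : Finset ℕ} {s t : ℕ} (hs : s ∈ S) (h : s < t) : cc S s < cc S t := by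
  unfold cc
  apply card_lt_card
  rw [ssubset_iff_of_subset]
  · exact ⟨s, by simp [hs, h], by simp⟩
  · intro x
    simp only [mem_filter]
    rintro ⟨h1, h2⟩
    exact ⟨h1, by omega⟩

lemma SM.ext {m : ℕ} {X X' : ℕ → ℕ} (h : SM m X) (h' : SM m X')
    (e : (range m).image X = (range m).image X') {i : ℕ} (hi : i < m) : X i = X' i := by
  have a := cc_X h hi
  have b := cc_X h' hi
  have c : X i ∈ (range m).image X := mem_image_of_mem _ (mem_range.2 hi)
  have d : X' i ∈ (range m).image X := by rw [e]; exact mem_image_of_mem _ (mem_range.2 hi)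
  rw [← e] at b
  rcases lt_trichotomy (X i) (X' i) with h1 | h1 | h1
  · have := cc_lt c h1; omega
  · exact h1
  · have := cc_lt d h1; omega

/-- fillings -/
structure Fill (m k : ℕ) (S : Finset ℕ) (X Y : ℕ → ℕ) : Prop where
  hS : S ⊆ range (2 * m)
  x : SM m X
  y : SM m Y
  ex : (range m).image X = S
  ey : (range m).image Y = range (2 * m) \ S

lemma Fill.good {m k : ℕ} {S : Finset ℕ} {X Y : ℕ → ℕ} (h : Fill m k S X Y) (hk : k + 1 < m)
    (xy : ∀ i < m, X i < Y i) (m1 : X (k + 1) < Y k) (m2 : 1 ≤ k → Y (k - 1) < X (k + 1)) :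
    Good (2 * m) 0 S ∧ Mark S (2 * k + 1) := by
  obtain ⟨hS, x, y, ex, ey⟩ := h
  refine ⟨⟨?_, ?_⟩, ?_⟩
  · intro t ht
    have h1 := cc_compl S hS ht
    have h2 : cc (range (2 * m) \ S) t ≤ cc S t := by
      rw [← ey, ← ex, cc_image x, cc_image y]
      apply card_le_card
      intro i
      simp only [mem_filter, mem_range]
      rintro ⟨h1, h2⟩
      exact ⟨h1, (xy i h1).trans h2⟩
    omega
  · rw [← ex, card_image_of_injOn x.inj, card_range]; omega
  · have hX : X (k + 1) ∈ S := by rw [← ex]; exact mem_image_of_mem _ (mem_range.2 hk)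
    have h1 := cc_compl S hS (mem_range.1 (hS hX)).le
    have h2 : cc (range (2 * m) \ S) (X (k + 1)) = k := by
      rw [← ey, cc_image y]
      rw [show (range m).filter (fun j => Y j < X (k + 1)) = range k from ?_, card_range]
      ext j
      simp only [mem_filter, mem_range]
      constructor
      · rintro ⟨h1, h2⟩
        exact (y.lt_iff h1 (by omega)).1 (h2.trans m1)
      · intro hj
        refine ⟨by omega, lt_of_le_of_lt ?_ (m2 (by omega))⟩
        rcases (show j ≤ k - 1 by omega).eq_or_lt with rfl | h3
        · rfl
        · exact (y _ _ h3 (by omega)).le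
    have h3 : cc S (X (k + 1)) = k + 1 := by rw [← ex, cc_X x hk]
    have h4 : X (k + 1) = 2 * k + 1 := by omega
    rw [h4] at hX h3
    exact ⟨hX, by omega⟩

lemma exists_fill {m k : ℕ} {S : Finset ℕ} (hS : S ⊆ range (2 * m)) (hc : S.card = m) :
    ∃ X Y, Fill m k S X Y := by
  have main : ∀ T : Finset ℕ, T.card = m → ∃ X, SM m X ∧ (range m).image X = T := by
    intro T hT
    refine ⟨fun i => if h : i < m then T.orderEmbOfFin hT ⟨i, h⟩ else 0, ?_, ?_⟩
    · intro i j hij hj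
      simp only [dif_pos hj, dif_pos (hij.trans hj)]
      simpa using hij
    · ext a
      simp only [mem_image, mem_range]
      constructor
      · rintro ⟨i, hi, rfl⟩
        rw [dif_pos hi]
        exact orderEmbOfFin_mem _ _ _
      · intro ha
        have : a ∈ Set.range (T.orderEmbOfFin hT) := by rw [range_orderEmbOfFin]; exact ha
        obtain ⟨i, rfl⟩ := this
        exact ⟨i.1, i.2, by rw [dif_pos i.2]⟩
  obtain ⟨X, h1, h2⟩ := main S hc
  obtain ⟨Y, h3, h4⟩ := main (range (2 * m) \ S) (by
    rw [card_sdiff_of_subset hS, card_range, hc]; omega)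
  exact ⟨X, Y, hS, h1, h3, h2, h4⟩

lemma Fill.conv {m k : ℕ} {S : Finset ℕ} {X Y : ℕ → ℕ} (h : Fill m k S X Y)
    (hG : Good (2 * m) 0 S) (hM : Mark S (2 * k + 1)) :
    k + 1 < m ∧ (∀ i < m, X i < Y i) ∧ X (k + 1) < Y k ∧ (1 ≤ k → Y (k - 1) < X (k + 1)) := by
  obtain ⟨hS, x, y, ex, ey⟩ := h
  have Xm : ∀ i < m, X i ∈ S := fun i hi => by
    rw [← ex]; exact mem_image_of_mem _ (mem_range.2 hi)
  have Ym : ∀ i < m, Y i < 2 * m ∧ Y i ∉ S := fun i hi => by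
    have : Y i ∈ range (2 * m) \ S := by rw [← ey]; exact mem_image_of_mem _ (mem_range.2 hi)
    simpa using this
  have cX : ∀ i < m, cc S (X i) = i := fun i hi => by rw [← ex, cc_X x hi]
  have cY : ∀ i < m, cc (range (2 * m) \ S) (Y i) = i := fun i hi => by rw [← ey, cc_X y hi]
  obtain ⟨hM1, hM2⟩ := hM
  have hlt := mem_range.1 (hS hM1)
  have hX : k + 1 < m ∧ X (k + 1) = 2 * k + 1 := by
    have h1 := hM1
    rw [← ex] at h1
    obtain ⟨j, hj, hj2⟩ := mem_image.1 h1
    have hj := mem_range.1 hj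
    have := cX j hj
    rw [hj2] at this
    obtain rfl : j = k + 1 := by omega
    exact ⟨hj, hj2⟩
  obtain ⟨hk, hX⟩ := hX
  have hc := cc_compl S hS hlt.le
  refine ⟨hk, ?_, ?_, ?_⟩
  · intro i hi
    by_contra hn
    have h1 := hG.1 (Y i + 1) (Ym i hi).1
    rw [cc_succ_notMem (Ym i hi).2] at h1
    have h2 := cc_compl S hS (Ym i hi).1.le
    rw [cY i hi] at h2
    have h3 := cc_mono S (not_lt.1 hn)
    rw [cX i hi] at h3
    omega
  · rw [hX]
    by_contra hn
    have h0 : Y k ≠ 2 * k + 1 := fun e => (Ym k (by omega)).2 (e ▸ hM1)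
    have h1 : Y k ∈ range (2 * m) \ S := by simpa using Ym k (by omega)
    have := cc_lt h1 (show Y k < 2 * k + 1 by omega)
    rw [cY k (by omega)] at this
    omega
  · intro hk1
    rw [hX]
    by_contra hn
    have := cc_mono (range (2 * m) \ S) (not_lt.1 hn)
    rw [cY (k - 1) (by omega)] at this
    omega

def Sof {m : ℕ} (w : Equiv.Perm (Fin (2 * m))) : Finset ℕ :=
  (range m).image (fun i => 2 * m - 1 - W w (2 * i + 1))

lemma image_tau {m k : ℕ} (hk : k + 1 < m) (g : ℕ → ℕ) :
    (range m).image (fun i => g (tau k i)) = (range m).image g := by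
  ext a
  simp only [mem_image, mem_range]
  constructor
  · rintro ⟨i, hi, rfl⟩
    exact ⟨_, tau_lt hk hi, rfl⟩
  · rintro ⟨i, hi, rfl⟩
    exact ⟨_, tau_lt hk hi, by rw [tau_tau]⟩

lemma fill_of_K {m k : ℕ} {w : Equiv.Perm (Fin (2 * m))} (h : K m k (W w)) :
    Fill m k (Sof w) (fun i => 2 * m - 1 - W w (2 * tau k i + 1))
      (fun i => 2 * m - 1 - W w (2 * i)) := by
  have hk := h.hk
  refine ⟨?_, ?_, ?_, ?_, ?_⟩
  · intro a ha
    obtain ⟨i, hi, rfl⟩ := mem_image.1 ha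
    have := mem_range.1 hi
    rw [mem_range]; omega
  · apply mono_of_adj
    intro i hi
    have h1 := h.p i hi
    have h2 := W_lt w (i := 2 * tau k i + 1) (by have := tau_lt hk (show i < m by omega); omega)
    omega
  · apply mono_of_adj
    intro i hi
    have h1 := h.v i hi
    have h2 := W_lt w (i := 2 * i) (by omega)
    omega
  · exact image_tau hk (fun i => 2 * m - 1 - W w (2 * i + 1))
  · ext a
    simp only [mem_image, mem_range, mem_sdiff, Sof, not_exists, not_and]
    constructor
    · rintro ⟨i, hi, rfl⟩
      refine ⟨by omega, ?_⟩
      intro j hj e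
      have h1 := W_lt w (i := 2 * i) (by omega)
      have h2 := W_lt w (i := 2 * j + 1) (by omega)
      have := W_inj w (i := 2 * i) (j := 2 * j + 1) (by omega) (by omega) (by omega)
      omega
    · rintro ⟨ha, hn⟩
      obtain ⟨i, hi, e⟩ := W_surj w (a := 2 * m - 1 - a) (by omega)
      obtain ⟨j, hj | hj⟩ := Nat.even_or_odd' i
      · subst hj
        exact ⟨j, by omega, by omega⟩
      · subst hj
        exact absurd (show 2 * m - 1 - W w (2 * j + 1) = a by omega) (hn j (by omega))

lemma W_inj' {n : ℕ} (w : Equiv.Perm (Fin n)) : ∀ i j, i < n → j < n → W w i = W w j → i = j :=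
  fun _ _ hi hj h => W_inj w hi hj h

noncomputable instance {m k : ℕ} :
    DecidablePred (fun w : Equiv.Perm (Fin (2 * m)) => One m k (W w)) := fun _ => Classical.dec _

lemma card_One (m k : ℕ) :
    ((univ : Finset (Equiv.Perm (Fin (2 * m)))).filter (fun w => One m k (W w))).card =
    ((range (2 * m)).powerset.filter (fun S => Good (2 * m) 0 S ∧ Mark S (2 * k + 1))).card := by
  apply card_bij (fun w _ => Sof w)
  · intro w hw
    have hK := (mem_filter.1 hw).2.K (W_inj' w)
    have hF := fill_of_K hK
    rw [mem_filter, mem_powerset]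
    refine ⟨hF.hS, hF.good hK.hk ?_ ?_ ?_⟩
    · intro i hi
      have h1 := hK.vp i hi
      have h2 := W_lt w (i := 2 * tau k i + 1) (by have := tau_lt hK.hk hi; omega)
      omega
    · have h1 := hK.m1
      have := hK.hk
      have h2 := W_lt w (i := 2 * k + 1) (by omega)
      have tk1 : tau k (k + 1) = k := by simp [tau]
      simp only [tk1]
      omega
    · intro hk1
      have h1 := hK.m2 hk1
      have := hK.hk
      have h2 := W_lt w (i := 2 * (k - 1)) (by omega)
      have tk1 : tau k (k + 1) = k := by simp [tau]
      simp only [tk1]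
      omega
  · intro w hw w' hw' e
    have hK := (mem_filter.1 hw).2.K (W_inj' w)
    have hK' := (mem_filter.1 hw').2.K (W_inj' w')
    have hF := fill_of_K hK
    have hF' := fill_of_K hK'
    have a := fun i (hi : i < m) => hF.x.ext hF'.x (by rw [hF.ex, hF'.ex, e]) hi
    have b := fun i (hi : i < m) => hF.y.ext hF'.y (by rw [hF.ey, hF'.ey, e]) hi
    apply W_ext
    intro i hi
    have h1 := W_lt w hi
    have h2 := W_lt w' hi
    obtain ⟨j, hj | hj⟩ := Nat.even_or_odd' i
    · have := b j (by omega)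
      subst hj
      omega
    · have := a (tau k j) (tau_lt hK.hk (by omega))
      rw [tau_tau] at this
      subst hj
      omega
  · intro S hS
    rw [mem_filter, mem_powerset] at hS
    obtain ⟨hS, hG, hM⟩ := hS
    obtain ⟨X, Y, hF⟩ := exists_fill (k := k) hS (by have := hG.2; omega)
    obtain ⟨hk, xy, m1, m2⟩ := hF.conv hG hM
    have Xm : ∀ i < m, X i < 2 * m ∧ X i ∈ S := fun i hi => by
      have : X i ∈ S := by rw [← hF.ex]; exact mem_image_of_mem _ (mem_range.2 hi)
      exact ⟨mem_range.1 (hS this), this⟩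
    have Ym : ∀ i < m, Y i < 2 * m ∧ Y i ∉ S := fun i hi => by
      have : Y i ∈ range (2 * m) \ S := by rw [← hF.ey]; exact mem_image_of_mem _ (mem_range.2 hi)
      simpa using this
    let f : Fin (2 * m) → Fin (2 * m) := fun i =>
      ⟨2 * m - 1 - (if i.1 % 2 = 0 then Y (i.1 / 2) else X (tau k (i.1 / 2))), by
        have := i.2; omega⟩
    have finj : Function.Injective f := by
      intro i j e
      have e := congrArg Fin.val e
      simp only [f] at e
      have hi := i.2
      have hj := j.2
      have ti := tau_lt hk (show i.1 / 2 < m by omega)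
      have tj := tau_lt hk (show j.1 / 2 < m by omega)
      have a1 := Xm _ ti
      have a2 := Xm _ tj
      have b1 := Ym (i.1 / 2) (by omega)
      have b2 := Ym (j.1 / 2) (by omega)
      apply Fin.ext
      split_ifs at e with c1 c2 c2
      · have := hF.y.inj (mem_coe.2 (mem_range.2 (show i.1 / 2 < m by omega)))
          (mem_coe.2 (mem_range.2 (show j.1 / 2 < m by omega))) (by omega)
        omega
      · exact absurd a2.2 ((show Y (i.1 / 2) = X (tau k (j.1 / 2)) by omega) ▸ b1.2)
      · exact absurd a1.2 ((show Y (j.1 / 2) = X (tau k (i.1 / 2)) by omega) ▸ b2.2)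
      · have := hF.x.inj (mem_coe.2 (mem_range.2 ti)) (mem_coe.2 (mem_range.2 tj)) (by omega)
        have := congrArg (tau k) this
        rw [tau_tau, tau_tau] at this
        omega
    let w : Equiv.Perm (Fin (2 * m)) := Equiv.ofBijective f (Finite.injective_iff_bijective.1 finj)
    have we : ∀ i < m, W w (2 * i) = 2 * m - 1 - Y i := by
      intro i hi
      rw [W, dif_pos (by omega)]
      simp [w, f]
    have wo : ∀ i < m, W w (2 * i + 1) = 2 * m - 1 - X (tau k i) := by
      intro i hi
      rw [W, dif_pos (by omega)]
      simp only [w, f, Equiv.ofBijective_apply]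
      rw [if_neg (by omega), show (2 * i + 1) / 2 = i by omega]
    have hK : K m k (W w) := by
      have tk1 : tau k k = k + 1 := by simp [tau]
      refine ⟨hk, ?_, ?_, ?_, ?_, ?_⟩
      · intro i hi
        rw [we _ hi, we _ (by omega)]
        have := hF.y i (i + 1) (by omega) hi
        have := Ym (i + 1) hi
        omega
      · intro i hi
        rw [wo _ (tau_lt hk hi), wo _ (tau_lt hk (by omega)), tau_tau, tau_tau]
        have := hF.x i (i + 1) (by omega) hi
        have := Xm (i + 1) hi
        omega
      · intro i hi
        rw [wo _ (tau_lt hk hi), we _ hi, tau_tau]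
        have := xy i hi
        have := Ym i hi
        omega
      · rw [we _ (by omega), wo _ (by omega), tk1]
        have := Ym k (by omega)
        omega
      · intro hk1
        rw [we _ (by omega), wo _ (by omega), tk1]
        have := m2 hk1
        have := Xm _ hk
        omega
    refine ⟨w, by rw [mem_filter]; exact ⟨mem_univ _, hK.One⟩, ?_⟩
    unfold Sof
    rw [← hF.ex, ← image_tau hk X]
    apply image_congr
    intro i hi
    have hi := mem_range.1 (mem_coe.1 hi)
    simp only [wo i hi]
    have := Xm _ (tau_lt hk hi)
    omega

lemma sum_One (m : ℕ) :
    ∑ k ∈ range m,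
      ((univ : Finset (Equiv.Perm (Fin (2 * m)))).filter (fun w => One m k (W w))).card =
    G (2 * m) 0 := by
  rw [sum_congr rfl (fun k _ => card_One m k)]
  simp only [card_filter]
  rw [sum_comm]
  unfold G
  apply sum_congr rfl
  intro S hS
  by_cases hG : Good (2 * m) 0 S
  · simp only [hG, true_and, if_true]
    rw [← card_filter]
    unfold marks
    apply card_bij (fun k _ => 2 * k + 1)
    · intro k hk
      simp only [mem_filter, mem_range] at hk ⊢
      exact ⟨by omega, hk.2⟩
    · intro a _ b _ h
      omega
    · intro t ht
      simp only [mem_filter, mem_range] at ht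
      have := ht.2.2
      have e : t = 2 * (t / 2) + 1 := by omega
      refine ⟨t / 2, ?_, e.symm⟩
      simp only [mem_filter, mem_range]
      exact ⟨by omega, e ▸ ht.2⟩
  · simp [hG]

end S15

namespace S15
open Finset

lemma upDown_iff {m : ℕ} (w : Equiv.Perm (Fin (2 * m))) : UpDown w ↔ Alt m (W w) := by
  unfold UpDown Alt
  constructor
  · intro h
    refine ⟨fun i hi => ?_, fun i hi => ?_⟩
    · have := h (2 * i) (by omega)
      rw [if_pos (by omega)] at this
      rw [W, W, dif_pos (by omega), dif_pos (by omega)]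
      exact this
    · have := h (2 * i + 1) (by omega)
      rw [if_neg (by omega)] at this
      rw [W, W, dif_pos (by omega), dif_pos (by omega)]
      exact this
  · rintro ⟨h1, h2⟩ i hi
    obtain ⟨j, hj | hj⟩ := Nat.even_or_odd' i
    · subst hj
      rw [if_pos (by omega)]
      have := h1 j (by omega)
      rw [W, W, dif_pos (by omega), dif_pos (by omega)] at this
      exact this
    · subst hj
      rw [if_neg (by omega)]
      have := h2 j (by omega)
      rw [W, W, dif_pos (by omega), dif_pos (by omega)] at this
      exact this

def Uniq (m : ℕ) (f : ℕ → ℕ) (a b c : ℕ) : Prop :=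
  ∀ a' b' c', Occ (2 * m) f a' b' c' ↔ a' = a ∧ b' = b ∧ c' = c

lemma mem_occ {n : ℕ} (w : Equiv.Perm (Fin n)) (a b c : Fin n) :
    (a, b, c) ∈ occ123 w ↔ Occ n (W w) a b c := by
  unfold occ123 Occ W
  simp

lemma ncard_iff {m : ℕ} (w : Equiv.Perm (Fin (2 * m))) :
    (occ123 w).ncard = 1 ↔ ∃ a b c, Uniq m (W w) a b c := by
  rw [Set.ncard_eq_one]
  constructor
  · rintro ⟨⟨a, b, c⟩, h⟩
    refine ⟨a, b, c, fun a' b' c' => ⟨fun ho => ?_, ?_⟩⟩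
    · have hlt := ho
      obtain ⟨h1, h2, h3, -, -⟩ := hlt
      have := (mem_occ w ⟨a', by omega⟩ ⟨b', by omega⟩ ⟨c', h3⟩).2 ho
      rw [h] at this
      simp only [Set.mem_singleton_iff, Prod.mk.injEq] at this
      obtain ⟨rfl, rfl, rfl⟩ := this
      exact ⟨rfl, rfl, rfl⟩
    · rintro ⟨rfl, rfl, rfl⟩
      rw [← mem_occ, h]
      rfl
  · rintro ⟨a, b, c, h⟩
    have ho := (h a b c).2 ⟨rfl, rfl, rfl⟩
    have hlt := ho
    obtain ⟨h1, h2, h3, -, -⟩ := hlt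
    refine ⟨(⟨a, by omega⟩, ⟨b, by omega⟩, ⟨c, h3⟩), ?_⟩
    ext ⟨a', b', c'⟩
    rw [mem_occ, h]
    simp [Fin.ext_iff]

def P (m r : ℕ) (f : ℕ → ℕ) : Prop := Alt m f ∧ ∃ a b c, b % 2 = r ∧ Uniq m f a b c

lemma P_one {m : ℕ} {f : ℕ → ℕ} (hf : ∀ i j, i < 2 * m → j < 2 * m → f i = f j → i = j) :
    P m 1 f ↔ ∃ k < m, One m k f := by
  constructor
  · rintro ⟨hA, a, b, c, hb, hu⟩
    have ho := (hu a b c).2 ⟨rfl, rfl, rfl⟩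
    obtain ⟨h1, h2, h3, h4, h5⟩ := ho
    obtain ⟨k, rfl⟩ : ∃ k, b = 2 * k + 1 := ⟨b / 2, by omega⟩
    have ha : a = 2 * k := by
      have := (hu (2 * k) (2 * k + 1) c).1 ⟨by omega, h2, h3, hA.1 k (by omega), h5⟩
      omega
    have hc : c % 2 = 1 := by
      by_contra hc
      obtain ⟨l, rfl⟩ : ∃ l, c = 2 * l := ⟨c / 2, by omega⟩
      have h6 := hA.1 l (by omega)
      have := (hu a (2 * k + 1) (2 * l + 1)).1 ⟨h1, by omega, by omega, h4, by omega⟩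
      omega
    obtain ⟨l, rfl⟩ : ∃ l, c = 2 * l + 1 := ⟨c / 2, by omega⟩
    have hl : l = k + 1 := by
      by_contra hl
      obtain ⟨l, rfl⟩ : ∃ l', l = l' + 1 := ⟨l - 1, by omega⟩
      rcases lt_trichotomy (f (2 * k + 1)) (f (2 * l + 1)) with h6 | h6 | h6
      · have := (hu a (2 * k + 1) (2 * l + 1)).1 ⟨h1, by omega, by omega, h4, h6⟩
        omega
      · have := hf _ _ (by omega) (by omega) h6
        omega
      · have := (hu (2 * l) (2 * l + 1) (2 * (l + 1) + 1)).1
          ⟨by omega, by omega, by omega, hA.1 l (by omega), by omega⟩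
        omega
    subst ha hl
    exact ⟨k, by omega, hA, hu⟩
  · rintro ⟨k, hk, hA, hu⟩
    exact ⟨hA, 2 * k, 2 * k + 1, 2 * k + 3, by omega, hu⟩

lemma P_rc {m r r' : ℕ} {f g : ℕ → ℕ} (hr : r + r' = 1)
    (hf : ∀ i < 2 * m, f i < 2 * m) (hg : ∀ i < 2 * m, g i = 2 * m - 1 - f (2 * m - 1 - i))
    (h : P m r f) : P m r' g := by
  have key : ∀ i j, i < 2 * m → j < 2 * m →
      (g i < g j ↔ f (2 * m - 1 - j) < f (2 * m - 1 - i)) := by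
    intro i j hi hj
    rw [hg i hi, hg j hj]
    have := hf (2 * m - 1 - i) (by omega)
    have := hf (2 * m - 1 - j) (by omega)
    omega
  obtain ⟨⟨h1, h2⟩, a, b, c, hb, hu⟩ := h
  refine ⟨⟨fun i hi => ?_, fun i hi => ?_⟩, ?_⟩
  · rw [key _ _ (by omega) (by omega)]
    have := h1 (m - 1 - i) (by omega)
    rwa [show 2 * m - 1 - (2 * i + 1) = 2 * (m - 1 - i) by omega,
      show 2 * m - 1 - 2 * i = 2 * (m - 1 - i) + 1 by omega]
  · rw [key _ _ (by omega) (by omega)]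
    have := h2 (m - 2 - i) (by omega)
    rwa [show 2 * m - 1 - (2 * i + 1) = 2 * (m - 2 - i) + 2 by omega,
      show 2 * m - 1 - (2 * i + 2) = 2 * (m - 2 - i) + 1 by omega]
  · obtain ⟨o1, o2, o3, -, -⟩ := (hu a b c).2 ⟨rfl, rfl, rfl⟩
    refine ⟨2 * m - 1 - c, 2 * m - 1 - b, 2 * m - 1 - a, by omega, fun a' b' c' => ?_⟩
    constructor
    · rintro ⟨p1, p2, p3, p4, p5⟩
      rw [key _ _ (by omega) (by omega)] at p4 p5
      have := (hu (2 * m - 1 - c') (2 * m - 1 - b') (2 * m - 1 - a')).1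
        ⟨by omega, by omega, by omega, p5, p4⟩
      omega
    · rintro ⟨rfl, rfl, rfl⟩
      obtain ⟨-, -, -, o4, o5⟩ := (hu a b c).2 ⟨rfl, rfl, rfl⟩
      refine ⟨by omega, by omega, by omega, ?_, ?_⟩
      · rw [key _ _ (by omega) (by omega), show 2 * m - 1 - (2 * m - 1 - b) = b by omega,
          show 2 * m - 1 - (2 * m - 1 - c) = c by omega]
        exact o5
      · rw [key _ _ (by omega) (by omega), show 2 * m - 1 - (2 * m - 1 - b) = b by omega,
          show 2 * m - 1 - (2 * m - 1 - a) = a by omega]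
        exact o4

/-- reverse-complement -/
def rc {n : ℕ} (w : Equiv.Perm (Fin n)) : Equiv.Perm (Fin n) :=
  Fin.revPerm.trans (w.trans Fin.revPerm)

lemma rc_rc {n : ℕ} (w : Equiv.Perm (Fin n)) : rc (rc w) = w := by
  ext i; simp [rc]

lemma W_rc {n : ℕ} (w : Equiv.Perm (Fin n)) : ∀ i < n, W (rc w) i = n - 1 - W w (n - 1 - i) := by
  intro i hi
  rw [W, W, dif_pos hi, dif_pos (by omega)]
  simp only [rc, Equiv.trans_apply, Fin.revPerm_apply, Fin.val_rev]
  have : (⟨i, hi⟩ : Fin n).rev = ⟨n - 1 - i, by omega⟩ := by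
    apply Fin.ext; simp only [Fin.val_rev]; omega
  rw [this]
  omega

noncomputable instance {m r : ℕ} :
    DecidablePred (fun w : Equiv.Perm (Fin (2 * m)) => P m r (W w)) := fun _ => Classical.dec _

lemma card_P_zero (m : ℕ) :
    ((univ : Finset (Equiv.Perm (Fin (2 * m)))).filter (fun w => P m 0 (W w))).card =
    ((univ : Finset (Equiv.Perm (Fin (2 * m)))).filter (fun w => P m 1 (W w))).card := by
  apply card_nbij' rc rc
  · intro w hw
    simp only [coe_filter, mem_univ, true_and, Set.mem_ofPred_eq] at hw ⊢
    exact P_rc rfl (fun i hi => W_lt w hi) (W_rc w) hw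
  · intro w hw
    simp only [coe_filter, mem_univ, true_and, Set.mem_ofPred_eq] at hw ⊢
    exact P_rc rfl (fun i hi => W_lt w hi) (W_rc w) hw
  · intro w _; exact rc_rc w
  · intro w _; exact rc_rc w

lemma card_P_one (m : ℕ) :
    ((univ : Finset (Equiv.Perm (Fin (2 * m)))).filter (fun w => P m 1 (W w))).card =
    G (2 * m) 0 := by
  classical
  rw [← sum_One, ← card_biUnion]
  · congr 1
    ext w
    simp only [mem_filter, mem_univ, true_and, mem_biUnion, mem_range]
    exact P_one (W_inj' w)
  · intro k _ k' _ hne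
    rw [Function.onFun, disjoint_left]
    intro w hw hw'
    have h1 := (mem_filter.1 hw).2.2
    have h2 := (mem_filter.1 hw').2.2
    have := (h2 _ _ _).1 ((h1 _ _ _).2 ⟨rfl, rfl, rfl⟩)
    omega

lemma card_all (m : ℕ) :
    Nat.card {w : Equiv.Perm (Fin (2 * m)) // UpDown w ∧ (occ123 w).ncard = 1} =
      2 * G (2 * m) 0 := by
  classical
  have e : ∀ w : Equiv.Perm (Fin (2 * m)), (UpDown w ∧ (occ123 w).ncard = 1) ↔
      (P m 0 (W w) ∨ P m 1 (W w)) := by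
    intro w
    rw [upDown_iff, ncard_iff]
    constructor
    · rintro ⟨h1, a, b, c, h2⟩
      rcases Nat.mod_two_eq_zero_or_one b with hb | hb
      · exact Or.inl ⟨h1, a, b, c, hb, h2⟩
      · exact Or.inr ⟨h1, a, b, c, hb, h2⟩
    · rintro (⟨h1, a, b, c, -, h2⟩ | ⟨h1, a, b, c, -, h2⟩) <;> exact ⟨h1, a, b, c, h2⟩
  rw [Nat.card_eq_fintype_card, Fintype.card_subtype]
  rw [filter_congr (fun w _ => e w), filter_or, card_union_of_disjoint]
  · have h0 := card_P_zero m
    have h1 := card_P_one m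
    rw [h0, h1]
    ring
  · rw [disjoint_left]
    intro w hw hw'
    obtain ⟨-, a, b, c, hb, hu⟩ := (mem_filter.1 hw).2
    obtain ⟨-, a', b', c', hb', hu'⟩ := (mem_filter.1 hw').2
    have := (hu' _ _ _).1 ((hu _ _ _).2 ⟨rfl, rfl, rfl⟩)
    omega

end S15

theorem stmt15 (m : ℕ) (hm : 2 ≤ m) :
    Nat.card {w : Equiv.Perm (Fin (2 * m)) // UpDown w ∧ (occ123 w).ncard = 1} *
        (Nat.factorial (m - 2) * Nat.factorial (m + 3)) =
      10 * Nat.factorial (2 * m) := by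
  rw [S15.card_all, mul_assoc, S15.G_final m hm]
  ring
end

section
/- For every m ≥ 2, the number of reverse-alternating (down-up) permutations of length 2m containing the pattern 321 exactly once equals the number of alternating (up-down) permutations of length 2m containing 123 exactly once, namely 10·(2m)! / ((m-2)!(m+3)!). -/
/-- number of elements of `A` below `x` -/
def cP (A : Finset ℕ) (x : ℕ) : ℕ := Nat.count (fun y => y ∈ A) x
/-- number of non-elements of `A` below `x` -/
def cV (A : Finset ℕ) (x : ℕ) : ℕ := Nat.count (fun y => y ∉ A) x

theorem cP_succ (A : Finset ℕ) (x : ℕ) : cP A (x+1) = cP A x + if x ∈ A then 1 else 0 := by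
  simp [cP, Nat.count_succ]
theorem cV_succ (A : Finset ℕ) (x : ℕ) : cV A (x+1) = cV A x + if x ∈ A then 0 else 1 := by
  simp only [cV, Nat.count_succ]; split_ifs <;> simp_all
theorem cP_zero (A : Finset ℕ) : cP A 0 = 0 := by simp [cP]
theorem cV_zero (A : Finset ℕ) : cV A 0 = 0 := by simp [cV]
theorem cP_add_cV (A : Finset ℕ) (x : ℕ) : cP A x + cV A x = x := by
  induction x with
  | zero => simp [cP_zero, cV_zero]
  | succ x ih => rw [cP_succ, cV_succ]; split_ifs <;> omega

theorem cP_insert (A : Finset ℕ) (n x : ℕ) (h : x ≤ n) : cP (insert n A) x = cP A x := by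
  induction x with
  | zero => simp [cP_zero]
  | succ x ih =>
    rw [cP_succ, cP_succ, ih (by omega)]
    have : x ≠ n := by omega
    simp [this]
theorem cV_insert (A : Finset ℕ) (n x : ℕ) (h : x ≤ n) : cV (insert n A) x = cV A x := by
  have h1 := cP_add_cV (insert n A) x
  have h2 := cP_add_cV A x
  rw [cP_insert A n x h] at h1
  omega

/-- ballot condition -/
def Good (n h : ℕ) (A : Finset ℕ) : Prop :=
  (∀ v ≤ n, cP A v ≤ cV A v) ∧ cP A n + h = cV A n

/-- marked values -/
def marks (n : ℕ) (A : Finset ℕ) : Finset ℕ :=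
  (Finset.range n).filter (fun v => v ∈ A ∧ cP A v + 2 = cV A v)

open Classical in
/-- ballot sets -/
noncomputable def gset (n h : ℕ) : Finset (Finset ℕ) :=
  (Finset.range n).powerset.filter (Good n h)

theorem good_succ_of_notMem {n h : ℕ} {A : Finset ℕ} (hn : n ∉ A) :
    Good (n+1) h A ↔ ∃ h', h = h' + 1 ∧ Good n h' A := by
  unfold Good
  rw [cP_succ, cV_succ]
  simp only [hn, if_false]
  constructor
  · rintro ⟨h1, h2⟩
    have := h1 n (by omega)
    exact ⟨h - 1, by omega, fun v hv => h1 v (by omega), by omega⟩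
  · rintro ⟨h', rfl, h1, h2⟩
    refine ⟨fun v hv => ?_, by omega⟩
    rcases Nat.lt_or_ge n v with h | h
    · obtain rfl : v = n + 1 := by omega
      rw [cP_succ, cV_succ]
      simp only [hn, if_false]; omega
    · exact h1 v h

theorem good_succ_insert {n h : ℕ} {A : Finset ℕ} :
    Good (n+1) h (insert n A) ↔ Good n (h+1) A := by
  unfold Good
  rw [cP_succ, cV_succ, cP_insert _ _ _ le_rfl, cV_insert _ _ _ le_rfl]
  simp only [Finset.mem_insert_self, if_true]
  constructor
  · rintro ⟨h1, h2⟩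
    refine ⟨fun v hv => ?_, by omega⟩
    have := h1 v (by omega)
    rwa [cP_insert _ _ _ hv, cV_insert _ _ _ hv] at this
  · rintro ⟨h1, h2⟩
    refine ⟨fun v hv => ?_, by omega⟩
    rcases Nat.lt_or_ge n v with h | h
    · obtain rfl : v = n + 1 := by omega
      rw [cP_succ, cV_succ, cP_insert _ _ _ le_rfl, cV_insert _ _ _ le_rfl]
      simp only [Finset.mem_insert_self, if_true]; omega
    · rw [cP_insert _ _ _ h, cV_insert _ _ _ h]; exact h1 v h

theorem sum_gset_succ (n h : ℕ) (g : Finset ℕ → ℕ) :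
    ∑ A ∈ gset (n+1) h, g A =
      (match h with | 0 => 0 | h'+1 => ∑ A ∈ gset n h', g A) +
      ∑ A ∈ gset n (h+1), g (insert n A) := by
  classical
  unfold gset
  rw [Finset.sum_filter, Finset.range_add_one, Finset.sum_powerset_insert (by simp)]
  congr 1
  · cases h with
    | zero =>
      apply Finset.sum_eq_zero
      intro A hA
      have hn : n ∉ A := fun hh => by simpa using Finset.mem_powerset.1 hA hh
      rw [if_neg]
      rw [good_succ_of_notMem hn]; simp
    | succ h' =>
      simp only [Finset.sum_filter]
      apply Finset.sum_congr rfl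
      intro A hA
      have hn : n ∉ A := fun hh => by simpa using Finset.mem_powerset.1 hA hh
      simp [good_succ_of_notMem hn]
  · rw [Finset.sum_filter]
    simp [good_succ_insert]

/-- ballot numbers -/
noncomputable def F (n h : ℕ) : ℕ := (gset n h).card
/-- total number of marks -/
noncomputable def M (n h : ℕ) : ℕ := ∑ A ∈ gset n h, (marks n A).card

theorem F_succ_zero (n : ℕ) : F (n+1) 0 = F n 1 := by
  simp only [F, Finset.card_eq_sum_ones, sum_gset_succ]; simp
theorem F_succ_succ (n h : ℕ) : F (n+1) (h+1) = F n h + F n (h+2) := by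
  simp only [F, Finset.card_eq_sum_ones, sum_gset_succ]
theorem F_zero (h : ℕ) : F 0 h = if h = 0 then 1 else 0 := by
  simp [F, gset, Good, cP_zero, cV_zero, Finset.filter_singleton]
  split_ifs <;> simp

theorem marks_succ (n : ℕ) (A : Finset ℕ) (hA : A ⊆ Finset.range n) :
    marks (n+1) A = marks n A := by
  ext v
  simp only [marks, Finset.mem_filter, Finset.mem_range]
  constructor
  · rintro ⟨-, h1, h2⟩; exact ⟨by simpa using hA h1, h1, h2⟩
  · rintro ⟨h1, h2, h3⟩; exact ⟨by omega, h2, h3⟩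

theorem marks_insert (n h : ℕ) (A : Finset ℕ) (hg : A ∈ gset n h) :
    (marks (n+1) (insert n A)).card = (marks n A).card + if h = 2 then 1 else 0 := by
  classical
  have hA : A ⊆ Finset.range n := by simp [gset] at hg; intro x hx; simpa using hg.1 hx
  have hG : Good n h A := by simp [gset] at hg; exact hg.2
  have hn : n ∉ A := fun hh => by simpa using hA hh
  have e : marks (n+1) (insert n A) = if h = 2 then insert n (marks n A) else marks n A := by
    ext v
    have key : v ∈ marks (n+1) (insert n A) ↔ (v = n ∧ h = 2) ∨ v ∈ marks n A := by
      simp only [marks, Finset.mem_filter, Finset.mem_range, Finset.mem_insert]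
      constructor
      · rintro ⟨h1, h2, h3⟩
        rw [cP_insert _ _ _ (by omega), cV_insert _ _ _ (by omega)] at h3
        rcases Nat.lt_or_ge v n with h | h
        · right; exact ⟨h, by rcases h2 with h2 | h2; omega; exact h2, h3⟩
        · left
          obtain rfl : v = n := by omega
          have := hG.2
          exact ⟨rfl, by omega⟩
      · rintro (⟨rfl, rfl⟩ | ⟨h1, h2, h3⟩)
        · refine ⟨by omega, Or.inl rfl, ?_⟩
          rw [cP_insert _ _ _ (by omega), cV_insert _ _ _ (by omega)]
          exact hG.2
        · refine ⟨by omega, Or.inr h2, ?_⟩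
          rw [cP_insert _ _ _ (by omega), cV_insert _ _ _ (by omega)]
          exact h3
    rw [key]
    split_ifs with hh <;> simp [hh]
  rw [e]
  split_ifs
  · rw [Finset.card_insert_of_notMem]; simp [marks]
  · rfl

theorem sum_marks_insert (n h : ℕ) :
    ∑ A ∈ gset n h, (marks (n+1) (insert n A)).card = M n h + if h = 2 then F n 2 else 0 := by
  rw [Finset.sum_congr rfl (fun A hA => marks_insert n h A hA), Finset.sum_add_distrib]
  rw [M, F]
  split_ifs with hh
  · subst hh; simp
  · simp

theorem sum_marks_succ (n h : ℕ) :
    ∑ A ∈ gset n h, (marks (n+1) A).card = M n h := by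
  apply Finset.sum_congr rfl
  intro A hA
  rw [marks_succ]
  simp [gset] at hA; intro x hx; simpa using hA.1 hx

theorem M_succ_zero (n : ℕ) : M (n+1) 0 = M n 1 := by
  rw [M, sum_gset_succ, sum_marks_insert]; simp
theorem M_succ_succ (n h : ℕ) :
    M (n+1) (h+1) = M n h + M n (h+2) + if h = 0 then F n 2 else 0 := by
  rw [M, sum_gset_succ, sum_marks_insert]
  simp only [sum_marks_succ]
  simp [add_assoc]
theorem M_zero (h : ℕ) : M 0 h = 0 := by simp [M, marks]

theorem M_eq (n : ℕ) : M n 0 = F n 4 ∧ ∀ h, M n (h+1) = F n (h+3) + F n (h+5) := by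
  induction n with
  | zero => simp [M_zero, F_zero]
  | succ n ih =>
    obtain ⟨i0, i1⟩ := ih
    refine ⟨?_, fun h => ?_⟩
    · rw [M_succ_zero, i1 0, F_succ_succ]
    · rw [M_succ_succ, F_succ_succ, F_succ_succ, i1 (h+1)]
      cases h with
      | zero => simp [i0]; ring
      | succ h => rw [i1 h]; simp

theorem F_big (n : ℕ) : ∀ h, n < h → F n h = 0 := by
  induction n with
  | zero => intro h hh; rw [F_zero, if_neg (by omega)]
  | succ n ih =>
    intro h hh
    obtain ⟨h, rfl⟩ : ∃ k, h = k + 1 := ⟨h - 1, by omega⟩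
    rw [F_succ_succ, ih _ (by omega), ih _ (by omega)]

theorem F_formula (n : ℕ) : ∀ k h, 2 * k + h = n →
    F n h * (k.factorial * (k+h+1).factorial) = (h+1) * n.factorial := by
  induction n with
  | zero =>
    intro k h hk
    obtain rfl : k = 0 := by omega
    obtain rfl : h = 0 := by omega
    simp [F_zero]
  | succ n ih =>
    intro k h hk
    cases h with
    | zero =>
      obtain ⟨k, rfl⟩ : ∃ j, k = j + 1 := ⟨k - 1, by omega⟩
      have := ih k 1 (by omega)
      obtain rfl : n = 2 * k + 1 := by omega
      rw [F_succ_zero, Nat.factorial_succ k, Nat.factorial_succ (2*k+1)]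
      rw [show k + 1 + 0 + 1 = k + 1 + 1 by ring]
      linear_combination (k+1) * this
    | succ h =>
      have h1 := ih k h (by omega)
      rw [F_succ_succ]
      cases k with
      | zero =>
        rw [F_big n (h+2) (by omega)]
        obtain rfl : n = h := by omega
        simp [Nat.factorial_succ] at h1 ⊢
        linear_combination (n+2) * h1
      | succ k =>
        have h2 := ih k (h+2) (by omega)
        obtain rfl : n = 2 * k + 2 + h := by omega
        rw [show k + (h+2) + 1 = k + h + 3 by ring] at h2
        rw [show k + 1 + h + 1 = (k + h + 1) + 1 by ring] at h1
        rw [show k + 1 + (h + 1) + 1 = k + h + 3 by ring]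
        have e : (k+h+3).factorial = (k+h+3) * (k+h+1+1).factorial := Nat.factorial_succ _
        rw [Nat.factorial_succ (2*k+2+h)]
        rw [Nat.factorial_succ k] at h1 ⊢
        rw [e] at h2 ⊢
        linear_combination (k+h+3) * h1 + (k+1) * h2

/-- position of the value `x` in the permutation attached to `A` -/
def sg (A : Finset ℕ) (x : ℕ) : ℕ := if x ∈ A then 2 * cP A x else 2 * cV A x + 1

theorem cP_mono (A : Finset ℕ) {x y : ℕ} (h : x ≤ y) : cP A x ≤ cP A y := Nat.count_monotone _ h
theorem cV_mono (A : Finset ℕ) {x y : ℕ} (h : x ≤ y) : cV A x ≤ cV A y := Nat.count_monotone _ h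
theorem cP_lt (A : Finset ℕ) {x y : ℕ} (hx : x ∈ A) (h : x < y) : cP A x < cP A y := by
  have := cP_mono A (show x + 1 ≤ y from h)
  rw [cP_succ, if_pos hx] at this; omega
theorem cV_lt (A : Finset ℕ) {x y : ℕ} (hx : x ∉ A) (h : x < y) : cV A x < cV A y := by
  have := cV_mono A (show x + 1 ≤ y from h)
  rw [cV_succ, if_neg hx] at this; omega

theorem sg_mem {A : Finset ℕ} {x : ℕ} (h : x ∈ A) : sg A x = 2 * cP A x := if_pos h
theorem sg_notMem {A : Finset ℕ} {x : ℕ} (h : x ∉ A) : sg A x = 2 * cV A x + 1 := if_neg h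
theorem sg_even {A : Finset ℕ} {x : ℕ} : sg A x % 2 = 0 ↔ x ∈ A := by
  by_cases h : x ∈ A
  · simp [sg_mem h, h]
  · simp [sg_notMem h, h]

theorem sg_ne {A : Finset ℕ} {x y : ℕ} (h : x < y) : sg A x ≠ sg A y := by
  intro e
  by_cases hx : x ∈ A <;> by_cases hy : y ∈ A
  · have := cP_lt A hx h
    rw [sg_mem hx, sg_mem hy] at e; omega
  · rw [sg_mem hx, sg_notMem hy] at e; omega
  · rw [sg_notMem hx, sg_mem hy] at e; omega
  · have := cV_lt A hx h
    rw [sg_notMem hx, sg_notMem hy] at e; omega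

theorem sg_inj {A : Finset ℕ} {x y : ℕ} (e : sg A x = sg A y) : x = y := by
  rcases lt_trichotomy x y with h | h | h
  · exact absurd e (sg_ne h)
  · exact h
  · exact absurd e.symm (sg_ne h)

theorem mem_gset {n h : ℕ} {A : Finset ℕ} : A ∈ gset n h ↔ A ⊆ Finset.range n ∧ Good n h A := by
  simp [gset]

theorem sg_lt {m : ℕ} {A : Finset ℕ} (hA : A ∈ gset (2*m) 0) {x : ℕ} (hx : x < 2*m) :
    sg A x < 2 * m := by
  obtain ⟨-, -, h⟩ := mem_gset.1 hA
  have h2 := cP_add_cV A (2*m)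
  by_cases h : x ∈ A
  · have := cP_lt A h hx
    rw [sg_mem h]; omega
  · have := cV_lt A h hx
    rw [sg_notMem h]; omega

/-- the 321-avoiding permutation attached to a ballot set -/
structure Tm {n : ℕ} (u : Equiv.Perm (Fin n)) : Prop where
  ev : ∀ p q : Fin n, p.val % 2 = 0 → q.val % 2 = 0 → p < q → u p < u q
  od : ∀ p q : Fin n, p.val % 2 = 1 → q.val % 2 = 1 → p < q → u p < u q
  dn : ∀ p q : Fin n, p.val % 2 = 0 → q.val = p.val + 1 → u q < u p

theorem exists_perm {m : ℕ} {A : Finset ℕ} (hA : A ∈ gset (2*m) 0) :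
    ∃ u : Equiv.Perm (Fin (2*m)), Tm u ∧ ∀ p, sg A (u p).val = p.val := by
  let f : Fin (2*m) → Fin (2*m) := fun x => ⟨sg A x.val, sg_lt hA x.isLt⟩
  have hf : Function.Injective f := by
    intro x y h
    exact Fin.ext (sg_inj (by simpa [f] using h))
  have hb := Finite.injective_iff_bijective.1 hf
  let s : Equiv.Perm (Fin (2*m)) := Equiv.ofBijective f hb
  have key : ∀ p, sg A (s.symm p).val = p.val := by
    intro p
    have : s (s.symm p) = p := s.apply_symm_apply p
    exact congrArg Fin.val this
  obtain ⟨hsub, hgood, heq⟩ := mem_gset.1 hA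
  refine ⟨s.symm, ⟨?_, ?_, ?_⟩, key⟩
  · intro p q hp hq hpq
    have h1 := key p
    have h2 := key q
    have m1 := sg_even.1 (h1 ▸ hp)
    have m2 := sg_even.1 (h2 ▸ hq)
    rw [sg_mem m1] at h1
    rw [sg_mem m2] at h2
    by_contra hc
    have := cP_mono A (show (s.symm q).val ≤ (s.symm p).val by simpa using hc)
    have : p.val < q.val := hpq
    omega
  · intro p q hp hq hpq
    have h1 := key p
    have h2 := key q
    have m1 : (s.symm p).val ∉ A := fun h => by have := sg_even.2 h; omega
    have m2 : (s.symm q).val ∉ A := fun h => by have := sg_even.2 h; omega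
    rw [sg_notMem m1] at h1
    rw [sg_notMem m2] at h2
    by_contra hc
    have := cV_mono A (show (s.symm q).val ≤ (s.symm p).val by simpa using hc)
    have : p.val < q.val := hpq
    omega
  · intro p q hp hpq
    have h1 := key p
    have h2 := key q
    have m1 := sg_even.1 (h1 ▸ hp)
    have m2 : (s.symm q).val ∉ A := fun h => by have := sg_even.2 h; omega
    rw [sg_mem m1] at h1
    rw [sg_notMem m2] at h2
    by_contra hc
    have := cV_mono A (show (s.symm p).val ≤ (s.symm q).val by simpa using hc)
    have h3 := hgood ((s.symm p).val + 1) (s.symm p).isLt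
    rw [cP_succ, cV_succ, if_pos m1, if_pos m1] at h3
    omega

open Classical in
/-- values at even positions -/
noncomputable def evals {n : ℕ} (w : Equiv.Perm (Fin n)) : Finset ℕ :=
  (Finset.univ.filter (fun p : Fin n => p.val % 2 = 0)).image (fun p => (w p).val)

theorem mem_evals {n : ℕ} (w : Equiv.Perm (Fin n)) (p : Fin n) :
    (w p).val ∈ evals w ↔ p.val % 2 = 0 := by
  simp only [evals, Finset.mem_image, Finset.mem_filter, Finset.mem_univ, true_and]
  constructor
  · rintro ⟨q, hq, e⟩
    rw [w.injective (Fin.ext e)] at hq; exact hq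
  · intro h; exact ⟨p, h, rfl⟩

theorem evals_sub {n : ℕ} (w : Equiv.Perm (Fin n)) : evals w ⊆ Finset.range n := by
  intro x hx
  simp only [evals, Finset.mem_image] at hx
  obtain ⟨q, -, rfl⟩ := hx
  simp

theorem count_aux {n : ℕ} (u : Equiv.Perm (Fin n)) (e : ℕ) (he : e < 2) (P : ℕ → Prop)
    [DecidablePred P] (hP : ∀ p : Fin n, P (u p).val ↔ p.val % 2 = e)
    (hu : ∀ p q : Fin n, p.val % 2 = e → q.val % 2 = e → p < q → u p < u q)
    (p : Fin n) (hp : p.val % 2 = e) : Nat.count P (u p).val = p.val / 2 := by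
  rw [Nat.count_eq_card_filter_range]
  rw [← Finset.card_range (p.val/2)]
  symm
  apply Finset.card_bij (fun i hi => (u ⟨2*i+e, by have := Finset.mem_range.1 hi; omega⟩).val)
  · intro i hi
    have h := Finset.mem_range.1 hi
    rw [Finset.mem_filter, Finset.mem_range, hP]
    refine ⟨hu _ _ (by simp; omega) hp (Fin.lt_def.2 (by simp; omega)), by simp; omega⟩
  · intro i hi j hj h
    have := u.injective (Fin.ext h)
    simp at this; omega
  · intro y hy
    rw [Finset.mem_filter, Finset.mem_range] at hy
    obtain ⟨q, hq⟩ := u.surjective ⟨y, by omega⟩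
    have hq' : (u q).val = y := by rw [hq]
    rw [← hq', hP] at hy
    have hlt : q < p := by
      by_contra hc
      rcases eq_or_lt_of_le (not_lt.1 hc) with h | h
      · subst h; omega
      · have := hu _ _ hp hy.2 h
        rw [Fin.lt_def] at this; omega
    rw [Fin.lt_def] at hlt
    refine ⟨q.val / 2, by rw [Finset.mem_range]; omega, ?_⟩
    refine Eq.trans ?_ hq'
    congr 2
    apply Fin.ext; simp; omega

theorem sg_evals {n : ℕ} (u : Equiv.Perm (Fin n)) (hu : Tm u) (p : Fin n) :
    sg (evals u) (u p).val = p.val := by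
  rcases Nat.mod_two_eq_zero_or_one p.val with h | h
  · rw [sg_mem ((mem_evals u p).2 h)]
    have := count_aux u 0 (by omega) (fun y => y ∈ evals u) (mem_evals u) hu.ev p h
    rw [cP, this]; omega
  · rw [sg_notMem (by rw [mem_evals]; omega)]
    have := count_aux u 1 (by omega) (fun y => y ∉ evals u)
      (fun p => by rw [mem_evals]; omega) hu.od p h
    rw [cV, this]; omega

theorem evals_mem_gset {m : ℕ} (u : Equiv.Perm (Fin (2*m))) (hu : Tm u) :
    evals u ∈ gset (2*m) 0 := by
  have hs := sg_evals u hu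
  have hP : ∀ x ≤ 2*m, cP (evals u) x ≤ m ∧ cV (evals u) x ≤ m ∧
      cP (evals u) x ≤ cV (evals u) x := by
    intro x
    induction x with
    | zero => simp [cP_zero, cV_zero]
    | succ x ih =>
      intro hx
      obtain ⟨i1, i2, i3⟩ := ih (by omega)
      obtain ⟨p, hp⟩ := u.surjective ⟨x, by omega⟩
      have hp' : (u p).val = x := by rw [hp]
      have h1 := hs p
      rw [hp'] at h1
      have hpl := p.isLt
      rw [cP_succ, cV_succ]
      by_cases hm : x ∈ evals u
      · rw [sg_mem hm] at h1
        rw [if_pos hm, if_pos hm]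
        have h2 := hu.dn p ⟨p.val + 1, by omega⟩ (by omega) rfl
        have h3 := hs ⟨p.val + 1, by omega⟩
        have hn : (u ⟨p.val + 1, by omega⟩).val ∉ evals u := by rw [mem_evals]; simp; omega
        rw [sg_notMem hn] at h3
        rw [Fin.lt_def, hp'] at h2
        have h4 := cV_lt _ hn h2
        simp at h3
        omega
      · rw [sg_notMem hm] at h1
        rw [if_neg hm, if_neg hm]
        omega
  rw [mem_gset]
  refine ⟨evals_sub u, fun v hv => (hP v hv).2.2, ?_⟩
  have := hP (2*m) le_rfl
  have := cP_add_cV (evals u) (2*m)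
  omega

theorem swap_val_mod {n : ℕ} (i j p : Fin n) (hi : i.val % 2 = 0) (hj : j.val % 2 = 0) :
    (Equiv.swap i j p).val % 2 = p.val % 2 := by
  rcases eq_or_ne p i with rfl | h1
  · rw [Equiv.swap_apply_left]; omega
  rcases eq_or_ne p j with rfl | h2
  · rw [Equiv.swap_apply_right]; omega
  rw [Equiv.swap_apply_of_ne_of_ne h1 h2]

theorem evals_swap {n : ℕ} (u : Equiv.Perm (Fin n)) (i j : Fin n)
    (hi : i.val % 2 = 0) (hj : j.val % 2 = 0) : evals (u * Equiv.swap i j) = evals u := by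
  have key : ∀ x, x < n → (x ∈ evals (u * Equiv.swap i j) ↔ x ∈ evals u) := by
    intro x hx
    obtain ⟨p, hp⟩ := (u * Equiv.swap i j).surjective ⟨x, hx⟩
    have hp1 : ((u * Equiv.swap i j) p).val = x := by rw [hp]
    have hp2 : (u (Equiv.swap i j p)).val = x := hp1
    conv_lhs => rw [← hp1]
    conv_rhs => rw [← hp2]
    rw [mem_evals, mem_evals, swap_val_mod i j p hi hj]
  ext x
  constructor
  · intro h
    exact (key x (Finset.mem_range.1 (evals_sub _ h))).1 h
  · intro h
    exact (key x (Finset.mem_range.1 (evals_sub _ h))).2 h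

/-- From a marked 321-avoider to a permutation with one 321. -/
theorem forward {m : ℕ} (u : Equiv.Perm (Fin (2*m))) (hu : Tm u) (i j k : Fin (2*m))
    (hj : j.val % 2 = 0) (hij : i.val + 2 = j.val) (hjk : k.val = j.val + 1)
    (h1 : u k < u i) (h2 : ∀ q : Fin (2*m), q.val % 2 = 1 → u q < u i → q ≤ k) :
    DownUp (u * Equiv.swap i j) ∧ occ321 (u * Equiv.swap i j) = {(i, j, k)} := by
  set w := u * Equiv.swap i j with hw
  have hwi : w i = u j := by simp [hw]
  have hwj : w j = u i := by simp [hw]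
  have hwo : ∀ p, p ≠ i → p ≠ j → w p = u p := by
    intro p a b; simp [hw, Equiv.swap_apply_of_ne_of_ne a b]
  have hodd : ∀ p : Fin (2*m), p.val % 2 = 1 → w p = u p := by
    intro p hp
    apply hwo
    · rintro rfl; omega
    · rintro rfl; omega
  have hij' : u i < u j := hu.ev i j (by omega) hj (Fin.lt_def.2 (by omega))
  -- the larger of the even values only
  have hev : ∀ p q : Fin (2*m), p.val % 2 = 0 → q.val % 2 = 0 → p < q → w q < w p →
      p = i ∧ q = j := by
    intro p q hp hq hpq hlt
    by_contra hc
    rw [Fin.lt_def] at hpq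
    apply absurd hlt (not_lt.2 (le_of_lt _))
    rcases eq_or_ne p i with rfl | p1
    · have : q ≠ j := fun h => hc ⟨rfl, h⟩
      have : q ≠ p := by rintro rfl; omega
      rw [hwi, hwo q this ‹_›]
      have : q.val ≠ j.val := fun h => ‹q ≠ j› (Fin.ext h)
      exact hu.ev _ _ hj hq (Fin.lt_def.2 (by omega))
    rcases eq_or_ne p j with rfl | p2
    · have a : q ≠ i := by rintro rfl; omega
      have b : q ≠ p := by rintro rfl; omega
      rw [hwj, hwo q a b]
      exact hu.ev _ _ (by omega) hq (Fin.lt_def.2 (by omega))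
    rw [hwo p p1 p2]
    rcases eq_or_ne q i with rfl | q1
    · rw [hwi]; exact hu.ev _ _ hp hj (Fin.lt_def.2 (by omega))
    rcases eq_or_ne q j with rfl | q2
    · rw [hwj]
      have : p.val ≠ i.val := fun h => p1 (Fin.ext h)
      exact hu.ev _ _ hp (by omega) (Fin.lt_def.2 (by omega))
    rw [hwo q q1 q2]
    exact hu.ev _ _ hp hq (Fin.lt_def.2 (by omega))
  -- descents in w at even positions
  have hdn : ∀ p q : Fin (2*m), p.val % 2 = 0 → q.val = p.val + 1 → w q < w p := by
    intro p q hp hq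
    rw [hodd q (by omega)]
    rcases eq_or_ne p i with rfl | p1
    · rw [hwi]; exact (hu.dn p q hp hq).trans hij'
    rcases eq_or_ne p j with rfl | p2
    · rw [hwj]
      have : q = k := Fin.ext (by omega)
      rw [this]; exact h1
    rw [hwo p p1 p2]
    exact hu.dn p q hp hq
  have hdn' : ∀ p q : Fin (2*m), p.val % 2 = 1 → q.val = p.val + 1 → w p < w q := by
    intro p q hp hq
    have hql := q.isLt
    let r : Fin (2*m) := ⟨q.val + 1, by omega⟩
    have a := hdn q r (by omega) rfl
    have b := hu.od p r hp (by simp [r]; omega) (Fin.lt_def.2 (by simp [r]; omega))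
    rw [hodd r (by simp [r]; omega)] at a
    rw [hodd p hp]
    exact b.trans a
  refine ⟨?_, ?_⟩
  · intro x hx
    split_ifs with h
    · exact hdn _ _ h rfl
    · exact hdn' _ _ (by simp; omega) rfl
  · ext ⟨p, q, r⟩
    simp only [occ321, Set.mem_ofPred_eq, Set.mem_singleton_iff, Prod.mk.injEq]
    constructor
    · rintro ⟨hpq, hqr, c1, c2⟩
      have ho : ∀ a b : Fin (2*m), a < b → w b < w a → ¬ (a.val % 2 = 1 ∧ b.val % 2 = 1) := by
        rintro a b hab hlt ⟨ha, hb⟩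
        rw [hodd a ha, hodd b hb] at hlt
        exact absurd hlt (not_lt.2 (hu.od a b ha hb hab).le)
      have o1 := ho p q hpq c2
      have o2 := ho q r hqr c1
      have o3 := ho p r (hpq.trans hqr) (c1.trans c2)
      have e1 := fun a b => hev p q a b hpq c2
      have e2 := fun a b => hev q r a b hqr c1
      have e3 := fun a b => hev p r a b (hpq.trans hqr) (c1.trans c2)
      rcases Nat.mod_two_eq_zero_or_one p.val with hp | hp <;>
      rcases Nat.mod_two_eq_zero_or_one q.val with hq | hq
      · obtain ⟨rfl, rfl⟩ := e1 hp hq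
        refine ⟨rfl, rfl, ?_⟩
        rcases Nat.mod_two_eq_zero_or_one r.val with hr | hr
        · obtain ⟨h, -⟩ := e2 hq hr
          rw [h] at hpq; exact absurd hpq (lt_irrefl _)
        · rw [hodd r hr, hwj] at c1
          have := h2 r hr c1
          rw [Fin.le_def] at this
          rw [Fin.lt_def] at hqr
          exact Fin.ext (by omega)
      · have hr : r.val % 2 = 0 := by omega
        obtain ⟨rfl, rfl⟩ := e3 hp hr
        exfalso
        rw [Fin.lt_def] at hpq hqr
        have := hu.dn p q hp (by omega)
        rw [hodd q hq, hwj] at c1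
        exact absurd c1 (not_lt.2 this.le)
      · have hr : r.val % 2 = 0 := by omega
        obtain ⟨rfl, rfl⟩ := e2 hq hr
        exfalso
        rw [Fin.lt_def] at hpq
        let s : Fin (2*m) := ⟨p.val - 1, by omega⟩
        have a := hu.dn s p (by simp [s]; omega) (by simp [s]; omega)
        have b := hu.ev s r (by simp [s]; omega) hr (Fin.lt_def.2 (by simp [s]; omega))
        rw [hodd p hp, hwi] at c2
        exact absurd c2 (not_lt.2 (a.trans b).le)
      · exact absurd ⟨hp, hq⟩ o1
    · rintro ⟨rfl, rfl, rfl⟩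
      refine ⟨Fin.lt_def.2 (by omega), Fin.lt_def.2 (by omega), ?_, ?_⟩
      · rw [hodd r (by omega), hwj]; exact h1
      · rw [hwi, hwj]; exact hij'

theorem DownUp.even {n : ℕ} {w : Equiv.Perm (Fin n)} (h : DownUp w) (p q : Fin n)
    (hp : p.val % 2 = 0) (hq : q.val = p.val + 1) : w q < w p := by
  have := h p.val (by omega)
  rw [if_pos hp] at this
  convert this

theorem DownUp.odd {n : ℕ} {w : Equiv.Perm (Fin n)} (h : DownUp w) (p q : Fin n)
    (hp : p.val % 2 = 1) (hq : q.val = p.val + 1) : w p < w q := by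
  have := h p.val (by omega)
  rw [if_neg (by omega)] at this
  convert this

/-- Structure of a down-up permutation with one 321 whose middle is at an even position. -/
theorem backward {m : ℕ} (w : Equiv.Perm (Fin (2*m))) (hw : DownUp w) (i j k : Fin (2*m))
    (ho : occ321 w = {(i, j, k)}) (hj : j.val % 2 = 0) :
    i.val + 2 = j.val ∧ Tm (w * Equiv.swap i j) ∧ j.val ∈ evals w ∧ (w j).val = j.val ∧
      cP (evals w) j.val + 2 = cV (evals w) j.val := by
  have occ : ∀ p q r : Fin (2*m), p < q → q < r → w r < w q → w q < w p →
      p = i ∧ q = j ∧ r = k := by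
    intro p q r a b c d
    have : (p, q, r) ∈ occ321 w := ⟨a, b, c, d⟩
    rw [ho] at this
    simpa using this
  have hm : (i, j, k) ∈ occ321 w := by rw [ho]; rfl
  obtain ⟨hij, hjk, c1, c2⟩ := hm
  simp only at hij hjk c1 c2
  have hjl := j.isLt
  rw [Fin.lt_def] at hij hjk
  have hk : k.val = j.val + 1 := by
    let r : Fin (2*m) := ⟨j.val + 1, by omega⟩
    have := occ i j r hij (Fin.lt_def.2 (by simp [r])) (hw.even j r hj rfl) c2
    rw [← this.2.2]
  have hev : ∀ p q : Fin (2*m), p.val % 2 = 0 → q.val % 2 = 0 → p < q → w q < w p →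
      p = i ∧ q = j := by
    intro p q hp hq hpq hlt
    have := q.isLt
    let r : Fin (2*m) := ⟨q.val + 1, by omega⟩
    have := occ p q r hpq (Fin.lt_def.2 (by simp [r])) (hw.even q r hq rfl) hlt
    exact ⟨this.1, this.2.1⟩
  have hev' : ∀ p q : Fin (2*m), p.val % 2 = 0 → q.val % 2 = 0 → p < q → ¬ (p = i ∧ q = j) →
      w p < w q := by
    intro p q hp hq hpq h
    by_contra hc
    apply h
    apply hev p q hp hq hpq
    refine lt_of_le_of_ne (not_lt.1 hc) ?_
    intro e
    rw [w.injective e] at hpq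
    exact lt_irrefl _ hpq
  have hi0 : i.val % 2 = 0 := by
    by_contra h
    let s : Fin (2*m) := ⟨i.val - 1, by omega⟩
    have h1 := hw.even s i (by simp [s]; omega) (by simp [s]; omega)
    have := (occ s j k (Fin.lt_def.2 (by simp [s]; omega)) hjk c1 (c2.trans h1)).1
    have := congrArg Fin.val this
    simp [s] at this; omega
  have hi : i.val + 2 = j.val := by
    by_contra h
    let s : Fin (2*m) := ⟨i.val + 2, by omega⟩
    have h1 := hev' i s hi0 (by simp [s]; omega) (Fin.lt_def.2 (by simp [s]))
      (by rintro ⟨-, h'⟩; rw [← h'] at h; simp [s] at h)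
    have := (occ s j k (Fin.lt_def.2 (by simp [s]; omega)) hjk c1 (c2.trans h1)).1
    have := congrArg Fin.val this
    simp [s] at this
  have hod : ∀ p q : Fin (2*m), p.val % 2 = 1 → q.val % 2 = 1 → p < q → w p < w q := by
    intro p q hp hq hpq
    by_contra hc
    have hlt : w q < w p := by
      refine lt_of_le_of_ne (not_lt.1 hc) ?_
      intro e
      rw [w.injective e] at hpq
      exact lt_irrefl _ hpq
    let s : Fin (2*m) := ⟨p.val - 1, by omega⟩
    have := (occ s p q (Fin.lt_def.2 (by simp [s]; omega)) hpq hlt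
      (hw.even s p (by simp [s]; omega) (by simp [s]; omega))).2.1
    rw [this] at hp; omega
  set u := w * Equiv.swap i j with hu
  have hui : u i = w j := by simp [hu]
  have huj : u j = w i := by simp [hu]
  have huo : ∀ p, p ≠ i → p ≠ j → u p = w p := by
    intro p a b; simp [hu, Equiv.swap_apply_of_ne_of_ne a b]
  have hodd : ∀ p : Fin (2*m), p.val % 2 = 1 → u p = w p := by
    intro p hp
    apply huo
    · rintro rfl; omega
    · rintro rfl; omega
  have hT : Tm u := by
    refine ⟨?_, ?_, ?_⟩
    · intro p q hp hq hpq
      rw [Fin.lt_def] at hpq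
      rcases eq_or_ne p i with rfl | p1
      · rw [hui]
        rcases eq_or_ne q j with rfl | q2
        · rw [huj]; exact c2
        have b : q ≠ p := by rintro rfl; omega
        rw [huo q b q2]
        have : q.val ≠ j.val := fun h => q2 (Fin.ext h)
        exact hev' _ _ hj hq (Fin.lt_def.2 (by omega)) (by rintro ⟨h, -⟩; rw [h] at hij; omega)
      rcases eq_or_ne p j with rfl | p2
      · have a : q ≠ i := by rintro rfl; omega
        have b : q ≠ p := by rintro rfl; omega
        rw [huj, huo q a b]
        exact hev' _ _ (by omega) hq (Fin.lt_def.2 (by omega)) (by rintro ⟨-, h⟩; exact b h)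
      rw [huo p p1 p2]
      rcases eq_or_ne q i with rfl | q1
      · rw [hui]; exact hev' _ _ hp hj (Fin.lt_def.2 (by omega)) (by rintro ⟨h, -⟩; exact p1 h)
      rcases eq_or_ne q j with rfl | q2
      · rw [huj]
        have : p.val ≠ i.val := fun h => p1 (Fin.ext h)
        exact hev' _ _ hp (by omega) (Fin.lt_def.2 (by omega)) (by rintro ⟨h, -⟩; exact p1 h)
      rw [huo q q1 q2]
      exact hev' _ _ hp hq (Fin.lt_def.2 (by omega)) (by rintro ⟨h, -⟩; exact p1 h)
    · intro p q hp hq hpq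
      rw [hodd p hp, hodd q hq]
      exact hod p q hp hq hpq
    · intro p q hp hq
      rw [hodd q (by omega)]
      rcases eq_or_ne p i with rfl | p1
      · rw [hui]; exact hw.odd q j (by omega) (by omega)
      rcases eq_or_ne p j with rfl | p2
      · rw [huj]; exact (hw.even p q hp hq).trans c2
      rw [huo p p1 p2]
      exact hw.even p q hp hq
  have hA : evals u = evals w := evals_swap w i j hi0 hj
  have hs := sg_evals u hT
  have hg := evals_mem_gset u hT
  rw [hA] at hs hg
  have hjm : (w j).val ∈ evals w := (mem_evals w j).2 hj
  have s1 := hs i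
  rw [hui, sg_mem hjm] at s1
  have s2 := hs k
  have hkn : (w k).val ∉ evals w := by rw [mem_evals]; omega
  rw [hodd k (by omega), sg_notMem hkn] at s2
  have s3 := cV_lt _ hkn (Fin.lt_def.1 c1)
  have s4 : cV (evals w) (w j).val ≤ j.val / 2 + 1 := by
    by_cases h3 : j.val + 3 < 2 * m
    · let r : Fin (2*m) := ⟨j.val + 3, h3⟩
      have hrn : (w r).val ∉ evals w := by rw [mem_evals]; simp [r]; omega
      have s5 := hs r
      rw [hodd r (by simp [r]; omega), sg_notMem hrn] at s5
      have : ¬ w r < w j := by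
        intro h
        have := (occ i j r hij (Fin.lt_def.2 (by simp [r])) h c2).2.2
        have := congrArg Fin.val this
        simp [r] at this; omega
      have := cV_mono (evals w) (Fin.le_def.1 (not_lt.1 this))
      simp [r] at s5 this
      omega
    · have h5 := (mem_gset.1 hg).2.2
      have h6 := cP_add_cV (evals w) (2*m)
      have := cV_mono (evals w) (w j).isLt.le
      omega
  have s6 := cP_add_cV (evals w) (w j).val
  have e : (w j).val = j.val := by omega
  rw [e] at hjm s1 s3 s4 s6
  exact ⟨hi, hT, hjm, e, by omega⟩

/-- one 321 with middle at a position of parity `e` -/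
def Case (m e : ℕ) (w : Equiv.Perm (Fin (2*m))) : Prop :=
  DownUp w ∧ ∃ t, occ321 w = {t} ∧ t.2.1.val % 2 = e

theorem card_case_zero (m : ℕ) : Nat.card {w // Case m 0 w} = M (2*m) 0 := by
  classical
  rw [Nat.card_eq_fintype_card, Fintype.card_subtype, M, ← Finset.card_sigma]
  have hc : ∀ w ∈ Finset.univ.filter (Case m 0), ∃ t, occ321 w = {t} ∧ t.2.1.val % 2 = 0 :=
    fun w hw => ((Finset.mem_filter.1 hw).2).2
  refine Finset.card_bij (fun w hw => ⟨evals w, (Classical.choose (hc w hw)).2.1.val⟩) ?_ ?_ ?_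
  · intro w hw
    have hs := Classical.choose_spec (hc w hw)
    generalize Classical.choose (hc w hw) = t at hs
    obtain ⟨i, j, k⟩ := t
    obtain ⟨h1, hT, h3, -, h5⟩ := backward w (Finset.mem_filter.1 hw).2.1 i j k hs.1 hs.2
    have hj : j.val % 2 = 0 := hs.2
    have hg := evals_mem_gset _ hT
    rw [evals_swap w i j (by omega) hj] at hg
    simp only [Finset.mem_sigma]
    refine ⟨hg, ?_⟩
    simp only [marks, Finset.mem_filter, Finset.mem_range]
    exact ⟨j.isLt, h3, h5⟩
  · intro w hw w' hw' he
    have hs := Classical.choose_spec (hc w hw)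
    have hs' := Classical.choose_spec (hc w' hw')
    generalize Classical.choose (hc w hw) = t at hs he
    generalize Classical.choose (hc w' hw') = t' at hs' he
    obtain ⟨i, j, k⟩ := t
    obtain ⟨i', j', k'⟩ := t'
    obtain ⟨h1, hT, -⟩ := backward w (Finset.mem_filter.1 hw).2.1 i j k hs.1 hs.2
    obtain ⟨h1', hT', -⟩ := backward w' (Finset.mem_filter.1 hw').2.1 i' j' k' hs'.1 hs'.2
    have hj : j.val % 2 = 0 := hs.2
    simp only [Sigma.mk.injEq, heq_eq_eq] at he
    obtain ⟨e1, e2⟩ := he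
    obtain rfl : j = j' := Fin.ext e2
    obtain rfl : i = i' := Fin.ext (by omega)
    have a := sg_evals _ hT
    have b := sg_evals _ hT'
    rw [evals_swap w i j (by omega) hj] at a
    rw [evals_swap w' i j (by omega) hj] at b
    have : w * Equiv.swap i j = w' * Equiv.swap i j := by
      ext p
      apply sg_inj (A := evals w)
      rw [a, e1, b]
    exact mul_right_cancel this
  · rintro ⟨A, v⟩ hb
    simp only [Finset.mem_sigma, marks, Finset.mem_filter, Finset.mem_range] at hb
    obtain ⟨hA, hv, hvA, hm⟩ := hb
    obtain ⟨u, hT, hu⟩ := exists_perm hA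
    have hsum := cP_add_cV A v
    have hend := cP_add_cV A (2*m)
    have hend' := (mem_gset.1 hA).2.2
    have hcv := cV_mono A hv.le
    have hcp := cP_lt A hvA hv
    let j : Fin (2*m) := ⟨v, hv⟩
    let i : Fin (2*m) := ⟨v - 2, by omega⟩
    have hv1 : v + 1 < 2 * m := by omega
    let k : Fin (2*m) := ⟨v + 1, hv1⟩
    have hui : (u i).val = v := by
      apply sg_inj (A := A)
      rw [hu, sg_mem hvA]; simp [i]; omega
    have hEv : ∀ p : Fin (2*m), (u p).val ∈ A ↔ p.val % 2 = 0 := by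
      intro p; rw [← sg_even, hu]
    have hkn : (u k).val ∉ A := by rw [hEv]; simp [k]; omega
    have hk := hu k
    rw [sg_notMem hkn] at hk
    simp only [k] at hk
    have hj : j.val % 2 = 0 := by simp [j]; omega
    have hij : i.val + 2 = j.val := by simp [i, j]; omega
    have h1 : u k < u i := by
      rw [Fin.lt_def, hui]
      by_contra hc
      have := cV_mono A (not_lt.1 hc)
      simp only [k] at this
      omega
    have h2 : ∀ q : Fin (2*m), q.val % 2 = 1 → u q < u i → q ≤ k := by
      intro q hq hlt
      have hqn : (u q).val ∉ A := by rw [hEv]; omega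
      have a := hu q
      rw [sg_notMem hqn] at a
      rw [Fin.lt_def, hui] at hlt
      have := cV_lt A hqn hlt
      rw [Fin.le_def]; simp [k]; omega
    obtain ⟨f1, f2⟩ := forward u hT i j k hj hij rfl h1 h2
    have hw : u * Equiv.swap i j ∈ Finset.univ.filter (Case m 0) := by
      rw [Finset.mem_filter]
      exact ⟨Finset.mem_univ _, f1, _, f2, hj⟩
    refine ⟨u * Equiv.swap i j, hw, ?_⟩
    have hs := Classical.choose_spec (hc _ hw)
    generalize Classical.choose (hc _ hw) = t at hs
    have ht : t = (i, j, k) := by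
      have := hs.1
      rw [f2] at this
      exact (Set.singleton_injective this).symm
    subst ht
    have hE : evals (u * Equiv.swap i j) = A := by
      rw [evals_swap u i j (by omega) hj]
      ext x
      constructor
      · intro hx
        have hx' := Finset.mem_range.1 (evals_sub _ hx)
        obtain ⟨p, hp⟩ := u.surjective ⟨x, hx'⟩
        have hp' : (u p).val = x := by rw [hp]
        rw [← hp'] at hx ⊢
        rw [hEv]; exact (mem_evals u p).1 hx
      · intro hx
        have hx' := Finset.mem_range.1 ((mem_gset.1 hA).1 hx)
        obtain ⟨p, hp⟩ := u.surjective ⟨x, hx'⟩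
        have hp' : (u p).val = x := by rw [hp]
        rw [← hp'] at hx ⊢
        rw [mem_evals]; exact (hEv p).1 hx
    simp only [hE, j]

/-- reverse-complement -/
def rc {n : ℕ} (w : Equiv.Perm (Fin n)) : Equiv.Perm (Fin n) := Fin.revPerm * w * Fin.revPerm

theorem rc_apply {n : ℕ} (w : Equiv.Perm (Fin n)) (p : Fin n) : rc w p = (w p.rev).rev := rfl

theorem rc_rc {n : ℕ} (w : Equiv.Perm (Fin n)) : rc (rc w) = w := by
  ext p; simp [rc_apply]

theorem rc_case {m : ℕ} (w : Equiv.Perm (Fin (2*m))) (e : ℕ) (he : e < 2) (h : Case m e w) :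
    Case m (1 - e) (rc w) := by
  obtain ⟨h1, ⟨i, j, k⟩, h2, h3⟩ := h
  refine ⟨?_, (k.rev, j.rev, i.rev), ?_, ?_⟩
  · intro x hx
    rw [rc_apply, rc_apply, Fin.rev_lt_rev, Fin.rev_lt_rev]
    split_ifs with hh
    · exact h1.even _ _ (by simp [Fin.val_rev]; omega) (by simp [Fin.val_rev]; omega)
    · exact h1.odd _ _ (by simp [Fin.val_rev]; omega) (by simp [Fin.val_rev]; omega)
  · ext ⟨p, q, r⟩
    have : (p, q, r) ∈ occ321 (rc w) ↔ (r.rev, q.rev, p.rev) ∈ occ321 w := by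
      simp only [occ321, Set.mem_ofPred_eq, rc_apply, Fin.rev_lt_rev]
      tauto
    rw [this, h2]
    simp only [Set.mem_singleton_iff, Prod.mk.injEq, Fin.rev_eq_iff]
    tauto
  · have := j.isLt
    simp only [Fin.val_rev] at h3 ⊢
    omega

theorem card_case_one (m : ℕ) : Nat.card {w // Case m 1 w} = M (2*m) 0 := by
  rw [← card_case_zero]
  refine Nat.card_congr ⟨fun w => ⟨rc w.1, rc_case w.1 1 (by omega) w.2⟩,
    fun w => ⟨rc w.1, rc_case w.1 0 (by omega) w.2⟩, ?_, ?_⟩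
  · intro w; exact Subtype.ext (rc_rc _)
  · intro w; exact Subtype.ext (rc_rc _)

theorem card_total (m : ℕ) :
    Nat.card {w : Equiv.Perm (Fin (2 * m)) // DownUp w ∧ (occ321 w).ncard = 1} =
      2 * M (2*m) 0 := by
  classical
  have h0 := card_case_zero m
  have h1 := card_case_one m
  rw [Nat.card_eq_fintype_card, Fintype.card_subtype] at h0 h1 ⊢
  rw [two_mul (M (2*m) 0)]
  nth_rw 1 [← h0]
  rw [← h1, ← Finset.card_union_of_disjoint]
  · congr 1
    ext w
    rw [Finset.mem_union, Finset.mem_filter, Finset.mem_filter, Finset.mem_filter,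
      Set.ncard_eq_one]
    simp only [Finset.mem_univ, true_and, Case]
    constructor
    · rintro ⟨a, t, ht⟩
      rcases Nat.mod_two_eq_zero_or_one t.2.1.val with h | h
      · exact Or.inl ⟨a, t, ht, h⟩
      · exact Or.inr ⟨a, t, ht, h⟩
    · rintro (⟨a, t, ht, -⟩ | ⟨a, t, ht, -⟩)
      · exact ⟨a, t, ht⟩
      · exact ⟨a, t, ht⟩
  · rw [Finset.disjoint_left]
    intro w ha hb
    obtain ⟨-, t, ht, h⟩ := (Finset.mem_filter.1 ha).2
    obtain ⟨-, t', ht', h'⟩ := (Finset.mem_filter.1 hb).2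
    rw [ht] at ht'
    rw [Set.singleton_injective ht'] at h
    omega

theorem card_compl (n : ℕ) :
    Nat.card {w : Equiv.Perm (Fin n) // DownUp w ∧ (occ321 w).ncard = 1} =
      Nat.card {w : Equiv.Perm (Fin n) // UpDown w ∧ (occ123 w).ncard = 1} := by
  apply Nat.card_congr
  refine Equiv.subtypeEquiv (Equiv.mulLeft Fin.revPerm) ?_
  intro w
  have e1 : occ123 (Equiv.mulLeft Fin.revPerm w) = occ321 w := by
    ext ⟨p, q, r⟩
    simp [occ123, occ321]
    tauto
  have e2 : UpDown (Equiv.mulLeft Fin.revPerm w) ↔ DownUp w := by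
    simp [UpDown, DownUp]
  rw [e1, e2]

theorem stmt17 (m : ℕ) (hm : 2 ≤ m) :
    Nat.card {w : Equiv.Perm (Fin (2 * m)) // DownUp w ∧ (occ321 w).ncard = 1} =
      Nat.card {w : Equiv.Perm (Fin (2 * m)) // UpDown w ∧ (occ123 w).ncard = 1} ∧
    Nat.card {w : Equiv.Perm (Fin (2 * m)) // DownUp w ∧ (occ321 w).ncard = 1} *
        (Nat.factorial (m - 2) * Nat.factorial (m + 3)) =
      10 * Nat.factorial (2 * m) := by
  refine ⟨card_compl _, ?_⟩
  rw [card_total, (M_eq (2*m)).1]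
  have := F_formula (2*m) (m-2) 4 (by omega)
  rw [show m - 2 + 4 + 1 = m + 3 by omega] at this
  linear_combination 2 * this
end
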